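/- arXiv:2106.09892 — 4 statements merged into one kernel-verified Lean document; each statement's English description precedes it below -/
import Mathlib

section
/- Let N ≥ 3, let λ be a closed subset of ℝ^N that is contained in the union of an at most countable family of arcs in ℝ^N, let a and a' be two distinct points of λ, and let Ω be a connected open subset of ℝ^N containing a and a'. Then there is an arc J ⊆ Ω with endpoints a and a' such that J ∩ λ = {a, a'} and the open arc J \ {a, a'} is a C^∞-smooth open arc. -/
open Set MvPolynomial Topology MeasureTheory

noncomputable section

/-- The polynomial hull of a set `X ⊆ ℂ^N`: points where every polynomial in the
coordinates is dominated by its supremum over `X`. -/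
def polyHull {N : ℕ} (X : Set (Fin N → ℂ)) : Set (Fin N → ℂ) :=
  {z | ∀ p : MvPolynomial (Fin N) ℂ, ‖eval z p‖ ≤ ⨆ x ∈ X, ‖eval x p‖}

/-- A set is polynomially convex if it equals its polynomial hull. -/
def IsPolynomiallyConvex {N : ℕ} (X : Set (Fin N → ℂ)) : Prop :=
  polyHull X = X

/-- `J` is an arc from `a` to `b`: the image of an injective continuous map on `[0,1]`
(equivalently, in a Hausdorff space, a subset homeomorphic to `[0,1]`). -/
def IsArcFrom {α : Type*} [TopologicalSpace α] (J : Set α) (a b : α) : Prop :=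
  ∃ γ : ℝ → α, ContinuousOn γ (Icc 0 1) ∧ InjOn γ (Icc 0 1) ∧
    γ '' Icc 0 1 = J ∧ γ 0 = a ∧ γ 1 = b

/-- `J` is an arc: a subset homeomorphic to the closed unit interval. -/
def IsArc {α : Type*} [TopologicalSpace α] (J : Set α) : Prop :=
  ∃ a b, IsArcFrom J a b

/-- `J` is a simple closed curve: a subset homeomorphic to the unit circle. -/
def IsSimpleClosedCurve {α : Type*} [TopologicalSpace α] (J : Set α) : Prop :=
  ∃ γ : Circle → α, Continuous γ ∧ Function.Injective γ ∧ Set.range γ = J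

/-- A `C^∞`-smooth open arc: the image of an injective `C^∞` map on an open interval,
with nowhere vanishing derivative, that is a homeomorphism onto its image. -/
def IsSmoothOpenArc {E : Type*} [NormedAddCommGroup E] [NormedSpace ℝ E]
    (A : Set E) : Prop :=
  ∃ (a b : ℝ) (γ : ℝ → E), a < b ∧ ContDiffOn ℝ (⊤ : ℕ∞) γ (Ioo a b) ∧
    (∀ t ∈ Ioo a b, derivWithin γ (Ioo a b) t ≠ 0) ∧
    InjOn γ (Ioo a b) ∧
    IsEmbedding ((Ioo a b).restrict γ) ∧
    γ '' Ioo a b = A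

/-- `P(X) = C(X)`: every continuous function on `X` is a uniform limit of polynomials. -/
def PolyEqContinuous {N : ℕ} (X : Set (Fin N → ℂ)) : Prop :=
  ∀ f : (Fin N → ℂ) → ℂ, ContinuousOn f X → ∀ δ : ℝ, 0 < δ →
    ∃ p : MvPolynomial (Fin N) ℂ, ∀ x ∈ X, ‖f x - eval x p‖ < δ

/-- `L` is a complex affine line in `ℂ^N`. -/
def IsComplexAffineLine {N : ℕ} (L : Set (Fin N → ℂ)) : Prop :=
  ∃ (z₀ v : Fin N → ℂ), v ≠ 0 ∧ L = {z | ∃ t : ℂ, z = z₀ + t • v}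

lemma det_lagrange {E : Type*} [NormedAddCommGroup E] [NormedSpace ℝ E] [FiniteDimensional ℝ E]
    (A : E →L[ℝ] E) (s : Finset ℝ) (hs : Module.finrank ℝ E < s.card) :
    (ContinuousLinearMap.id ℝ E + A).det =
      ∑ i ∈ s, ((Lagrange.basis s id i).eval 1) * (ContinuousLinearMap.id ℝ E + i • A).det := by
  classical
  let b := Module.finBasis ℝ E
  let M := LinearMap.toMatrix b b (A : E →ₗ[ℝ] E)
  let p : Polynomial ℝ := Matrix.det ((Polynomial.X : Polynomial ℝ) • M.map Polynomial.C
    + (1 : Matrix _ _ ℝ).map Polynomial.C)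
  have hp : ∀ t : ℝ, p.eval t = (ContinuousLinearMap.id ℝ E + t • A).det := by
    intro t
    have h1 : (ContinuousLinearMap.id ℝ E + t • A).det
        = Matrix.det (LinearMap.toMatrix b b
          ((ContinuousLinearMap.id ℝ E + t • A : E →L[ℝ] E) : E →ₗ[ℝ] E)) := by
      rw [LinearMap.det_toMatrix]
    rw [h1]
    have h2 : LinearMap.toMatrix b b
          ((ContinuousLinearMap.id ℝ E + t • A : E →L[ℝ] E) : E →ₗ[ℝ] E) = 1 + t • M := by
      rw [ContinuousLinearMap.toLinearMap_add, ContinuousLinearMap.toLinearMap_smul, map_add, map_smul,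
        ContinuousLinearMap.coe_id, LinearMap.toMatrix_id]
    rw [h2]
    change Polynomial.evalRingHom t p = _
    rw [RingHom.map_det]
    congr 1
    ext i j
    simp [Matrix.one_apply, RingHom.mapMatrix_apply]
    split_ifs <;> simp <;> ring
  have hdeg : p.degree < s.card := by
    refine lt_of_le_of_lt Polynomial.degree_le_natDegree ?_
    refine lt_of_le_of_lt ?_ (Nat.cast_lt.mpr hs)
    exact_mod_cast (Polynomial.natDegree_det_X_add_C_le M 1).trans (by simp)
  have := Lagrange.eq_interpolate (s := s) (v := (id : ℝ → ℝ)) (f := p) (injOn_id _) hdeg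
  have h3 := hp 1
  rw [one_smul] at h3
  rw [← h3, this, Lagrange.interpolate_apply, Polynomial.eval_finsetSum]
  refine Finset.sum_congr rfl fun i _ => ?_
  rw [Polynomial.eval_mul, Polynomial.eval_C, ← hp i, mul_comm]; simp

lemma no_smooth_retract {E : Type*} [NormedAddCommGroup E] [InnerProductSpace ℝ E]
    [FiniteDimensional ℝ E] [MeasurableSpace E] [BorelSpace E]
    (G : E → E) (hG : ContDiff ℝ 1 G) (hne : ∀ x, G x ≠ 0) (hid : ∀ x, 3 ≤ ‖x‖ → G x = x) :
    False := by
  have hGn : ∀ x, 0 < ‖G x‖ := fun x => norm_pos_iff.mpr (hne x)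
  set h : E → E := fun x => (3 / ‖G x‖) • G x with hh
  have hhC : ContDiff ℝ 1 h := by
    refine ContDiff.smul (contDiff_const.div (hG.norm ℝ hne) (fun x => (hGn x).ne')) hG
  have hhn : ∀ x, ‖h x‖ = 3 := by
    intro x
    simp [hh, norm_smul, (hGn x).ne']
  have hhid : ∀ x, ‖x‖ = 3 → h x = x := by
    intro x hx
    simp [hh, hid x hx.ge, hx]
  set w : E → E := fun x => h x - x with hw
  have hwC : ContDiff ℝ 1 w := hhC.sub contDiff_id
  have hA : Continuous (fderiv ℝ w) := hwC.continuous_fderiv (by norm_num)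
  have hcomp : IsCompact (Metric.closedBall (0 : E) 3) := isCompact_closedBall _ _
  obtain ⟨L, hL⟩ : ∃ L : NNReal, LipschitzOnWith L w (Metric.closedBall (0 : E) 3) := by
    obtain ⟨C, hC⟩ := hcomp.exists_bound_of_continuousOn hA.continuousOn
    refine ⟨⟨max C 0, le_max_right _ _⟩, ?_⟩
    refine Convex.lipschitzOnWith_of_nnnorm_fderiv_le (𝕜 := ℝ)
      (fun x _ => (hwC.differentiable (by norm_num)) x) ?_ (convex_closedBall _ _)
    intro x hx
    exact (hC x hx).trans (le_max_left _ _)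
  have hdetc : Continuous fun q : ℝ × E => (ContinuousLinearMap.id ℝ E + q.1 • fderiv ℝ w q.2).det := by
    refine ContinuousLinearMap.continuous_det.comp ?_
    exact continuous_const.add (continuous_fst.smul (hA.comp continuous_snd))
  have hev : ∀ᶠ t in 𝓝 (0 : ℝ), ∀ x ∈ Metric.closedBall (0 : E) 3,
      0 < (ContinuousLinearMap.id ℝ E + t • fderiv ℝ w x).det := by
    refine hcomp.eventually_forall_of_forall_eventually fun x _ => ?_
    refine (hdetc.tendsto (0, x)).eventually (lt_mem_nhds ?_)
    simp [ContinuousLinearMap.det]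
  have hev2 : ∀ᶠ t in 𝓝 (0 : ℝ), t * (L : ℝ) < 1 := by
    have : Filter.Tendsto (fun t : ℝ => t * (L : ℝ)) (𝓝 0) (𝓝 (0 * (L : ℝ))) :=
      (continuous_id.mul continuous_const).tendsto 0
    rw [zero_mul] at this; exact this.eventually (gt_mem_nhds one_pos)
  have hev3 : ∀ᶠ t in 𝓝 (0 : ℝ), t < 1 := gt_mem_nhds one_pos
  obtain ⟨δ, hδ, hδall⟩ := Metric.eventually_nhds_iff.mp (hev.and (hev2.and hev3))
  set B := Metric.ball (0 : E) 3 with hB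
  have hBc : ∀ x ∈ B, x ∈ Metric.closedBall (0 : E) 3 := fun x hx => Metric.ball_subset_closedBall hx
  have key : ∀ t : ℝ, 0 < t → t < δ →
      ∫ x in B, (ContinuousLinearMap.id ℝ E + t • fderiv ℝ w x).det = (volume B).toReal := by
    intro t ht0 htδ
    obtain ⟨hdet, htL, ht1⟩ := hδall (y := t) (by simpa [abs_of_pos ht0] using htδ)
    set f : E → E := fun x => x + t • w x with hf
    have hfC : ContDiff ℝ 1 f := contDiff_id.add (hwC.const_smul t)
    have hfd : ∀ x, HasFDerivAt f (ContinuousLinearMap.id ℝ E + t • fderiv ℝ w x) x := fun x =>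
      (hasFDerivAt_id x).add (((hwC.differentiable (by norm_num)) x).hasFDerivAt.const_smul t)
    have hinj : InjOn f (Metric.closedBall (0 : E) 3) := by
      intro x hx y hy hxy
      by_contra hne'
      have h1 : x - y = t • (w y - w x) := by
        have : x + t • w x = y + t • w y := hxy
        rw [smul_sub, sub_eq_sub_iff_add_eq_add, this, add_comm]
      have h2 : ‖x - y‖ ≤ t * (L * ‖x - y‖) := by
        conv_lhs => rw [h1]
        rw [norm_smul, Real.norm_of_nonneg ht0.le, norm_sub_rev x y]
        exact mul_le_mul_of_nonneg_left (hL.norm_sub_le hy hx) ht0.le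
      have h3 : 0 < ‖x - y‖ := norm_pos_iff.mpr (sub_ne_zero.mpr hne')
      nlinarith
    have hfid : ∀ x, ‖x‖ = 3 → f x = x := by
      intro x hx; simp [hf, hw, hhid x hx]
    have hmaps : ∀ x ∈ B, f x ∈ B := by
      intro x hx
      rw [hB, mem_ball_zero_iff] at hx ⊢
      have : f x = (1 - t) • x + t • h x := by
        simp only [hf, hw, smul_sub, sub_smul, one_smul]; abel
      rw [this]
      refine (norm_add_le _ _).trans_lt ?_
      rw [norm_smul, norm_smul, hhn, Real.norm_of_nonneg ht0.le,
        Real.norm_of_nonneg (by linarith)]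
      nlinarith
    have hopen : IsOpen (f '' B) := by
      rw [isOpen_iff_mem_nhds]
      rintro _ ⟨x, hx, rfl⟩
      have hst : HasStrictFDerivAt f (ContinuousLinearMap.id ℝ E + t • fderiv ℝ w x) x :=
        hfC.contDiffAt.hasStrictFDerivAt' (hfd x) (by norm_num)
      have hu : IsUnit (ContinuousLinearMap.id ℝ E + t • fderiv ℝ w x).det :=
        (hdet x (hBc x hx)).ne'.isUnit
      have := hst.map_nhds_eq_of_surj (by
        rw [LinearMap.range_eq_top]
        exact ((LinearMap.isUnit_iff_isUnit_det _).mpr hu |> (Module.End.isUnit_iff _).mp).2)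
      rw [← this]
      exact Filter.image_mem_map (Metric.isOpen_ball.mem_nhds hx)
    have himage : f '' B = B := by
      refine Subset.antisymm (by rintro _ ⟨x, hx, rfl⟩; exact hmaps x hx) ?_
      have hcl : IsClosed (f '' Metric.closedBall (0 : E) 3) :=
        (hcomp.image hfC.continuous).isClosed
      have hpre : IsPreconnected B := (convex_ball _ _).isPreconnected
      refine hpre.subset_left_of_subset_union hopen hcl.isOpen_compl ?_ ?_ ?_
      · rw [Set.disjoint_compl_right_iff_subset]
        exact image_mono Metric.ball_subset_closedBall
      · intro y hy
        by_cases hyc : y ∈ f '' Metric.closedBall (0 : E) 3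
        · left
          obtain ⟨x, hx, rfl⟩ := hyc
          rcases (mem_closedBall_zero_iff.mp hx).lt_or_eq with h1 | h1
          · exact ⟨x, mem_ball_zero_iff.mpr h1, rfl⟩
          · rw [hfid x h1, hB, mem_ball_zero_iff] at hy
            exact absurd hy (by rw [h1]; norm_num)
        · right; exact hyc
      · have h0 : (0 : E) ∈ B := by simp [hB]
        exact ⟨f 0, hmaps 0 h0, 0, h0, rfl⟩
    have hcv := integral_image_eq_integral_abs_det_fderiv_smul volume (s := B)
      Metric.isOpen_ball.measurableSet (fun x _ => (hfd x).hasFDerivWithinAt)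
      (hinj.mono Metric.ball_subset_closedBall) (fun _ => (1 : ℝ))
    rw [himage] at hcv
    have h4 : ∫ x in B, (ContinuousLinearMap.id ℝ E + t • fderiv ℝ w x).det
        = ∫ x in B, |(ContinuousLinearMap.id ℝ E + t • fderiv ℝ w x).det| • (1 : ℝ) := by
      refine setIntegral_congr_fun Metric.isOpen_ball.measurableSet fun x hx => ?_
      simp [abs_of_pos (hdet x (hBc x hx))]
    rw [h4, ← hcv]
    simp [Measure.real]
  obtain ⟨s, hs1, hs2⟩ := (Ioo_infinite hδ).exists_subset_card_eq (Module.finrank ℝ E + 1)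
  have hint : ∀ t : ℝ, IntegrableOn (fun x => (ContinuousLinearMap.id ℝ E + t • fderiv ℝ w x).det) B := by
    intro t
    have hc : Continuous fun x => (ContinuousLinearMap.id ℝ E + t • fderiv ℝ w x).det :=
      hdetc.comp (continuous_const.prodMk continuous_id)
    exact (hc.continuousOn.integrableOn_compact hcomp).mono_set Metric.ball_subset_closedBall
  have hone : ∑ i ∈ s, ((Lagrange.basis s id i).eval (1 : ℝ)) = 1 := by
    have := Lagrange.sum_basis (s := s) (v := (id : ℝ → ℝ)) (injOn_id _)
      (Finset.card_pos.mp (by omega))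
    have h2 := congrArg (Polynomial.eval 1) this
    rwa [Polynomial.eval_finsetSum, Polynomial.eval_one] at h2
  have hfin : ∫ x in B, (ContinuousLinearMap.id ℝ E + fderiv ℝ w x).det = (volume B).toReal := by
    have : ∀ x, (ContinuousLinearMap.id ℝ E + fderiv ℝ w x).det = _ := fun x =>
      det_lagrange (fderiv ℝ w x) s (by omega)
    simp_rw [this]
    rw [integral_finsetSum _ (fun i _ => (hint i).const_mul _)]
    simp_rw [integral_const_mul]
    rw [Finset.sum_congr rfl fun i hi => by rw [key i (hs1 hi).1 (hs1 hi).2], ← Finset.sum_mul, hone,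
      one_mul]
  have hzero : ∀ x, (ContinuousLinearMap.id ℝ E + fderiv ℝ w x).det = 0 := by
    intro x
    have hd : HasFDerivAt h (ContinuousLinearMap.id ℝ E + fderiv ℝ w x) x := by
      have := (hasFDerivAt_id x).add ((hwC.differentiable (by norm_num)) x).hasFDerivAt
      convert this using 1
      ext y; simp [hw]
    by_contra hdet
    have hsurj : Function.Surjective (ContinuousLinearMap.id ℝ E + fderiv ℝ w x) :=
      ((LinearMap.isUnit_iff_isUnit_det _).mpr (Ne.isUnit hdet) |> (Module.End.isUnit_iff _).mp).2
    obtain ⟨v, hv⟩ := hsurj (h x)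
    have h1 := hd.norm_sq
    have h2 : (fun y => ‖h y‖ ^ 2) = fun _ => (9 : ℝ) := by
      ext y; rw [hhn]; norm_num
    rw [h2] at h1
    have h3 := h1.unique (hasFDerivAt_const (9 : ℝ) x)
    have h4 := congrArg (fun T : E →L[ℝ] ℝ => T v) h3
    simp only [_root_.smul_apply, ContinuousLinearMap.comp_apply, hv,
      innerSL_apply_apply, real_inner_self_eq_norm_sq, hhn] at h4
    norm_num at h4
  rw [show (∫ x in B, (ContinuousLinearMap.id ℝ E + fderiv ℝ w x).det) = 0 by simp [hzero]] at hfin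
  have hpos : 0 < (volume B).toReal :=
    ENNReal.toReal_pos (Metric.measure_ball_pos _ _ (by norm_num)).ne' measure_ball_lt_top.ne
  linarith

lemma smooth_approx {E G : Type*} [NormedAddCommGroup E] [NormedSpace ℝ E] [FiniteDimensional ℝ E]
    [NormedAddCommGroup G] [NormedSpace ℝ G]
    (f : E → G) (hf : Continuous f) (δ : E → ℝ) (hδ : Continuous δ) (hpos : ∀ x, 0 < δ x) :
    ∃ g : E → G, ContDiff ℝ (⊤ : ℕ∞) g ∧ ∀ x, ‖g x - f x‖ < δ x := by
  obtain ⟨g, hg⟩ := exists_contMDiffMap_forall_mem_convex_of_local_const (n := (⊤ : ℕ∞))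
    (modelWithCornersSelf ℝ E) (t := fun x => Metric.ball (f x) (δ x))
    (fun x => convex_ball _ _) (fun x => ⟨f x, by
      have h1 : Continuous fun y => dist (f x) (f y) - δ y := by fun_prop
      have h2 := (h1.tendsto x).eventually (gt_mem_nhds (show dist (f x) (f x) - δ x < 0 by
        simpa using hpos x))
      filter_upwards [h2] with y hy
      rw [Metric.mem_ball]; linarith⟩)
  exact ⟨g, g.contMDiff.contDiff, fun x => by simpa [dist_eq_norm] using hg x⟩

lemma ball_lemma_unit {E : Type*} [NormedAddCommGroup E] [InnerProductSpace ℝ E]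
    [FiniteDimensional ℝ E] [MeasurableSpace E] [BorelSpace E]
    (F : E → E) (hF : ContinuousOn F (Metric.closedBall 0 1))
    (hF0 : ∀ x, ‖x‖ ≤ 1 → F x ≠ 0) :
    ∃ x, ‖x‖ = 1 ∧ ∃ μ : ℝ, 0 ≤ μ ∧ F x = -(μ • x) := by
  by_contra hcon
  push Not at hcon
  set ρ : E → E := fun x => (max 1 ‖x‖)⁻¹ • x with hρ
  have hmax : ∀ x : E, 0 < max 1 ‖x‖ := fun x => lt_max_of_lt_left one_pos
  have hρc : Continuous ρ := by
    refine Continuous.smul (Continuous.inv₀ (by fun_prop) fun x => (hmax x).ne') continuous_id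
  have hρ1 : ∀ x, ‖ρ x‖ ≤ 1 := by
    intro x
    rw [hρ, norm_smul, norm_inv, Real.norm_of_nonneg (hmax x).le, inv_mul_le_iff₀ (hmax x), mul_one]
    exact le_max_right _ _
  set s : E → ℝ := fun x => max 0 (min 1 (‖x‖ - 1)) with hs
  have hsc : Continuous s := by fun_prop
  set H : E → E := fun x => (1 - s x) • F (ρ x) + s x • x with hH
  have hHc : Continuous H := by
    refine ((continuous_const.sub hsc).smul ?_).add (hsc.smul continuous_id)
    exact hF.comp_continuous hρc fun x => mem_closedBall_zero_iff.mpr (hρ1 x)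
  have hH0 : ∀ x, H x ≠ 0 := by
    intro x hx
    rcases le_or_gt ‖x‖ 1 with h1 | h1
    · have hs0 : s x = 0 := by
        simp only [hs]; rw [max_eq_left]; exact (min_le_right _ _).trans (by linarith)
      have : ρ x = x := by simp [hρ, max_eq_left h1]
      simp only [hH, hs0, this] at hx
      exact hF0 x h1 (by simpa using hx)
    · have hr : ρ x = ‖x‖⁻¹ • x := by simp [hρ, max_eq_right h1.le]
      have hx0 : 0 < ‖x‖ := by linarith
      have hrn : ‖ρ x‖ = 1 := by rw [hr, norm_smul, norm_inv, norm_norm, inv_mul_cancel₀ hx0.ne']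
      have hxr : x = ‖x‖ • ρ x := by rw [hr, smul_smul, mul_inv_cancel₀ hx0.ne', one_smul]
      have hs1 : s x ≤ 1 := by simp [hs]
      have hs0 : 0 ≤ s x := by simp [hs]
      rcases hs1.lt_or_eq with h2 | h2
      · refine hcon (ρ x) hrn ((1 - s x)⁻¹ * (s x * ‖x‖)) ?_ ?_
        · have : 0 < 1 - s x := by linarith
          positivity
        · have h3 : (1 - s x) • F (ρ x) = -((s x * ‖x‖) • ρ x) := by
            rw [mul_smul, ← hxr]; exact eq_neg_of_add_eq_zero_left hx
          have h4 : (1 - s x) ≠ 0 := by linarith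
          rw [mul_smul, ← smul_neg, ← h3, smul_smul, inv_mul_cancel₀ h4, one_smul]
      · simp only [hH, h2] at hx
        have : x = 0 := by simpa using hx
        rw [this] at hx0; simp at hx0
  have hHid : ∀ x, 2 ≤ ‖x‖ → H x = x := by
    intro x hx
    have : s x = 1 := by
      simp only [hs]; rw [min_eq_left (by linarith)]; simp
    simp [hH, this]
  obtain ⟨c, hc, hcH⟩ : ∃ c : ℝ, 0 < c ∧ ∀ x, ‖x‖ ≤ 3 → c ≤ ‖H x‖ := by
    obtain ⟨x0, -, hx0⟩ := (isCompact_closedBall (0 : E) 3).exists_isMinOn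
      ⟨0, by simp⟩ hHc.norm.continuousOn
    exact ⟨‖H x0‖, norm_pos_iff.mpr (hH0 x0), fun x hx => hx0 (mem_closedBall_zero_iff.mpr hx)⟩
  obtain ⟨P, hP, hPH⟩ := smooth_approx H hHc (fun _ => c) continuous_const (fun _ => hc)
  let χ : ContDiffBump (0 : E) := ⟨2, 3, by norm_num, by norm_num⟩
  have hχ := χ.contDiff (n := 1)
  refine no_smooth_retract (fun x => x + χ x • (P x - x)) ?_ ?_ ?_
  · exact contDiff_id.add (hχ.smul ((hP.of_le (by exact_mod_cast le_top)).sub contDiff_id))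
  · intro x hx
    rcases le_or_gt ‖x‖ 2 with h1 | h1
    · have : χ x = 1 := χ.one_of_mem_closedBall (mem_closedBall_zero_iff.mpr h1)
      simp only [this, one_smul, add_sub_cancel] at hx
      have h2 := hPH x
      rw [hx, zero_sub, norm_neg] at h2
      linarith [hcH x (by linarith)]
    · have hid := hHid x h1.le
      rcases le_or_gt ‖x‖ 3 with h3 | h3
      · have h2 := hPH x
        have h4 := hcH x h3
        rw [hid] at h2 h4
        have h5 : x = -(χ x • (P x - x)) := eq_neg_of_add_eq_zero_left hx
        have h6 : ‖x‖ ≤ ‖P x - x‖ := by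
          conv_lhs => rw [h5]
          rw [norm_neg, norm_smul, Real.norm_of_nonneg χ.nonneg]
          exact mul_le_of_le_one_left (norm_nonneg _) χ.le_one
        linarith
      · have : χ x = 0 := χ.zero_of_le_dist (by simpa using h3.le)
        simp only [this, zero_smul, add_zero] at hx
        rw [hx] at h3; norm_num at h3
  · intro x hx
    have : χ x = 0 := χ.zero_of_le_dist (by simpa using hx)
    simp [this]

lemma ball_lemma {E : Type*} [NormedAddCommGroup E] [InnerProductSpace ℝ E]
    [FiniteDimensional ℝ E] [MeasurableSpace E] [BorelSpace E]
    (m : E) (R : ℝ) (hR : 0 < R)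
    (F : E → E) (hF : ContinuousOn F (Metric.closedBall m R))
    (hF0 : ∀ x ∈ Metric.closedBall m R, F x ≠ 0) :
    ∃ x, ‖x - m‖ = R ∧ ∃ μ : ℝ, 0 ≤ μ ∧ F x = -(μ • (x - m)) := by
  have hmem : ∀ y : E, ‖y‖ ≤ 1 → m + R • y ∈ Metric.closedBall m R := by
    intro y hy
    simp only [Metric.mem_closedBall, dist_self_add_left, norm_smul, Real.norm_of_nonneg hR.le]
    nlinarith
  obtain ⟨y, hy, μ, hμ, h⟩ := ball_lemma_unit (fun y => F (m + R • y))
    (hF.comp (by fun_prop) fun y hy => hmem y (mem_closedBall_zero_iff.mp hy))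
    (fun y hy => hF0 _ (hmem y hy))
  refine ⟨m + R • y, by simp [norm_smul, hy, abs_of_pos hR], μ * R⁻¹, by positivity, ?_⟩
  rw [h, add_sub_cancel_left, smul_smul, mul_assoc, inv_mul_cancel₀ hR.ne', mul_one]

lemma arc_chart {E : Type*} [TopologicalSpace E] [T2Space E] [NormalSpace E] {A : Set E}
    (hA : IsArc A) :
    IsCompact A ∧ ∃ γ : ℝ → E, Continuous γ ∧ ∃ τ : E → ℝ, Continuous τ ∧ ∀ x ∈ A, γ (τ x) = x := by
  obtain ⟨a, b, γ, hc, hi, rfl, -, -⟩ := hA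
  refine ⟨isCompact_Icc.image_of_continuousOn hc, ?_⟩
  set g : Icc (0 : ℝ) 1 → E := fun t => γ t with hg
  have hgc : Continuous g := continuousOn_iff_continuous_domRestrict.mp hc
  have hgi : Function.Injective g := fun s t h => Subtype.ext (hi s.2 t.2 h)
  have hce : IsClosedEmbedding g := hgc.isClosedEmbedding hgi
  obtain ⟨τ, hτ⟩ := ContinuousMap.exists_extension (Y := ℝ) hce ⟨Subtype.val, continuous_subtype_val⟩
  refine ⟨IccExtend zero_le_one g, hgc.Icc_extend', τ, τ.continuous, ?_⟩
  rintro _ ⟨t, ht, rfl⟩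
  have h1 : τ (γ t) = t := by
    have := congrArg (fun f : C(Icc (0 : ℝ) 1, ℝ) => f ⟨t, ht⟩) hτ
    simpa using this
  rw [h1, IccExtend_of_mem _ _ ht]

lemma gen_avoid {E G : Type*} [NormedAddCommGroup E] [NormedSpace ℝ E] [FiniteDimensional ℝ E]
    [NormedAddCommGroup G] [NormedSpace ℝ G] [FiniteDimensional ℝ G]
    (hG : 1 < Module.finrank ℝ G) (lam : Set E)
    (hcover : ∃ S : Set (Set E), S.Countable ∧ (∀ A ∈ S, IsArc A) ∧ lam ⊆ ⋃₀ S)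
    (f : E → G) (hf : Continuous f) (ε : ℝ) (hε : 0 < ε) :
    ∃ g : E → G, Continuous g ∧ (∀ x, ‖g x - f x‖ ≤ ε) ∧ ∀ x ∈ lam, g x ≠ 0 := by
  obtain ⟨S, hS, hSA, hSl⟩ := hcover
  let D : Set E → Set (BoundedContinuousFunction E G) := fun A => {η | ∀ x ∈ A, f x + η x ≠ 0}
  have hopen : ∀ A ∈ S, IsOpen (D A) := by
    intro A hA
    obtain ⟨hK, -⟩ := arc_chart (hSA A hA)
    rw [Metric.isOpen_iff]
    intro η hη
    rcases A.eq_empty_or_nonempty with rfl | hne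
    · exact ⟨1, one_pos, fun y _ x hx => hx.elim⟩
    obtain ⟨x0, hx0, hmin⟩ := hK.exists_isMinOn hne
      (f := fun x => ‖f x + η x‖) (by fun_prop)
    refine ⟨‖f x0 + η x0‖, norm_pos_iff.mpr (hη x0 hx0), fun ξ hξ x hx h0 => ?_⟩
    have h1 : ‖f x0 + η x0‖ ≤ ‖f x + η x‖ := hmin hx
    have h2 : dist (ξ x) (η x) < ‖f x0 + η x0‖ :=
      (BoundedContinuousFunction.dist_coe_le_dist x).trans_lt hξ
    have h3 : f x + η x = η x - ξ x := by
      rw [← sub_zero (f x + η x), ← h0]; abel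
    rw [h3, ← dist_eq_norm, dist_comm] at h1
    linarith
  have hdense : ∀ A ∈ S, Dense (D A) := by
    intro A hA
    obtain ⟨-, γ, hγ, τ, hτ, hγτ⟩ := arc_chart (hSA A hA)
    rw [Metric.dense_iff]
    intro η r hr
    set q : ℝ → G := fun t => f (γ t) + η (γ t) with hq
    have hqc : Continuous q := by fun_prop
    obtain ⟨s, hs, hsq⟩ := smooth_approx q hqc (fun _ => r / 3) continuous_const (fun _ => by linarith)
    have hd : Dense (range s)ᶜ := ContDiff.dense_compl_range_of_finrank_lt_finrank
      (hs.of_le (by exact_mod_cast le_top)) (by simpa using hG)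
    obtain ⟨w, hw1, hw2⟩ := Metric.dense_iff.mp hd 0 (r / 3) (by linarith)
    rw [mem_ball_zero_iff] at hw1
    have hb : ∀ x, ‖s (τ x) - w - q (τ x)‖ ≤ 2 * r / 3 := by
      intro x
      have : s (τ x) - w - q (τ x) = (s (τ x) - q (τ x)) - w := by abel
      rw [this]
      refine (norm_sub_le _ _).trans ?_
      linarith [hsq (τ x)]
    have hsc := hs.continuous
    let ζ : BoundedContinuousFunction E G := BoundedContinuousFunction.ofNormedAddCommGroup
      (fun x => s (τ x) - w - q (τ x)) (by fun_prop) (2 * r / 3) hb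
    refine ⟨η + ζ, ?_, ?_⟩
    · rw [Metric.mem_ball, dist_self_add_left]
      refine lt_of_le_of_lt (BoundedContinuousFunction.norm_ofNormedAddCommGroup_le _ (by linarith) hb) ?_
      linarith
    · intro x hx h0
      have h1 : f x + (η x + (s (τ x) - w - q (τ x))) = 0 := h0
      have h2 : q (τ x) = f x + η x := by simp [hq, hγτ x hx]
      rw [h2] at h1
      apply hw2
      refine ⟨τ x, ?_⟩
      rw [← sub_eq_zero, ← h1]; abel
  have hB := dense_biInter_of_isOpen hopen hS hdense
  obtain ⟨η, hη1, hη2⟩ := Metric.dense_iff.mp hB 0 ε hε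
  refine ⟨fun x => f x + η x, by fun_prop, fun x => ?_, fun x hx => ?_⟩
  · rw [add_sub_cancel_left]
    exact (η.norm_coe_le_norm x).trans (mem_ball_zero_iff.mp hη1).le
  · obtain ⟨A, hA, hxA⟩ := hSl hx
    exact mem_iInter₂.mp hη2 A hA x hxA

lemma interior_empty_euc {E : Type*} [NormedAddCommGroup E] [InnerProductSpace ℝ E]
    [FiniteDimensional ℝ E] (hE : 3 ≤ Module.finrank ℝ E) (lam : Set E)
    (hcover : ∃ S : Set (Set E), S.Countable ∧ (∀ A ∈ S, IsArc A) ∧ lam ⊆ ⋃₀ S) :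
    interior lam = ∅ := by
  borelize E
  by_contra hne
  obtain ⟨m, hm⟩ := nonempty_iff_ne_empty.mpr hne
  obtain ⟨R, hR, hRl⟩ := Metric.nhds_basis_closedBall.mem_iff.mp (mem_interior_iff_mem_nhds.mp hm)
  obtain ⟨g, hg, hg1, hg2⟩ := gen_avoid (by omega) lam hcover (fun x => x - m) (by fun_prop) (R / 2)
    (by linarith)
  obtain ⟨x, hx, μ, hμ, h⟩ := ball_lemma m R hR g hg.continuousOn (fun x hx => hg2 x (hRl hx))
  have h1 := hg1 x
  rw [h, show -(μ • (x - m)) - (x - m) = -((μ + 1) • (x - m)) by module, norm_neg, norm_smul, hx,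
    Real.norm_of_nonneg (by linarith)] at h1
  nlinarith

lemma sep_euc {E : Type*} [NormedAddCommGroup E] [InnerProductSpace ℝ E]
    [FiniteDimensional ℝ E] (hE : 3 ≤ Module.finrank ℝ E) (lam : Set E) (hclosed : IsClosed lam)
    (hcover : ∃ S : Set (Set E), S.Countable ∧ (∀ A ∈ S, IsArc A) ∧ lam ⊆ ⋃₀ S)
    (Ω : Set E) (hΩ : IsOpen Ω) (hconn : IsPreconnected Ω) : IsPreconnected (Ω \ lam) := by
  borelize E
  have hint := interior_empty_euc hE lam hcover
  rw [isPreconnected_iff_subset_of_disjoint]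
  by_contra hcon
  push Not at hcon
  obtain ⟨U0, V0, hU0, hV0, hsub, hdisj, hnU, hnV⟩ := hcon
  set U := (Ω \ lam) ∩ U0 with hU
  set V := (Ω \ lam) ∩ V0 with hV
  have hW : IsOpen (Ω \ lam) := hΩ.sdiff hclosed
  have hUo : IsOpen U := hW.inter hU0
  have hVo : IsOpen V := hW.inter hV0
  have hUV : ∀ x, x ∈ U → x ∉ V := by
    intro x hx hx'
    have : x ∈ (Ω \ lam) ∩ (U0 ∩ V0) := ⟨hx.1, hx.2, hx'.2⟩
    rw [hdisj] at this; exact this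
  have hcov : ∀ x ∈ Ω, x ∉ lam → x ∈ U ∨ x ∈ V := by
    intro x hx hxl
    rcases hsub ⟨hx, hxl⟩ with h | h
    · exact Or.inl ⟨⟨hx, hxl⟩, h⟩
    · exact Or.inr ⟨⟨hx, hxl⟩, h⟩
  obtain ⟨u1, hu1, hu1'⟩ := not_subset.mp hnU
  obtain ⟨v1, hv1, hv1'⟩ := not_subset.mp hnV
  have hv1U : v1 ∈ U := (hcov v1 hv1.1 hv1.2).resolve_right fun h => hv1' h.2
  have hu1V : u1 ∈ V := (hcov u1 hu1.1 hu1.2).resolve_left fun h => hu1' h.2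
  obtain ⟨x0, hx0Ω, hx0U, hx0V⟩ : (Ω ∩ (closure U ∩ closure V)).Nonempty := by
    refine isPreconnected_closed_iff.mp hconn _ _ isClosed_closure isClosed_closure ?_
      ⟨v1, hv1.1, subset_closure hv1U⟩ ⟨u1, hu1.1, subset_closure hu1V⟩
    rw [← closure_union]
    have hd : Dense lamᶜ := interior_eq_empty_iff_dense_compl.mp hint
    intro x hx
    refine closure_mono ?_ (hd.open_subset_closure_inter hΩ hx)
    rintro y ⟨hy1, hy2⟩
    exact hcov y hy1 hy2
  obtain ⟨r, hr, hrΩ⟩ := Metric.isOpen_iff.mp hΩ x0 hx0Ω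
  obtain ⟨p, hpU, hp⟩ := Metric.mem_closure_iff.mp hx0U (r / 4) (by linarith)
  obtain ⟨q, hqV, hq⟩ := Metric.mem_closure_iff.mp hx0V (r / 4) (by linarith)
  have hpq : p ≠ q := fun h => hUV p hpU (h ▸ hqV)
  set m : E := (2 : ℝ)⁻¹ • (p + q) with hm
  set R : ℝ := ‖(2 : ℝ)⁻¹ • (p - q)‖ with hRdef
  have hR : 0 < R := norm_pos_iff.mpr (smul_ne_zero (by norm_num) (sub_ne_zero.mpr hpq))
  set u : E := R⁻¹ • ((2 : ℝ)⁻¹ • (p - q)) with hu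
  have hun : ‖u‖ = 1 := by rw [hu, norm_smul, norm_inv, Real.norm_of_nonneg hR.le, ← hRdef,
    inv_mul_cancel₀ hR.ne']
  have hRu : R • u = (2 : ℝ)⁻¹ • (p - q) := by rw [hu, smul_smul, mul_inv_cancel₀ hR.ne', one_smul]
  have hmp : m + R • u = p := by
    rw [hRu, hm]; module
  have hmq : m - R • u = q := by
    rw [hRu, hm]; module
  have hballΩ : Metric.closedBall m R ⊆ Ω := by
    intro x hx
    apply hrΩ
    rw [Metric.mem_ball]
    rw [Metric.mem_closedBall] at hx
    have h1 : dist p q < r / 2 := by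
      linarith [dist_triangle_left p q x0]
    have h2 : R = dist p q / 2 := by
      rw [hRdef, norm_smul, dist_eq_norm]; norm_num; ring
    have h3 : dist m p = R := by rw [← hmp]; simp [norm_smul, hun, abs_of_pos hR]
    linarith [dist_triangle x m x0, dist_triangle m p x0, dist_comm x0 p]
  obtain ⟨e1, he1, hpball⟩ := Metric.isOpen_iff.mp hUo p hpU
  obtain ⟨e2, he2, hqball⟩ := Metric.isOpen_iff.mp hVo q hqV
  set ε : ℝ := min e1 e2 / 3 with hε
  have hεpos : 0 < ε := by positivity
  have hε1 : 3 * ε ≤ e1 := by rw [hε]; linarith [min_le_left e1 e2]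
  have hε2 : 3 * ε ≤ e2 := by rw [hε]; linarith [min_le_right e1 e2]
  set K : Submodule ℝ E := (Submodule.span ℝ {u})ᗮ with hK
  have hKfin : 1 < Module.finrank ℝ K := by
    have h1 := Submodule.finrank_add_finrank_orthogonal (Submodule.span ℝ {u})
    have h2 := finrank_span_singleton (K := ℝ) (v := u) (by intro h0; rw [h0] at hun; simp at hun)
    rw [h2] at h1
    rw [hK]; omega
  have hKu : ∀ k : K, inner ℝ u (k : E) = 0 := fun k =>
    Submodule.mem_orthogonal_singleton_iff_inner_right.mp k.2
  set π : E → E := fun y => y - (inner ℝ u y) • u with hπ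
  have hπK : ∀ y, π y ∈ K := by
    intro y
    rw [hK, Submodule.mem_orthogonal_singleton_iff_inner_right]
    simp [hπ, inner_sub_right, inner_smul_right, hun]
  have hπc : Continuous π := by fun_prop
  obtain ⟨g, hgc, hgε, hg0⟩ := gen_avoid hKfin lam hcover (fun x => (⟨π (x - m), hπK _⟩ : K))
    (Continuous.subtype_mk (by fun_prop) _) ε hεpos
  have hlne : lam.Nonempty := by
    by_contra h
    rw [not_nonempty_iff_eq_empty] at h
    have hx0l : x0 ∉ lam := by rw [h]; exact fun h => h
    rcases hcov x0 hx0Ω hx0l with h' | h'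
    · obtain ⟨y, hy1, hy2⟩ := mem_closure_iff.mp hx0V U hUo h'
      exact hUV y hy1 hy2
    · obtain ⟨y, hy1, hy2⟩ := mem_closure_iff.mp hx0U V hVo h'
      exact hUV y hy2 hy1
  classical
  set d : E → ℝ := fun x => Metric.infDist x lam with hd
  have hdc : Continuous d := Metric.continuous_infDist_pt lam
  have hdpos : ∀ x, x ∉ lam → 0 < d x := fun x hx =>
    (hclosed.notMem_iff_infDist_pos hlne).mp hx
  have hd0 : ∀ x ∈ lam, d x = 0 := fun x hx => Metric.infDist_zero_of_mem hx
  set h : E → ℝ := fun x => if x ∈ U then d x else - d x with hh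
  have hhc : ContinuousOn h Ω := by
    intro x hx
    apply ContinuousAt.continuousWithinAt
    by_cases hxl : x ∈ lam
    · have hx' : h x = 0 := by simp [hh, hd0 x hxl]
      rw [ContinuousAt, hx']
      refine squeeze_zero_norm (a := d) (fun y => ?_) ?_
      · have : 0 ≤ d y := Metric.infDist_nonneg
        simp only [hh]; split_ifs <;> simp [abs_of_nonneg this]
      · rw [← hd0 x hxl]; exact hdc.tendsto x
    · rcases hcov x hx hxl with h' | h'
      · refine hdc.continuousAt.congr ?_
        filter_upwards [hUo.mem_nhds h'] with y hy
        simp [hh, hy]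
      · refine hdc.neg.continuousAt.congr ?_
        filter_upwards [hVo.mem_nhds h'] with y hy
        have : y ∉ U := fun hyU => hUV y hyU hy
        simp [hh, this]
  have hhU : ∀ x ∈ U, 0 < h x := fun x hx => by simpa [hh, hx] using hdpos x hx.1.2
  have hhV : ∀ x ∈ V, h x < 0 := fun x hx => by
    have : x ∉ U := fun hyU => hUV x hyU hx
    simpa [hh, this] using hdpos x hx.1.2
  have hinner : ∀ x, inner ℝ u (h x • u + (g x : E)) = h x := by
    intro x
    rw [inner_add_right, inner_smul_right, hKu, real_inner_self_eq_norm_sq, hun]; simp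
  obtain ⟨x, hx, μ, hμ, hF⟩ := ball_lemma m R hR (fun x => h x • u + (g x : E))
    (((hhc.mono hballΩ).smul continuousOn_const).add
      (continuous_subtype_val.comp hgc).continuousOn) (by
      intro x hx h0
      have h1 := hinner x
      rw [h0, inner_zero_right] at h1
      have hxl : x ∈ lam := by
        by_contra hxl
        rcases hcov x (hballΩ hx) hxl with h' | h'
        · linarith [hhU x h']
        · linarith [hhV x h']
      apply hg0 x hxl
      rw [← h1, zero_smul, zero_add] at h0
      exact Subtype.ext h0)
  set y := x - m with hy
  set c := inner ℝ u y with hc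
  have h1 : h x = -(μ * c) := by
    rw [← hinner x, hF, inner_neg_right, inner_smul_right]
  have h2 : (g x : E) = -(μ • π y) := by
    have : h x • u + (g x : E) = -(μ • y) := hF
    rw [h1] at this
    have h3 : (g x : E) = -(μ • y) + (μ * c) • u := by rw [← this]; module
    rw [h3]; simp only [hπ, ← hc]; module
  have h3 : ‖π y‖ ≤ ε := by
    have h4 := hgε x
    have h4 : ‖(g x : E) - π y‖ ≤ ε := h4
    rw [h2, show -(μ • π y) - π y = -((μ + 1) • π y) by module, norm_neg, norm_smul,
      Real.norm_of_nonneg (by linarith)] at h4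
    nlinarith [norm_nonneg (π y)]
  have hdecomp : y = π y + c • u := by simp [hπ, hc]
  have hnormsq : ‖π y‖ ^ 2 = R ^ 2 - c ^ 2 := by
    have h6 := norm_add_sq_real (π y) (c • u)
    have h7 : inner ℝ u (π y) = 0 := hKu ⟨π y, hπK y⟩
    rw [← hdecomp, hx, inner_smul_right, real_inner_comm, h7, norm_smul, hun, Real.norm_eq_abs,
      mul_one, sq_abs] at h6
    linarith
  have hsq : ‖π y‖ ^ 2 ≤ ε ^ 2 := by gcongr
  have hcR : |c| ≤ R := abs_le_of_sq_le_sq (by nlinarith [norm_nonneg (π y)]) hR.le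
  rw [abs_le] at hcR
  have hdist : ∀ s : ℝ, ‖y - s • u‖ ≤ ‖π y‖ + |c - s| := by
    intro s
    have : y - s • u = π y + (c - s) • u := by
      conv_lhs => rw [hdecomp]
      module
    rw [this]
    refine (norm_add_le _ _).trans ?_
    rw [norm_smul, hun, mul_one, Real.norm_eq_abs]
  rcases le_or_gt 0 c with hc0 | hc0
  · have h5 : |c - R| ≤ ε := abs_le_of_sq_le_sq (by nlinarith) hεpos.le
    have h6 : x ∈ U := by
      apply hpball
      rw [Metric.mem_ball, dist_eq_norm, ← hmp, show x - (m + R • u) = y - R • u by rw [hy]; abel]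
      linarith [hdist R]
    nlinarith [hhU x h6]
  · have h5 : |c - (-R)| ≤ ε := abs_le_of_sq_le_sq (by nlinarith) hεpos.le
    have h6 : x ∈ V := by
      apply hqball
      rw [Metric.mem_ball, dist_eq_norm, ← hmq,
        show x - (m - R • u) = y - (-R) • u by rw [hy]; module]
      linarith [hdist (-R)]
    nlinarith [hhV x h6]

lemma sep_pi (N : ℕ) (hN : 3 ≤ N) (lam : Set (Fin N → ℝ)) (hclosed : IsClosed lam)
    (hcover : ∃ S : Set (Set (Fin N → ℝ)), S.Countable ∧ (∀ A ∈ S, IsArc A) ∧ lam ⊆ ⋃₀ S) :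
    interior lam = ∅ ∧ ∀ Ω : Set (Fin N → ℝ), IsOpen Ω → IsPreconnected Ω →
      IsPreconnected (Ω \ lam) := by
  let e : EuclideanSpace ℝ (Fin N) ≃ₜ (Fin N → ℝ) :=
    (EuclideanSpace.equiv (Fin N) ℝ).toHomeomorph
  have hcov' : ∃ S : Set (Set (EuclideanSpace ℝ (Fin N))), S.Countable ∧ (∀ A ∈ S, IsArc A) ∧
      e ⁻¹' lam ⊆ ⋃₀ S := by
    obtain ⟨S, hS, hSA, hSl⟩ := hcover
    refine ⟨(fun A => e ⁻¹' A) '' S, hS.image _, ?_, ?_⟩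
    · rintro _ ⟨A, hA, rfl⟩
      obtain ⟨a, b, γ, hc, hi, rfl, h0, h1⟩ := hSA A hA
      refine ⟨e.symm a, e.symm b, fun t => e.symm (γ t), e.symm.continuous.comp_continuousOn hc,
        e.symm.injective.comp_injOn hi, ?_, by simp [h0], by simp [h1]⟩
      show _ = e ⁻¹' (γ '' Icc 0 1)
      rw [← e.image_symm, image_image]
    · intro x hx
      obtain ⟨A, hA, hxA⟩ := hSl hx
      exact ⟨_, ⟨A, hA, rfl⟩, hxA⟩
  have hfr : 3 ≤ Module.finrank ℝ (EuclideanSpace ℝ (Fin N)) := by simpa using hN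
  refine ⟨?_, fun Ω hΩ hconn => ?_⟩
  · have := interior_empty_euc hfr _ hcov'
    rw [← e.preimage_interior] at this
    have h2 := preimage_eq_empty_iff.mp this
    rw [e.surjective.range_eq, disjoint_univ] at h2
    exact h2
  · have := sep_euc hfr _ (hclosed.preimage e.continuous) hcov' (e ⁻¹' Ω) (hΩ.preimage e.continuous)
      (e.isPreconnected_preimage.mpr hconn)
    rw [← preimage_sdiff] at this
    exact e.isPreconnected_preimage.mp this

lemma path_concat {F : Type*} [TopologicalSpace F] (V : ℤ → Set F)
    (hV : ∀ n, IsPathConnected (V n)) (hne : ∀ n, (V n ∩ V (n + 1)).Nonempty) :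
    ∃ c : ℝ → F, Continuous c ∧ ∀ t : ℝ, c t ∈ V ⌊t⌋ := by
  choose p hp1 hp2 using hne
  have hp3 : ∀ n, p (n - 1) ∈ V n := fun n => by simpa using hp2 (n - 1)
  have hJ : ∀ n, JoinedIn (V n) (p (n - 1)) (p n) := fun n => (hV n).joinedIn _ (hp3 n) _ (hp1 n)
  obtain ⟨P, hP⟩ : ∃ P : ℤ → ℝ → F, ∀ n, P n 0 = p (n - 1) ∧ P n 1 = p n ∧ Continuous (P n) ∧
      ∀ s ∈ Icc (0 : ℝ) 1, P n s ∈ V n := by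
    refine ⟨fun n => (hJ n).somePath.extend, fun n => ⟨by simp, by simp,
      (hJ n).somePath.continuous_extend, fun s hs => ?_⟩⟩
    show (hJ n).somePath.extend s ∈ V n
    rw [Path.extend_apply _ hs]
    exact (hJ n).somePath_mem _
  set c : ℝ → F := fun t => P ⌊t⌋ (t - ⌊t⌋) with hc
  have hcn : ∀ (n : ℤ) (t : ℝ), t ∈ Icc (n : ℝ) (n + 1) → c t = P n (t - n) := by
    intro n t ht
    rcases ht.2.lt_or_eq with h | h
    · have : ⌊t⌋ = n := Int.floor_eq_iff.mpr ⟨ht.1, h⟩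
      simp only [hc, this]
    · have h1 : ⌊t⌋ = n + 1 := by rw [h]; simpa using Int.floor_intCast (R := ℝ) (n + 1)
      have e1 : t - ((n + 1 : ℤ) : ℝ) = 0 := by push_cast; linarith
      have e2 : t - (n : ℝ) = 1 := by linarith
      simp only [hc, h1]
      rw [e1, e2, (hP _).1, (hP _).2.1]
      simp
  refine ⟨c, ?_, ?_⟩
  · have hlf : LocallyFinite fun n : ℤ => Icc (n : ℝ) (n + 1) := by
      intro x
      refine ⟨Ioo (x - 1) (x + 1), Ioo_mem_nhds (by linarith) (by linarith), ?_⟩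
      refine (finite_Icc (⌊x⌋ - 2) (⌊x⌋ + 2)).subset ?_
      rintro n ⟨y, ⟨h1, h2⟩, h3, h4⟩
      have h5 := Int.floor_le x
      have h6 := Int.lt_floor_add_one x
      constructor
      · have : ((⌊x⌋ - 2 : ℤ) : ℝ) ≤ n := by push_cast; linarith
        exact_mod_cast this
      · have : (n : ℝ) ≤ ((⌊x⌋ + 2 : ℤ) : ℝ) := by push_cast; linarith
        exact_mod_cast this
    refine hlf.continuous ?_ (fun n => isClosed_Icc) (fun n => ?_)
    · rw [iUnion_eq_univ_iff]
      exact fun x => ⟨⌊x⌋, Int.floor_le x, (Int.lt_floor_add_one x).le⟩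
    · refine ContinuousOn.congr ?_ (hcn n)
      exact ((hP n).2.2.1.comp (by fun_prop)).continuousOn
  · intro t
    have h0 : t - ⌊t⌋ ∈ Icc (0 : ℝ) 1 := ⟨Int.fract_nonneg t, (Int.fract_lt_one t).le⟩
    exact (hP ⌊t⌋).2.2.2 _ h0

lemma path_exists {F : Type*} [NormedAddCommGroup F] [NormedSpace ℝ F] (lam : Set F)
    (hclosed : IsClosed lam) (hint : interior lam = ∅)
    (hsep : ∀ Ω : Set F, IsOpen Ω → IsPreconnected Ω → IsPreconnected (Ω \ lam))
    (a a' : F) (Ω : Set F) (hΩ : IsOpen Ω) (hΩc : IsPreconnected Ω) (ha : a ∈ Ω) (ha' : a' ∈ Ω) :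
    ∃ c : ℝ → F, Continuous c ∧ (∀ t, c t ∈ Ω \ lam) ∧
      Filter.Tendsto c Filter.atBot (𝓝 a) ∧ Filter.Tendsto c Filter.atTop (𝓝 a') := by
  obtain ⟨r1, hr1, hb1⟩ := Metric.isOpen_iff.mp hΩ a ha
  obtain ⟨r2, hr2, hb2⟩ := Metric.isOpen_iff.mp hΩ a' ha'
  have hnonempty : ∀ U : Set F, IsOpen U → U.Nonempty → (U \ lam).Nonempty := by
    intro U hU hUn
    by_contra h
    rw [not_nonempty_iff_eq_empty, sdiff_eq_empty] at h
    have := interior_maximal h hU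
    rw [hint] at this
    exact hUn.ne_empty (subset_empty_iff.mp this)
  let V0 : ℤ → Set F := fun n => if n < 0 then Metric.ball a (r1 / (-n : ℝ)) else
    if n = 0 then Ω else Metric.ball a' (r2 / (n : ℝ))
  have hVneg : ∀ n : ℤ, n < 0 → V0 n = Metric.ball a (r1 / (-n : ℝ)) := fun n hn => by simp [V0, hn]
  have hV00 : V0 0 = Ω := by simp [V0]
  have hVpos : ∀ n : ℤ, 0 < n → V0 n = Metric.ball a' (r2 / (n : ℝ)) := fun n hn => by
    simp [V0, hn.ne', hn.not_gt]
  have hprop : ∀ n, IsOpen (V0 n) ∧ IsPreconnected (V0 n) ∧ V0 n ⊆ Ω ∧ (n ≤ 0 → a ∈ V0 n) ∧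
      (0 ≤ n → a' ∈ V0 n) := by
    intro n
    rcases lt_trichotomy n 0 with hn | hn | hn
    · rw [hVneg n hn]
      have hn' : (1 : ℝ) ≤ -n := by exact_mod_cast (by omega : (1 : ℤ) ≤ -n)
      refine ⟨Metric.isOpen_ball, (convex_ball _ _).isPreconnected, ?_, fun _ => ?_, fun h => ?_⟩
      · exact (Metric.ball_subset_ball (div_le_self hr1.le hn')).trans hb1
      · exact Metric.mem_ball_self (div_pos hr1 (by linarith))
      · omega
    · subst hn; rw [hV00]
      exact ⟨hΩ, hΩc, Subset.rfl, fun _ => ha, fun _ => ha'⟩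
    · rw [hVpos n hn]
      have hn' : (1 : ℝ) ≤ n := by exact_mod_cast hn
      refine ⟨Metric.isOpen_ball, (convex_ball _ _).isPreconnected, ?_, fun _ => ?_, fun h => ?_⟩
      · exact (Metric.ball_subset_ball (div_le_self hr2.le hn')).trans hb2
      · omega
      · exact Metric.mem_ball_self (div_pos hr2 (by linarith))
  obtain ⟨c, hc, hcV⟩ := path_concat (fun n => V0 n \ lam) (by
      intro n
      obtain ⟨h1, h2, h3, h4, h5⟩ := hprop n
      have hne : (V0 n).Nonempty := by
        rcases le_total n 0 with h | h
        exacts [⟨a, h4 h⟩, ⟨a', h5 h⟩]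
      exact (h1.sdiff hclosed).isConnected_iff_isPathConnected.mp ⟨hnonempty _ h1 hne, hsep _ h1 h2⟩)
    (by
      intro n
      obtain ⟨h1, h2, h3, h4, h5⟩ := hprop n
      obtain ⟨h1', h2', h3', h4', h5'⟩ := hprop (n + 1)
      have hne : (V0 n ∩ V0 (n + 1)).Nonempty := by
        rcases lt_or_ge n 0 with h | h
        exacts [⟨a, h4 (by omega), h4' (by omega)⟩, ⟨a', h5 (by omega), h5' (by omega)⟩]
      obtain ⟨x, hx, hxl⟩ := hnonempty _ (h1.inter h1') hne
      exact ⟨x, ⟨hx.1, hxl⟩, hx.2, hxl⟩)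
  refine ⟨c, hc, fun t => ⟨(hprop _).2.2.1 (hcV t).1, (hcV t).2⟩, ?_, ?_⟩
  · rw [tendsto_iff_dist_tendsto_zero]
    have hlim : Filter.Tendsto (fun t : ℝ => r1 / (-t)) Filter.atBot (𝓝 0) :=
      Filter.Tendsto.const_div_atTop Filter.tendsto_neg_atBot_atTop r1
    refine squeeze_zero' (Filter.Eventually.of_forall fun _ => dist_nonneg) ?_ hlim
    filter_upwards [Filter.eventually_lt_atBot (0 : ℝ)] with t ht
    have h1 := (hcV t).1
    have h2 : ((⌊t⌋ : ℤ) : ℝ) ≤ t := Int.floor_le t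
    have h3 : ⌊t⌋ < 0 := Int.floor_lt.mpr (by simpa using ht)
    rw [hVneg _ h3, Metric.mem_ball] at h1
    refine h1.le.trans ?_
    exact div_le_div_of_nonneg_left hr1.le (by linarith) (by linarith)
  · rw [tendsto_iff_dist_tendsto_zero]
    have hlim : Filter.Tendsto (fun t : ℝ => r2 / (t - 1)) Filter.atTop (𝓝 0) :=
      Filter.Tendsto.const_div_atTop (Filter.tendsto_atTop_add_const_right _ (-1) Filter.tendsto_id) r2
    refine squeeze_zero' (Filter.Eventually.of_forall fun _ => dist_nonneg) ?_ hlim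
    filter_upwards [Filter.eventually_gt_atTop (1 : ℝ)] with t ht
    have h1 := (hcV t).1
    have h2 : t < ⌊t⌋ + 1 := Int.lt_floor_add_one t
    have h3 : 0 < ⌊t⌋ := Int.floor_pos.mpr ht.le
    rw [hVpos _ h3, Metric.mem_ball] at h1
    refine h1.le.trans ?_
    exact div_le_div_of_nonneg_left hr2.le (by linarith) (by linarith)

lemma dimH_image_two {F : Type*} [NormedAddCommGroup F] [NormedSpace ℝ F]
    (f : ℝ × ℝ → F) (U : Set (ℝ × ℝ)) (h : ∀ x ∈ U, ContDiffAt ℝ 1 f x) :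
    dimH (f '' U) ≤ 2 := by
  have h1 : dimH (f '' U) ≤ dimH U := by
    refine dimH_image_le_of_locally_lipschitzOn fun x hx => ?_
    obtain ⟨K, t, ht, hK⟩ := (h x hx).exists_lipschitzOnWith
    exact ⟨K, t, mem_nhdsWithin_of_mem_nhds ht, hK⟩
  refine h1.trans ((dimH_mono (subset_univ U)).trans ?_)
  rw [Real.dimH_univ_eq_finrank]; simp

lemma exists_small_avoid {F : Type*} [NormedAddCommGroup F] [NormedSpace ℝ F] [FiniteDimensional ℝ F]
    (hF : 3 ≤ Module.finrank ℝ F)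
    (f g : ℝ × ℝ → F) (U U' : Set (ℝ × ℝ)) (hf : ∀ x ∈ U, ContDiffAt ℝ 1 f x)
    (hg : ∀ x ∈ U', ContDiffAt ℝ 1 g x) :
    ∃ v : F, ‖v‖ < 1 ∧ (∀ x ∈ U, f x ≠ v) ∧ ∀ x ∈ U', g x ≠ v := by
  have hd : dimH (f '' U ∪ g '' U') < Module.finrank ℝ F := by
    rw [dimH_union]
    refine (max_le (dimH_image_two f U hf) (dimH_image_two g U' hg)).trans_lt ?_
    exact_mod_cast hF
  obtain ⟨v, hv1, hv2⟩ := Metric.dense_iff.mp (dense_compl_of_dimH_lt_finrank hd) 0 1 one_pos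
  refine ⟨v, mem_ball_zero_iff.mp hv1, fun x hx h => hv2 (Or.inl ⟨x, hx, h⟩),
    fun x hx h => hv2 (Or.inr ⟨x, hx, h⟩)⟩

lemma generic_embed {F : Type*} [NormedAddCommGroup F] [NormedSpace ℝ F] [FiniteDimensional ℝ F]
    (hF : 3 ≤ Module.finrank ℝ F) (γ : ℝ → F) (hγ : ContDiff ℝ (⊤ : ℕ∞) γ)
    (ε : ℝ → ℝ) (hε : ContDiff ℝ (⊤ : ℕ∞) ε) (hpos : ∀ t, 0 < ε t) :
    ∃ Γ : ℝ → F, ContDiff ℝ (⊤ : ℕ∞) Γ ∧ Function.Injective Γ ∧ (∀ t, deriv Γ t ≠ 0) ∧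
      ∀ t, ‖Γ t - γ t‖ ≤ ε t * (1 + |t|) := by
  have hγ1 : ContDiff ℝ 1 γ := hγ.of_le (by exact_mod_cast le_top)
  have hε1 : ContDiff ℝ 1 ε := hε.of_le (by exact_mod_cast le_top)
  have hγ' : ContDiff ℝ 1 (deriv γ) :=
    ((contDiff_infty_iff_deriv.mp hγ).2).of_le (by exact_mod_cast le_top)
  have hε' : ContDiff ℝ 1 (deriv ε) :=
    ((contDiff_infty_iff_deriv.mp hε).2).of_le (by exact_mod_cast le_top)
  obtain ⟨v1, hv1, hA, hB⟩ := exists_small_avoid hF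
    (fun q => -((q.1 * ε q.1 - q.2 * ε q.2)⁻¹ • (γ q.1 - γ q.2)))
    (fun q => -((ε q.1)⁻¹ • deriv γ q.1))
    {q | q.1 * ε q.1 - q.2 * ε q.2 ≠ 0} univ
    (fun q hq => ContDiffAt.neg (ContDiffAt.smul (ContDiffAt.inv (by fun_prop) hq) (by fun_prop)))
    (fun q _ => ContDiffAt.neg (ContDiffAt.smul (ContDiffAt.inv (by fun_prop) (hpos _).ne')
      (by fun_prop)))
  obtain ⟨v0, hv0, hC, hD⟩ := exists_small_avoid hF
    (fun q => -((ε q.1 - ε q.2)⁻¹ • ((γ q.1 - γ q.2) + (q.1 * ε q.1 - q.2 * ε q.2) • v1)))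
    (fun q => -((deriv ε q.1)⁻¹ • (deriv γ q.1 + (ε q.1 + q.1 * deriv ε q.1) • v1)))
    {q | ε q.1 - ε q.2 ≠ 0} {q | deriv ε q.1 ≠ 0}
    (fun q hq => ContDiffAt.neg (ContDiffAt.smul (ContDiffAt.inv (by fun_prop) hq) (by fun_prop)))
    (fun q hq => ContDiffAt.neg (ContDiffAt.smul (ContDiffAt.inv (by fun_prop) hq) (by fun_prop)))
  have hsolve : ∀ (k : ℝ) (x v : F), k ≠ 0 → x + k • v = 0 → -(k⁻¹ • x) = v := by
    intro k x v hk h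
    rw [eq_neg_of_add_eq_zero_left h, smul_neg, neg_neg, smul_smul, inv_mul_cancel₀ hk, one_smul]
  refine ⟨fun t => γ t + ε t • v0 + (t * ε t) • v1, by fun_prop, ?_, ?_, ?_⟩
  · intro s t hst
    by_contra hne
    have hst : γ s + ε s • v0 + (s * ε s) • v1 = γ t + ε t • v0 + (t * ε t) • v1 := hst
    have h0 : ((γ s - γ t) + (s * ε s - t * ε t) • v1) + (ε s - ε t) • v0 = 0 := by
      rw [← sub_eq_zero] at hst
      rw [← hst]; module
    by_cases hα : ε s - ε t = 0
    · rw [hα, zero_smul, add_zero] at h0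
      have hβ : s * ε s - t * ε t ≠ 0 := by
        rw [sub_eq_zero.mp hα, ← sub_mul]
        exact mul_ne_zero (sub_ne_zero.mpr hne) (hpos t).ne'
      exact hA (s, t) hβ (hsolve _ _ _ hβ h0)
    · exact hC (s, t) hα (hsolve _ _ _ hα h0)
  · intro t h0
    have dγ := (hγ1.differentiable (by norm_num) t).hasDerivAt
    have dε := (hε1.differentiable (by norm_num) t).hasDerivAt
    have dΓ := (dγ.add (dε.smul_const v0)).add (((hasDerivAt_id t).mul dε).smul_const v1)
    have h1 : deriv (fun t => γ t + ε t • v0 + (t * ε t) • v1) t = _ := dΓ.deriv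
    rw [h0] at h1
    have h2 : (deriv γ t + (ε t + t * deriv ε t) • v1) + deriv ε t • v0 = 0 := by
      rw [h1]; simp only [id]; module
    by_cases hα : deriv ε t = 0
    · rw [hα, zero_smul, add_zero, mul_zero, add_zero] at h2
      exact hB (t, t) (mem_univ _) (hsolve _ _ _ (hpos t).ne' h2)
    · exact hD (t, t) hα (hsolve _ _ _ hα h2)
  · intro t
    have : γ t + ε t • v0 + (t * ε t) • v1 - γ t = ε t • (v0 + t • v1) := by module
    rw [this, norm_smul, Real.norm_of_nonneg (hpos t).le]
    refine mul_le_mul_of_nonneg_left ?_ (hpos t).le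
    refine (norm_add_le _ _).trans (add_le_add hv0.le ?_)
    rw [norm_smul, Real.norm_eq_abs]
    exact mul_le_of_le_one_right (abs_nonneg _) hv1.le

lemma smooth_curve {F : Type*} [NormedAddCommGroup F] [NormedSpace ℝ F] [FiniteDimensional ℝ F]
    (hF : 3 ≤ Module.finrank ℝ F) (W : Set F) (hW : IsOpen W) (a a' : F) (ha : a ∉ W) (ha' : a' ∉ W)
    (c : ℝ → F) (hc : Continuous c) (hcW : ∀ t, c t ∈ W)
    (hbot : Filter.Tendsto c Filter.atBot (𝓝 a)) (htop : Filter.Tendsto c Filter.atTop (𝓝 a')) :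
    ∃ Γ : ℝ → F, ContDiff ℝ (⊤ : ℕ∞) Γ ∧ Function.Injective Γ ∧ (∀ t, deriv Γ t ≠ 0) ∧
      (∀ t, Γ t ∈ W) ∧
      Filter.Tendsto Γ Filter.atBot (𝓝 a) ∧ Filter.Tendsto Γ Filter.atTop (𝓝 a') := by
  set D : ℝ → ℝ := fun t => Metric.infDist (c t) Wᶜ with hD
  have hDc : Continuous D := (Metric.continuous_infDist_pt _).comp hc
  have hDpos : ∀ t, 0 < D t := fun t =>
    (hW.isClosed_compl.notMem_iff_infDist_pos ⟨a, ha⟩).mp (fun h => h (hcW t))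
  have habs : ∀ t : ℝ, 0 < 1 + |t| := fun t => by positivity
  obtain ⟨γ, hγ, hγc⟩ := smooth_approx c hc (fun t => D t / 2) (by fun_prop)
    (fun t => by have := hDpos t; positivity)
  set κ : ℝ → ℝ := fun t => D t / (4 * (1 + |t|)) with hκ
  have hκc : Continuous κ := hDc.div (by fun_prop) (fun t => by have := habs t; positivity)
  have hκpos : ∀ t, 0 < κ t := fun t => div_pos (hDpos t) (by have := habs t; positivity)
  obtain ⟨ε, hε, hεκ⟩ := smooth_approx κ hκc κ hκc hκpos
  have hε2 : ∀ t, 0 < ε t ∧ ε t < 2 * κ t := by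
    intro t
    have := abs_lt.mp (hεκ t)
    constructor <;> linarith [this.1, this.2]
  obtain ⟨Γ, hΓ, hinj, hder, hclose⟩ := generic_embed hF γ hγ ε hε (fun t => (hε2 t).1)
  have hdist : ∀ t, dist (Γ t) (c t) < D t := by
    intro t
    have h1 := hclose t
    have h2 : ε t * (1 + |t|) < 2 * κ t * (1 + |t|) := mul_lt_mul_of_pos_right (hε2 t).2 (habs t)
    have h3 : 2 * κ t * (1 + |t|) = D t / 2 := by
      have := (habs t).ne'
      simp only [hκ]; field_simp; ring
    have h4 := hγc t
    rw [dist_eq_norm, show Γ t - c t = (Γ t - γ t) + (γ t - c t) by abel]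
    refine (norm_add_le _ _).trans_lt ?_
    linarith
  have hlim : ∀ (l : Filter ℝ) (b : F), b ∉ W → Filter.Tendsto c l (𝓝 b) →
      Filter.Tendsto Γ l (𝓝 b) := by
    intro l b hb h
    rw [tendsto_iff_dist_tendsto_zero] at h ⊢
    have h2 : Filter.Tendsto (fun t => 2 * dist (c t) b) l (𝓝 0) := by
      simpa using h.const_mul 2
    refine squeeze_zero (fun _ => dist_nonneg) (fun t => ?_) h2
    have h3 : D t ≤ dist (c t) b := Metric.infDist_le_dist_of_mem hb
    linarith [dist_triangle (Γ t) (c t) b, hdist t]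
  refine ⟨Γ, hΓ, hinj, hder, fun t => ?_, hlim _ _ ha hbot, hlim _ _ ha' htop⟩
  by_contra h
  have h3 : D t ≤ dist (c t) (Γ t) := Metric.infDist_le_dist_of_mem h
  rw [dist_comm] at h3
  linarith [hdist t]

lemma arc_of_curve {F : Type*} [NormedAddCommGroup F] [NormedSpace ℝ F]
    (W : Set F) (a a' : F) (ha : a ∉ W) (ha' : a' ∉ W) (hne : a ≠ a')
    (Γ : ℝ → F) (hΓ : ContDiff ℝ (⊤ : ℕ∞) Γ) (hinj : Function.Injective Γ)
    (hder : ∀ t, deriv Γ t ≠ 0) (hW : ∀ t, Γ t ∈ W)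
    (hbot : Filter.Tendsto Γ Filter.atBot (𝓝 a)) (htop : Filter.Tendsto Γ Filter.atTop (𝓝 a')) :
    ∃ J : Set F, IsArcFrom J a a' ∧ J \ {a, a'} ⊆ W ∧ a ∈ J ∧ a' ∈ J ∧
      IsSmoothOpenArc (J \ {a, a'}) := by
  set L : ℝ → ℝ := fun s => Real.log s - Real.log (1 - s) with hL
  have hLd : ∀ s ∈ Ioo (0 : ℝ) 1, HasDerivAt L (s⁻¹ + (1 - s)⁻¹) s := by
    intro s hs
    have h1 := Real.hasDerivAt_log hs.1.ne'
    have h2 := ((hasDerivAt_id s).const_sub 1).log (by simp only [id]; linarith [hs.2])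
    have h3 := h1.sub h2
    have h4 : s⁻¹ - -1 / (1 - id s) = s⁻¹ + (1 - s)⁻¹ := by simp only [id]; ring
    rw [h4] at h3
    exact h3
  have hLC : ContDiffOn ℝ (⊤ : ℕ∞) L (Ioo 0 1) := by
    refine ContDiffOn.sub (contDiffOn_id.log fun s hs => hs.1.ne') (ContDiffOn.log (by fun_prop) ?_)
    intro s hs; linarith [hs.2]
  have hLm : StrictMonoOn L (Ioo 0 1) := by
    intro s hs t ht hst
    have h1 := Real.log_lt_log hs.1 hst
    have h2 := Real.log_lt_log (show 0 < 1 - t by linarith [ht.2]) (show 1 - t < 1 - s by linarith)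
    simp only [hL]; linarith
  have hL0 : Filter.Tendsto L (𝓝[>] 0) Filter.atBot := by
    have h1 := Real.tendsto_log_nhdsGT_zero
    have h2 : Filter.Tendsto (fun s : ℝ => - Real.log (1 - s)) (𝓝[>] 0) (𝓝 (- Real.log (1 - 0))) := by
      refine Filter.Tendsto.mono_left ?_ nhdsWithin_le_nhds
      refine ContinuousAt.tendsto (f := fun s : ℝ => - Real.log (1 - s)) ?_
      exact (ContinuousAt.log (by fun_prop) (by norm_num)).neg
    exact h1.atBot_add h2
  have hL1 : Filter.Tendsto L (𝓝[<] 1) Filter.atTop := by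
    have h0 : Filter.Tendsto (fun s : ℝ => 1 - s) (𝓝[<] 1) (𝓝[>] 0) := by
      refine tendsto_nhdsWithin_iff.mpr ⟨?_, ?_⟩
      · refine Filter.Tendsto.mono_left ?_ nhdsWithin_le_nhds
        have : ContinuousAt (fun s : ℝ => 1 - s) 1 := by fun_prop
        simpa [ContinuousAt] using this
      · filter_upwards [self_mem_nhdsWithin] with s hs
        simpa using hs
    have h1 := Filter.tendsto_neg_atBot_atTop.comp (Real.tendsto_log_nhdsGT_zero.comp h0)
    have h2 : Filter.Tendsto Real.log (𝓝[<] 1) (𝓝 (Real.log 1)) :=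
      (Real.continuousAt_log one_ne_zero).tendsto.mono_left nhdsWithin_le_nhds
    have h3 := h2.add_atTop h1
    exact h3
  set f : ℝ → F := fun s => Γ (L s) with hf
  have hfC : ContDiffOn ℝ (⊤ : ℕ∞) f (Ioo 0 1) := hΓ.comp_contDiffOn hLC
  have hf0 : Filter.Tendsto f (𝓝[>] 0) (𝓝 a) := hbot.comp hL0
  have hf1 : Filter.Tendsto f (𝓝[<] 1) (𝓝 a') := htop.comp hL1
  set g : ℝ → F := extendFrom (Ioo 0 1) f with hg
  have hgc : ContinuousOn g (Icc 0 1) :=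
    continuousOn_Icc_extendFrom_Ioo hfC.continuousOn hf0 hf1
  have hg0 : g 0 = a := eq_lim_at_left_extendFrom_Ioo zero_lt_one hf0
  have hg1 : g 1 = a' := eq_lim_at_right_extendFrom_Ioo zero_lt_one hf1
  have hgf : ∀ s ∈ Ioo (0 : ℝ) 1, g s = f s := by
    intro s hs
    exact extendFrom_eq (subset_closure hs) ((hfC.continuousOn s hs).tendsto)
  have hgW : ∀ s ∈ Ioo (0 : ℝ) 1, g s ∈ W := fun s hs => by rw [hgf s hs]; exact hW _
  have hcases : ∀ s ∈ Icc (0 : ℝ) 1, s = 0 ∨ s = 1 ∨ s ∈ Ioo (0 : ℝ) 1 := by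
    intro s hs
    rcases hs.1.eq_or_lt with h | h
    · exact Or.inl h.symm
    rcases hs.2.eq_or_lt with h' | h'
    · exact Or.inr (Or.inl h')
    · exact Or.inr (Or.inr ⟨h, h'⟩)
  have hginjo : InjOn g (Ioo 0 1) := by
    intro s hs t ht hst
    rw [hgf s hs, hgf t ht] at hst
    exact hLm.injOn hs ht (hinj hst)
  have hgna : ∀ s ∈ Ioo (0 : ℝ) 1, g s ≠ a := fun s hs h => ha (h ▸ hgW s hs)
  have hgna' : ∀ s ∈ Ioo (0 : ℝ) 1, g s ≠ a' := fun s hs h => ha' (h ▸ hgW s hs)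
  have hginj : InjOn g (Icc 0 1) := by
    intro s hs t ht hst
    rcases hcases s hs with rfl | rfl | hs' <;> rcases hcases t ht with rfl | rfl | ht'
    · rfl
    · rw [hg0, hg1] at hst; exact (hne hst).elim
    · rw [hg0] at hst; exact (hgna t ht' hst.symm).elim
    · rw [hg0, hg1] at hst; exact (hne hst.symm).elim
    · rfl
    · rw [hg1] at hst; exact (hgna' t ht' hst.symm).elim
    · rw [hg0] at hst; exact (hgna s hs' hst).elim
    · rw [hg1] at hst; exact (hgna' s hs' hst).elim
    · exact hginjo hs' ht' hst
  have hJ : g '' Icc 0 1 \ {a, a'} = g '' Ioo 0 1 := by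
    ext x
    constructor
    · rintro ⟨⟨s, hs, rfl⟩, hx⟩
      rcases hcases s hs with rfl | rfl | hs'
      · exact (hx (by simp [hg0])).elim
      · exact (hx (by simp [hg1])).elim
      · exact ⟨s, hs', rfl⟩
    · rintro ⟨s, hs, rfl⟩
      refine ⟨⟨s, Ioo_subset_Icc_self hs, rfl⟩, ?_⟩
      simp [hgna s hs, hgna' s hs]
  refine ⟨g '' Icc 0 1, ⟨g, hgc, hginj, rfl, hg0, hg1⟩, ?_, ⟨0, by simp, hg0⟩, ⟨1, by simp, hg1⟩, ?_⟩
  · rw [hJ]; rintro _ ⟨s, hs, rfl⟩; exact hgW s hs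
  · rw [hJ]
    refine ⟨0, 1, g, zero_lt_one, hfC.congr hgf, ?_, hginjo, ?_, rfl⟩
    · intro s hs
      rw [derivWithin_congr hgf (hgf s hs), derivWithin_of_isOpen isOpen_Ioo hs]
      have h1 : HasDerivAt f ((s⁻¹ + (1 - s)⁻¹) • deriv Γ (L s)) s :=
        ((hΓ.differentiable (by simp)) (L s)).hasDerivAt.scomp s (hLd s hs)
      rw [h1.deriv]
      refine smul_ne_zero ?_ (hder _)
      have h2 := inv_pos.mpr hs.1
      have h3 : 0 < (1 - s)⁻¹ := inv_pos.mpr (by linarith [hs.2])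
      linarith
    · have hce : IsClosedEmbedding (fun t : Icc (0 : ℝ) 1 => g t) :=
        (continuousOn_iff_continuous_domRestrict.mp hgc).isClosedEmbedding
          (fun s t h => Subtype.ext (hginj s.2 t.2 h))
      exact hce.isEmbedding.comp (IsEmbedding.inclusion Ioo_subset_Icc_self)

/-- In `ℝ^N`, `N ≥ 3`: given a closed set `λ` contained in a countable union of arcs and
two points `a, a'` of `λ` in a connected open set `Ω`, there is an arc in `Ω` from `a`
to `a'` meeting `λ` only at its endpoints, smooth off its endpoints. -/
theorem stmt_7 (N : ℕ) (hN : 3 ≤ N) (lam : Set (Fin N → ℝ)) (hclosed : IsClosed lam)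
    (hcover : ∃ S : Set (Set (Fin N → ℝ)), S.Countable ∧ (∀ A ∈ S, IsArc A) ∧ lam ⊆ ⋃₀ S)
    (a a' : Fin N → ℝ) (ha : a ∈ lam) (ha' : a' ∈ lam) (hne : a ≠ a')
    (Ω : Set (Fin N → ℝ)) (hΩopen : IsOpen Ω) (hΩconn : IsConnected Ω)
    (haΩ : a ∈ Ω) (ha'Ω : a' ∈ Ω) :
    ∃ J : Set (Fin N → ℝ), IsArcFrom J a a' ∧ J ⊆ Ω ∧ J ∩ lam = {a, a'} ∧
      IsSmoothOpenArc (J \ {a, a'}) := by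
  obtain ⟨hint, hsep⟩ := sep_pi N hN lam hclosed hcover
  obtain ⟨c, hc, hcW, hbot, htop⟩ :=
    path_exists lam hclosed hint hsep a a' Ω hΩopen hΩconn.isPreconnected haΩ ha'Ω
  have haW : a ∉ Ω \ lam := fun h => h.2 ha
  have haW' : a' ∉ Ω \ lam := fun h => h.2 ha'
  obtain ⟨Γ, h1, h2, h3, h4, h5, h6⟩ :=
    smooth_curve (by simpa using hN) (Ω \ lam) (hΩopen.sdiff hclosed) a a' haW haW' c hc hcW
      hbot htop
  obtain ⟨J, hJ, hJW, haJ, haJ', hJs⟩ :=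
    arc_of_curve (Ω \ lam) a a' haW haW' hne Γ h1 h2 h3 h4 h5 h6
  have key : ∀ x ∈ J, x = a ∨ x = a' ∨ x ∈ Ω \ lam := by
    intro x hx
    by_cases hxa : x = a
    · exact Or.inl hxa
    by_cases hxa' : x = a'
    · exact Or.inr (Or.inl hxa')
    · exact Or.inr (Or.inr (hJW ⟨hx, by simp [hxa, hxa']⟩))
  refine ⟨J, hJ, ?_, ?_, hJs⟩
  · intro x hx
    rcases key x hx with rfl | rfl | h
    exacts [haΩ, ha'Ω, h.1]
  · ext x
    constructor
    · rintro ⟨hx, hxl⟩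
      rcases key x hx with rfl | rfl | h
      · simp
      · simp
      · exact (h.2 hxl).elim
    · rintro (rfl | rfl)
      exacts [⟨haJ, ha⟩, ⟨haJ', ha'⟩]

end
end

section
/- Let λ be an arc in ℝ², let a and a' be two distinct points of λ, let λ_{a,a'} denote the (closed) subarc of λ with endpoints a and a', and let Ω be an open neighborhood of λ_{a,a'} in ℝ². Then there is an arc J ⊆ Ω with endpoints a and a' such that J ∩ λ = {a, a'} and the open arc J \ {a, a'} is a C^∞-smooth open arc. -/
open Set MvPolynomial Topology MeasureTheory

noncomputable section

namespace ArcAux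
open Filter


/-- `f` admits a continuous logarithm on `K`. -/
def HasLog (K : Set ℂ) (f : ℂ → ℂ) : Prop :=
  ∃ g : ℂ → ℂ, ContinuousOn g K ∧ ∀ z ∈ K, Complex.exp (g z) = f z

lemma HasLog.mono {K L : Set ℂ} {f : ℂ → ℂ} (h : HasLog K f) (hL : L ⊆ K) : HasLog L f := by
  obtain ⟨g, h1, h2⟩ := h
  exact ⟨g, h1.mono hL, fun z hz => h2 z (hL hz)⟩

lemma exists_log_complex {h : ℂ → ℂ} (hc : Continuous h) (h0 : ∀ z, h z ≠ 0) :
    ∃ g : ℂ → ℂ, Continuous g ∧ ∀ z, Complex.exp (g z) = h z := by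
  rcases Complex.isCoveringMapOn_exp.existsUnique_continuousMap_lifts
    (⟨h, hc⟩ : C(ℂ, ℂ)) (a₀ := 0) (Complex.exp_log (h0 0)) (fun x => h0 x) with ⟨f, ⟨-, hf⟩, -⟩
  exact ⟨f, f.continuous, fun z => congrFun hf z⟩

lemma exists_log_real {h : ℝ → ℂ} (hc : Continuous h) (h0 : ∀ z, h z ≠ 0) :
    ∃ g : ℝ → ℂ, Continuous g ∧ ∀ z, Complex.exp (g z) = h z := by
  rcases Complex.isCoveringMapOn_exp.existsUnique_continuousMap_lifts
    (⟨h, hc⟩ : C(ℝ, ℂ)) (a₀ := 0) (Complex.exp_log (h0 0)) (fun x => h0 x) with ⟨f, ⟨-, hf⟩, -⟩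
  exact ⟨f, f.continuous, fun z => congrFun hf z⟩

/-- A continuous function with values in `2πiℤ` on a preconnected set is constant. -/
lemma const_of_exp_eq_one {X : Type*} [TopologicalSpace X] {S : Set X} (hS : IsPreconnected S)
    {k : X → ℂ} (hk : ContinuousOn k S) (h1 : ∀ x ∈ S, Complex.exp (k x) = 1) {x y : X}
    (hx : x ∈ S) (hy : y ∈ S) : k x = k y := by
  have hT : IsDiscrete (range ((↑) : ℤ → ℝ)) := by
    have := Int.isClosedEmbedding_coe_real.isEmbedding
    rw [isDiscrete_iff_discreteTopology]
    exact this.toHomeomorph.symm.isEmbedding.discreteTopology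
  have hpi := Real.pi_pos
  have key := hS.constant_of_mapsTo hT (f := fun x => (k x).im / (2 * Real.pi)) (by fun_prop)
    (by
      intro z hz
      obtain ⟨n, hn⟩ := Complex.exp_eq_one_iff.1 (h1 z hz)
      refine ⟨n, ?_⟩
      simp [hn]) hx hy
  have him : (k x).im = (k y).im := by
    have := key
    field_simp at this
    exact this
  have hre : ∀ z ∈ S, (k z).re = 0 := by
    intro z hz
    obtain ⟨n, hn⟩ := Complex.exp_eq_one_iff.1 (h1 z hz)
    simp [hn]
  exact Complex.ext (by rw [hre x hx, hre y hy]) him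

lemma no_log_circle (x : ℂ) (R : ℝ) (hR : 0 < R) (g : ℂ → ℂ) (hg : Continuous g)
    (h : ∀ z, ‖z - x‖ = R → Complex.exp (g z) = z - x) : False := by
  let c : ℝ → ℂ := fun θ => x + R * Complex.exp (θ * Complex.I)
  have hc : Continuous c := by fun_prop
  let k : ℝ → ℂ := fun θ => g (c θ) - (Real.log R : ℂ) - θ * Complex.I
  have hk : Continuous k := by fun_prop
  have h1 : ∀ θ ∈ (univ : Set ℝ), Complex.exp (k θ) = 1 := by
    intro θ _
    have : Complex.exp (g (c θ)) = R * Complex.exp (θ * Complex.I) := by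
      rw [h]
      · simp [c]
      · simp [c, Complex.norm_exp_ofReal_mul_I, abs_of_pos hR]
    simp only [k, Complex.exp_sub, this]
    rw [← Complex.ofReal_exp, Real.exp_log hR]
    have : (R : ℂ) ≠ 0 := by exact_mod_cast hR.ne'
    have := Complex.exp_ne_zero (θ * Complex.I)
    field_simp
  have := const_of_exp_eq_one isPreconnected_univ hk.continuousOn h1 (mem_univ 0)
    (mem_univ (2 * Real.pi))
  have hcc : c 0 = c (2 * Real.pi) := by
    simp [c, Complex.exp_two_pi_mul_I]
  simp only [k, hcc] at this
  have h2 := congrArg Complex.im this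
  simp at h2
  linarith [Real.pi_pos]

lemma preconnected_outside (R : ℝ) (hR : 0 < R) : IsPreconnected {z : ℂ | R < ‖z‖} := by
  have : {z : ℂ | R < ‖z‖} = Complex.exp '' {z | Real.log R < z.re} := by
    ext z
    constructor
    · intro hz
      have h0 : z ≠ 0 := by
        rintro rfl
        simp at hz
        linarith
      refine ⟨Complex.log z, ?_, Complex.exp_log h0⟩
      simp only [mem_ofPred_eq, Complex.log_re]
      exact Real.log_lt_log hR hz
    · rintro ⟨w, hw, rfl⟩
      simp only [mem_ofPred_eq, Complex.norm_exp] at *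
      exact (Real.log_lt_iff_lt_exp hR).1 hw
  rw [this]
  exact ((convex_halfSpace_re_gt _).isPreconnected).image _ Complex.continuous_exp.continuousOn

lemma frontier_component_subset {E : Type*} [TopologicalSpace E] [LocallyConnectedSpace E]
    {O : Set E} (hO : IsOpen O) (x : E) :
    frontier (connectedComponentIn O x) ⊆ Oᶜ := by
  intro z hz hzO
  have hopen : IsOpen (connectedComponentIn O z) := hO.connectedComponentIn
  have hcl := frontier_subset_closure hz
  obtain ⟨w, hw1, hw2⟩ := mem_closure_iff.1 hcl _ hopen (mem_connectedComponentIn hzO)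
  have e1 := connectedComponentIn_eq hw1
  have e2 := connectedComponentIn_eq hw2
  have : z ∈ connectedComponentIn O x := by
    rw [e2, ← e1]; exact mem_connectedComponentIn hzO
  rw [hO.connectedComponentIn.frontier_eq] at hz
  exact hz.2 this

/-- One half of Borsuk's criterion, with a bounded component. -/
lemma borsuk_aux {K : Set ℂ} (hK : IsCompact K) {x y : ℂ} (hx : x ∉ K)
    (hlog : HasLog K (fun z => (z - x) / (z - y))) (R : ℝ) (hR : 0 < R)
    (hb : ∀ z ∈ connectedComponentIn Kᶜ x, ‖z‖ ≤ R)
    (hyU : y ∉ connectedComponentIn Kᶜ x) (hy : y ∉ K) : False := by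
  classical
  obtain ⟨g, hg, hgl⟩ := hlog
  have hKc : IsOpen Kᶜ := hK.isClosed.isOpen_compl
  set U := connectedComponentIn Kᶜ x with hU
  have hfr : frontier U ⊆ K := by
    have := frontier_component_subset hKc x
    rwa [compl_compl] at this
  obtain ⟨G, hG⟩ := ContinuousMap.exists_restrict_eq hK.isClosed
    (⟨K.domRestrict g, continuousOn_iff_continuous_domRestrict.1 hg⟩ : C(K, ℂ))
  have hG' : ∀ z ∈ K, G z = g z := by
    intro z hz
    have := congrArg (fun f : C(K, ℂ) => f ⟨z, hz⟩) hG
    simpa using this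
  let h : ℂ → ℂ := fun z => if z ∈ U then (z - y) * Complex.exp (G z) else z - x
  have hcont : Continuous h := by
    refine Continuous.if ?_ (by fun_prop) (by fun_prop)
    intro z hz
    have hzK : z ∈ K := hfr hz
    rw [hG' z hzK, hgl z hzK]
    have : z - y ≠ 0 := by
      intro h0
      rw [sub_eq_zero] at h0
      exact hy (h0 ▸ hzK)
    field_simp
  have hxU : x ∈ U := mem_connectedComponentIn hx
  have hne : ∀ z, h z ≠ 0 := by
    intro z
    by_cases hz : z ∈ U
    · simp only [h, hz, if_true]
      refine mul_ne_zero ?_ (Complex.exp_ne_zero _)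
      intro h0
      rw [sub_eq_zero] at h0
      exact hyU (h0 ▸ hz)
    · simp only [h, hz, if_false]
      intro h0
      rw [sub_eq_zero] at h0
      exact hz (h0 ▸ hxU)
  obtain ⟨H, hH, hHe⟩ := exists_log_complex hcont hne
  refine no_log_circle x (R + ‖x‖ + 1) (by positivity) H hH ?_
  intro z hz
  rw [hHe]
  have : z ∉ U := by
    intro hzU
    have h1 := hb z hzU
    have h2 := norm_sub_le z x
    linarith
  simp [h, this]

lemma HasLog.symm {K : Set ℂ} {x y : ℂ} (h : HasLog K (fun z => (z - x) / (z - y))) :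
    HasLog K (fun z => (z - y) / (z - x)) := by
  obtain ⟨g, h1, h2⟩ := h
  refine ⟨fun z => - g z, h1.neg, fun z hz => ?_⟩
  rw [Complex.exp_neg, h2 z hz, inv_div]

lemma borsuk {K : Set ℂ} (hK : IsCompact K) {x y : ℂ} (hx : x ∉ K) (hy : y ∉ K)
    (hlog : HasLog K (fun z => (z - x) / (z - y))) :
    y ∈ connectedComponentIn Kᶜ x := by
  by_contra hcon
  obtain ⟨R, hR, hRK⟩ := hK.isBounded.exists_pos_norm_le
  have hout : {z : ℂ | R < ‖z‖} ⊆ Kᶜ := fun z hz hzK => by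
    have := hRK z hzK
    simp only [mem_ofPred_eq] at hz
    linarith
  have hcon' : x ∉ connectedComponentIn Kᶜ y := by
    intro h
    apply hcon
    rw [← connectedComponentIn_eq h]
    exact mem_connectedComponentIn hy
  by_cases h1 : ∀ z ∈ connectedComponentIn Kᶜ x, ‖z‖ ≤ R
  · exact borsuk_aux hK hx hlog R hR h1 hcon hy
  by_cases h2 : ∀ z ∈ connectedComponentIn Kᶜ y, ‖z‖ ≤ R
  · exact borsuk_aux hK hy hlog.symm R hR h2 hcon' hx
  push Not at h1 h2
  obtain ⟨z, hz, hzR⟩ := h1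
  obtain ⟨w, hw, hwR⟩ := h2
  have := (preconnected_outside R hR).subset_connectedComponentIn (x := z) hzR hout hwR
  apply hcon
  rw [connectedComponentIn_eq hz, connectedComponentIn_eq this, ← connectedComponentIn_eq hw]
  exact mem_connectedComponentIn hy

lemma HasLog.union {A B : Set ℂ} (hA : IsClosed A) (hB : IsClosed B)
    (hAB : IsPreconnected (A ∩ B)) {f : ℂ → ℂ} (h1 : HasLog A f) (h2 : HasLog B f)
    : HasLog (A ∪ B) f := by
  classical
  obtain ⟨g, hg, hge⟩ := h1
  obtain ⟨k, hk, hke⟩ := h2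
  obtain ⟨c, hc1, hc⟩ : ∃ c : ℂ, Complex.exp c = 1 ∧ ∀ z ∈ A ∩ B, g z = k z + c := by
    rcases (A ∩ B).eq_empty_or_nonempty with he | ⟨w, hw⟩
    · exact ⟨0, by simp, by simp [he]⟩
    · have hone : ∀ z ∈ A ∩ B, Complex.exp (g z - k z) = 1 := by
        intro z hz
        rw [Complex.exp_sub, hge z hz.1, ← hke z hz.2, div_self (Complex.exp_ne_zero _)]
      refine ⟨g w - k w, hone w hw, fun z hz => ?_⟩
      have := const_of_exp_eq_one hAB
        ((hg.mono inter_subset_left).sub (hk.mono inter_subset_right)) hone hz hw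
      simp only [Pi.sub_apply] at this
      rw [← this]; ring
  let G : ℂ → ℂ := fun z => if z ∈ A then g z else k z + c
  have eA : EqOn G g A := fun z hz => by simp [G, hz]
  have eB : EqOn G (fun z => k z + c) B := fun z hz => by
    by_cases hzA : z ∈ A
    · simp [G, hzA, hc z ⟨hzA, hz⟩]
    · simp [G, hzA]
  refine ⟨G, ?_, ?_⟩
  · exact ContinuousOn.union_of_isClosed (hg.congr eA) ((hk.add continuousOn_const).congr eB) hA hB
  · rintro z (hz | hz)
    · rw [eA hz, hge z hz]
    · rw [eB hz]
      simp only
      rw [Complex.exp_add, hc1, mul_one, hke z hz]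

/-- Points of a ball disjoint from `K` are not separated, in the logarithmic sense. -/
lemma hasLog_of_ball {K : Set ℂ} {p : ℂ} {δ : ℝ} (hd : ∀ z ∈ K, δ ≤ ‖z - p‖) {x y : ℂ}
    (hx : ‖x - p‖ < δ) (hy : ‖y - p‖ < δ) : HasLog K (fun z => (z - x) / (z - y)) := by
  have hδ : 0 < δ := (norm_nonneg _).trans_lt hx
  have aux : ∀ w : ℂ, ‖w - p‖ < δ → ∀ z ∈ K, (z - w) / (z - p) ∈ Complex.slitPlane := by
    intro w hw z hz
    have hzp : 0 < ‖z - p‖ := hδ.trans_le (hd z hz)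
    have hzp' : z - p ≠ 0 := norm_pos_iff.1 hzp
    have e : (z - w) / (z - p) = 1 - (w - p) / (z - p) := by field_simp; ring
    left
    rw [e]
    have : ‖(w - p) / (z - p)‖ < 1 := by
      rw [norm_div, div_lt_one hzp]
      exact hw.trans_le (hd z hz)
    have h2 := Complex.re_le_norm ((w - p) / (z - p))
    simp only [Complex.sub_re, Complex.one_re]
    linarith
  have hne : ∀ z ∈ K, z - p ≠ 0 := fun z hz => norm_pos_iff.1 (hδ.trans_le (hd z hz))
  refine ⟨fun z => Complex.log ((z - x) / (z - p)) - Complex.log ((z - y) / (z - p)), ?_, ?_⟩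
  · refine ContinuousOn.sub ?_ ?_
    · refine ContinuousOn.clog ?_ (aux x hx)
      exact ContinuousOn.div (by fun_prop) (by fun_prop) hne
    · refine ContinuousOn.clog ?_ (aux y hy)
      exact ContinuousOn.div (by fun_prop) (by fun_prop) hne
  · intro z hz
    have n1 := Complex.slitPlane_ne_zero (aux x hx z hz)
    have n2 := Complex.slitPlane_ne_zero (aux y hy z hz)
    have n3 := hne z hz
    rw [Complex.exp_sub, Complex.exp_log n1, Complex.exp_log n2]
    have : z - y ≠ 0 := by
      intro h; rw [h] at n2; simp at n2
    field_simp

/-- An arc has a continuous inverse parametrization. -/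
lemma exists_inverse {γ : ℝ → ℂ} (hc : ContinuousOn γ (Icc 0 1)) (hi : InjOn γ (Icc 0 1)) :
    ∃ τ : ℂ → ℝ, ContinuousOn τ (γ '' Icc 0 1) ∧ ∀ u ∈ Icc (0:ℝ) 1, τ (γ u) = u := by
  let τ := Function.invFunOn γ (Icc 0 1)
  have hτ : ∀ u ∈ Icc (0:ℝ) 1, τ (γ u) = u := fun u hu =>
    hi.leftInvOn_invFunOn hu
  refine ⟨τ, ?_, hτ⟩
  rw [continuousOn_iff_isClosed]
  intro t ht
  refine ⟨γ '' (Icc 0 1 ∩ t), ?_, ?_⟩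
  · refine IsCompact.isClosed ?_
    exact (isCompact_Icc.inter_right ht).image_of_continuousOn (hc.mono inter_subset_left)
  · ext z
    constructor
    · rintro ⟨h1, u, hu, rfl⟩
      rw [mem_preimage, hτ u hu] at h1
      exact ⟨⟨u, ⟨hu, h1⟩, rfl⟩, ⟨u, hu, rfl⟩⟩
    · rintro ⟨⟨u, ⟨hu, hut⟩, rfl⟩, -⟩
      refine ⟨?_, ⟨u, hu, rfl⟩⟩
      rw [mem_preimage, hτ u hu]; exact hut

lemma hasLog_arc {γ : ℝ → ℂ} (hc : ContinuousOn γ (Icc 0 1)) (hi : InjOn γ (Icc 0 1))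
    {f : ℂ → ℂ} (hf : ContinuousOn f (γ '' Icc 0 1)) (h0 : ∀ z ∈ γ '' Icc 0 1, f z ≠ 0) :
    HasLog (γ '' Icc 0 1) f := by
  obtain ⟨τ, hτ, hτγ⟩ := exists_inverse hc hi
  have h01 : (0:ℝ) ≤ 1 := zero_le_one
  let h : ℝ → ℂ := fun t => f (γ (projIcc 0 1 h01 t))
  have hcont : Continuous h := by
    have h1 : ContinuousOn (f ∘ γ) (Icc 0 1) := hf.comp hc (mapsTo_image _ _)
    exact h1.comp_continuous (continuous_subtype_val.comp continuous_projIcc)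
      (fun t => (projIcc 0 1 h01 t).2)
  obtain ⟨g, hg, hge⟩ := exists_log_real hcont
    (fun t => h0 _ ⟨_, (projIcc 0 1 h01 t).2, rfl⟩)
  refine ⟨fun z => g (τ z), hg.comp_continuousOn hτ, ?_⟩
  rintro z ⟨u, hu, rfl⟩
  simp only [hτγ u hu, hge, h]
  rw [projIcc_of_mem h01 hu]

/-- An arc is not a neighbourhood of any point. -/
lemma arc_no_ball {γ : ℝ → ℂ} (hc : ContinuousOn γ (Icc 0 1)) (hi : InjOn γ (Icc 0 1))
    (p : ℂ) (δ : ℝ) (hδ : 0 < δ) : ∃ z, ‖z - p‖ < δ ∧ z ∉ γ '' Icc 0 1 := by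
  by_contra hcon
  push Not at hcon
  obtain ⟨τ, hτ, hτγ⟩ := exists_inverse hc hi
  have hinj : InjOn τ (γ '' Icc 0 1) := by
    rintro _ ⟨u, hu, rfl⟩ _ ⟨v, hv, rfl⟩ h
    rw [hτγ u hu, hτγ v hv] at h
    rw [h]
  have hmem : ∀ (σ θ : ℝ), |σ| = δ / 2 → p + σ * Complex.exp (θ * Complex.I) ∈ γ '' Icc 0 1 := by
    intro σ θ hσ
    apply hcon
    simp [Complex.norm_exp_ofReal_mul_I, hσ]
    exact hδ
  have hδ2 : |δ / 2| = δ / 2 := abs_of_pos (by linarith)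
  have hδ3 : |-(δ / 2)| = δ / 2 := by rw [abs_neg, hδ2]
  let k : ℝ → ℝ := fun θ => τ (p + (δ / 2 : ℝ) * Complex.exp (θ * Complex.I))
    - τ (p + (-(δ / 2) : ℝ) * Complex.exp (θ * Complex.I))
  have hk : Continuous k := by
    refine Continuous.sub ?_ ?_
    · exact hτ.comp_continuous (by fun_prop) (fun θ => hmem _ θ hδ2)
    · exact hτ.comp_continuous (by fun_prop) (fun θ => hmem _ θ hδ3)
  have hkpi : k Real.pi = - k 0 := by
    simp [k, Complex.exp_pi_mul_I]
  have hzero : ∃ θ, k θ = 0 := by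
    have := mem_range_of_exists_le_of_exists_ge hk (c := 0)
    rcases le_total (k 0) 0 with h | h
    · exact this ⟨0, h⟩ ⟨Real.pi, by rw [hkpi]; linarith⟩
    · exact this ⟨Real.pi, by rw [hkpi]; linarith⟩ ⟨0, h⟩
  obtain ⟨θ, hθ⟩ := hzero
  have := hinj (hmem _ θ hδ2) (hmem _ θ hδ3) (sub_eq_zero.1 hθ)
  have h3 : (δ : ℂ) * Complex.exp (θ * Complex.I) = 0 := by
    push_cast at this
    linear_combination this
  rcases mul_eq_zero.1 h3 with h | h
  · exact hδ.ne' (by exact_mod_cast h)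
  · exact Complex.exp_ne_zero _ h

end ArcAux

namespace ArcAux
open Filter


lemma image_compact {γ : ℝ → ℂ} (hc : ContinuousOn γ (Icc 0 1)) {a b : ℝ} (ha : 0 ≤ a) (hb : b ≤ 1) :
    IsCompact (γ '' Icc a b) :=
  isCompact_Icc.image_of_continuousOn (hc.mono (Icc_subset_Icc ha hb))

/-- An arc does not separate points close to its endpoint, locally. -/
lemma endpoint_local {γ : ℝ → ℂ} (hc : ContinuousOn γ (Icc 0 1)) (hi : InjOn γ (Icc 0 1))
    {d : ℝ} (hd : d ∈ Icc (0:ℝ) 1) {R : ℝ} (hR : 0 < R) :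
    ∃ δ > 0, ∀ x y, ‖x - γ d‖ < δ → ‖y - γ d‖ < δ → x ∉ γ '' Icc 0 d → y ∉ γ '' Icc 0 d →
      y ∈ connectedComponentIn (Metric.ball (γ d) R \ γ '' Icc 0 d) x := by
  obtain ⟨η, hη, hηR⟩ := Metric.continuousOn_iff.1 hc d hd R hR
  have hcomp1 : IsCompact (γ '' Icc 0 d) := image_compact hc le_rfl hd.2
  have hcomp2 : IsCompact (γ '' Icc 0 (d - η / 2)) := image_compact hc le_rfl (by linarith [hd.2])
  have hnot : γ d ∉ γ '' Icc 0 (d - η / 2) := by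
    rintro ⟨u, hu, hud⟩
    have := hi ⟨hu.1, by linarith [hu.2, hd.2]⟩ hd hud
    linarith [hu.2]
  obtain ⟨δ₁, hδ₁, hδ₁b⟩ := Metric.isOpen_iff.1 hcomp2.isClosed.isOpen_compl (γ d) hnot
  refine ⟨min δ₁ R, lt_min hδ₁ hR, ?_⟩
  intro x y hx hy hxA hyA
  set A := γ '' Icc 0 d with hA
  set B := Metric.sphere (γ d) R ∪ γ '' Icc 0 (d - η / 2) with hB
  have hsubA : A ⊆ γ '' Icc 0 1 := image_mono (Icc_subset_Icc le_rfl hd.2)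
  have hBcomp : IsCompact B := (isCompact_sphere _ _).union hcomp2
  have hAB : A ∩ B = γ '' Icc 0 (d - η / 2) := by
    apply Subset.antisymm
    · rintro z ⟨⟨u, hu, rfl⟩, h | h⟩
      · refine ⟨u, ⟨hu.1, ?_⟩, rfl⟩
        by_contra hlt
        push Not at hlt
        have := hηR u ⟨hu.1, hu.2.trans hd.2⟩ (by
          rw [Real.dist_eq, abs_lt]; constructor <;> linarith [hu.2])
        rw [Metric.mem_sphere] at h
        linarith
      · exact h
    · intro z hz
      exact ⟨image_mono (Icc_subset_Icc le_rfl (by linarith)) hz, Or.inr hz⟩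
  have hpre : IsPreconnected (A ∩ B) := by
    rw [hAB]
    exact isPreconnected_Icc.image _ (hc.mono (Icc_subset_Icc le_rfl (by linarith [hd.2])))
  have hBfar : ∀ z ∈ B, min δ₁ R ≤ ‖z - γ d‖ := by
    rintro z (hz | hz)
    · rw [mem_sphere_iff_norm] at hz
      rw [hz]; exact min_le_right _ _
    · by_contra hlt
      push Not at hlt
      exact hδ₁b (by rw [mem_ball_iff_norm]; exact hlt.trans_le (min_le_left _ _)) hz
  have hlogB : HasLog B (fun z => (z - x) / (z - y)) := hasLog_of_ball hBfar hx hy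
  have hlogA : HasLog A (fun z => (z - x) / (z - y)) := by
    have hdc := hcomp1
    -- replace the arc by a reparametrised one
    have hp : ∀ u : ℝ, u ∈ Icc (0:ℝ) 1 → d * u ∈ Icc 0 d := fun u hu =>
      ⟨mul_nonneg hd.1 hu.1, mul_le_of_le_one_right hd.1 hu.2⟩
    rcases hd.1.eq_or_lt with h0 | h0
    · -- degenerate arc
      have : A = {γ d} := by rw [hA, ← h0]; simp
      rw [this]
      have hne : (γ d - x) / (γ d - y) ≠ 0 := by
        rw [this] at hxA hyA
        refine div_ne_zero ?_ ?_
        · rw [sub_ne_zero]; exact fun h => hxA h.symm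
        · rw [sub_ne_zero]; exact fun h => hyA h.symm
      exact ⟨fun _ => Complex.log ((γ d - x) / (γ d - y)), continuousOn_const, by
        rintro z rfl; exact Complex.exp_log hne⟩
    · have him : A = (fun u => γ (d * u)) '' Icc 0 1 := by
        apply Subset.antisymm
        · rintro _ ⟨u, hu, rfl⟩
          refine ⟨u / d, ⟨div_nonneg hu.1 hd.1, (div_le_one h0).2 hu.2⟩, ?_⟩
          simp only
          congr 1; field_simp
        · rintro _ ⟨u, hu, rfl⟩
          exact ⟨d * u, hp u hu, rfl⟩
      have hm : ∀ u ∈ Icc (0:ℝ) 1, d * u ∈ Icc (0:ℝ) 1 := fun u hu =>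
        ⟨(hp u hu).1, (hp u hu).2.trans hd.2⟩
      have key := hasLog_arc (γ := fun u => γ (d * u)) (f := fun z => (z - x) / (z - y))
        (hc.comp (by fun_prop) hm)
        (by
          intro u hu v hv huv
          have := hi (hm u hu) (hm v hv) huv
          exact mul_left_cancel₀ h0.ne' this)
      rw [← him] at key
      apply key
      · refine ContinuousOn.div (by fun_prop) (by fun_prop) ?_
        intro z hz h
        exact hyA (by rw [sub_eq_zero] at h; rwa [← h])
      · intro z hz
        refine div_ne_zero ?_ ?_
        · intro h; exact hxA (by rw [sub_eq_zero] at h; rwa [← h])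
        · intro h; exact hyA (by rw [sub_eq_zero] at h; rwa [← h])
  have hlog := HasLog.union hcomp1.isClosed hBcomp.isClosed hpre hlogA hlogB
  have hnB : ∀ w, ‖w - γ d‖ < min δ₁ R → w ∉ B := fun w hw hwB => by
    have := hBfar w hwB
    linarith
  have hxK : x ∉ A ∪ B := fun h => h.elim hxA (hnB x hx)
  have hyK : y ∉ A ∪ B := fun h => h.elim hyA (hnB y hy)
  have hcon := borsuk (hcomp1.union hBcomp) hxK hyK hlog
  set C := connectedComponentIn (A ∪ B)ᶜ x with hC
  have hCpre : IsPreconnected C := isPreconnected_connectedComponentIn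
  have hxC : x ∈ C := mem_connectedComponentIn hxK
  have hCsub : C ⊆ (A ∪ B)ᶜ := connectedComponentIn_subset _ _
  refine hCpre.subset_connectedComponentIn hxC ?_ hcon
  intro z hz
  refine ⟨?_, fun h => hCsub hz (Or.inl h)⟩
  by_contra hzb
  rw [Metric.mem_ball, not_lt] at hzb
  have hxb : dist x (γ d) ≤ R := by
    rw [dist_eq_norm]; exact (hx.trans_le (min_le_right _ _)).le
  obtain ⟨w, hw, hwe⟩ := hCpre.intermediate_value hxC hz
    (f := fun z => dist z (γ d)) (by fun_prop) ⟨hxb, hzb⟩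
  exact hCsub hw (Or.inr (Or.inl hwe))

/-- A connected set meeting `W` and the complement of its closure meets the frontier. -/
lemma meets_frontier {E : Type*} [TopologicalSpace E] {C W : Set E} (hC : IsPreconnected C)
    (hW : IsOpen W) {x y : E} (hx : x ∈ C) (hxW : x ∈ W) (hy : y ∈ C) (hyW : y ∉ closure W) :
    ∃ z ∈ C, z ∈ frontier W := by
  by_contra hcon
  push Not at hcon
  obtain ⟨z, hz, hz1, hz2⟩ := hC W (closure W)ᶜ hW isClosed_closure.isOpen_compl
    (fun z hz => by
      by_contra h
      simp only [mem_union, mem_compl_iff, not_or, not_not] at h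
      exact hcon z hz (by rw [hW.frontier_eq]; exact ⟨h.2, h.1⟩))
    ⟨x, hx, hxW⟩ ⟨y, hy, hyW⟩
  exact hz2 (subset_closure hz1)

lemma push_forward {γ : ℝ → ℂ} (hc : ContinuousOn γ (Icc 0 1)) (hi : InjOn γ (Icc 0 1))
    {U : Set ℂ} (hU : IsOpen U) {x₀ : ℂ} {u v : ℝ} (hu : 0 ≤ u) (huv : u ≤ v) (hv : v ≤ 1)
    (hsub : γ '' Icc u v ⊆ U)
    (hcl : γ u ∈ closure (connectedComponentIn (U \ γ '' Icc 0 1) x₀)) :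
    γ v ∈ closure (connectedComponentIn (U \ γ '' Icc 0 1) x₀) := by
  have hlam : IsCompact (γ '' Icc 0 1) := image_compact hc le_rfl le_rfl
  have hO : IsOpen (U \ γ '' Icc 0 1) := hU.sdiff hlam.isClosed
  set W := connectedComponentIn (U \ γ '' Icc 0 1) x₀ with hW
  have hWo : IsOpen W := hO.connectedComponentIn
  have hWsub : W ⊆ U \ γ '' Icc 0 1 := connectedComponentIn_subset _ _
  have hfr : frontier W ⊆ (U \ γ '' Icc 0 1)ᶜ := frontier_component_subset hO x₀
  have hIcc : Icc u v ⊆ Icc 0 1 := Icc_subset_Icc hu hv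
  have key : Icc u v ⊆ {w | γ w ∈ closure W} := by
    refine IsClosed.Icc_subset_of_forall_exists_gt ?_ hcl ?_
    · rw [inter_comm]
      exact (hc.mono hIcc).preimage_isClosed_of_isClosed isClosed_Icc isClosed_closure
    · rintro d ⟨hd, hdI⟩ v' hv'
      by_contra hempty
      rw [not_nonempty_iff_eq_empty] at hempty
      set v₁ := min v v' with hv₁
      have hdv₁ : d < v₁ := lt_min hdI.2 hv'
      have hnone : ∀ w, d < w → w ≤ v₁ → γ w ∉ closure W := by
        intro w h1 h2 h3
        have : w ∈ {w | γ w ∈ closure W} ∩ Ioc d v' := ⟨h3, h1, h2.trans (min_le_right _ _)⟩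
        rw [hempty] at this
        exact this
      have hd01 : d ∈ Icc (0:ℝ) 1 := hIcc ⟨hdI.1, hdI.2.le⟩
      have hv₁1 : v₁ ≤ 1 := (min_le_left _ _).trans hv
      -- a ball around γ d in U missing γ [v₁, 1]
      have hopen : IsOpen (U \ γ '' Icc v₁ 1) :=
        hU.sdiff (image_compact hc (by linarith [hd01.1]) le_rfl).isClosed
      have hmem : γ d ∈ U \ γ '' Icc v₁ 1 := by
        refine ⟨hsub ⟨d, ⟨hdI.1, hdI.2.le⟩, rfl⟩, ?_⟩
        rintro ⟨w, hw, hwd⟩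
        have := hi ⟨by linarith [hd01.1, hw.1], hw.2⟩ hd01 hwd
        linarith [hw.1]
      obtain ⟨R, hR, hRsub⟩ := Metric.isOpen_iff.1 hopen _ hmem
      obtain ⟨δ, hδ, hδc⟩ := endpoint_local hc hi hd01 hR
      -- point of W near γ d
      obtain ⟨x, hxW, hxd⟩ := Metric.mem_closure_iff.1 hd δ hδ
      obtain ⟨η, hη, hηδ⟩ := Metric.continuousOn_iff.1 hc d hd01 δ hδ
      set w := min v₁ (d + η / 2) with hw
      have hdw : d < w := lt_min hdv₁ (by linarith)
      have hwv : w ≤ v₁ := min_le_left _ _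
      have hw01 : w ∈ Icc (0:ℝ) 1 := ⟨by linarith [hd01.1], hwv.trans hv₁1⟩
      have hwd : dist (γ w) (γ d) < δ := by
        apply hηδ w hw01
        rw [Real.dist_eq, abs_lt]
        have : w ≤ d + η / 2 := min_le_right _ _
        constructor <;> linarith
      have hxnot : x ∉ γ '' Icc 0 d := fun h =>
        (hWsub hxW).2 (image_mono (Icc_subset_Icc le_rfl hd01.2) h)
      have hwnot : γ w ∉ γ '' Icc 0 d := by
        rintro ⟨w', hw', he⟩
        have := hi ⟨hw'.1, hw'.2.trans hd01.2⟩ hw01 he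
        linarith [hw'.2]
      have hcomp := hδc x (γ w) (by rw [← dist_eq_norm, dist_comm]; exact hxd)
        (by rw [← dist_eq_norm]; exact hwd) hxnot hwnot
      have hne := connectedComponentIn_nonempty_iff.1 ⟨_, hcomp⟩
      obtain ⟨z, hzC, hzf⟩ := meets_frontier isPreconnected_connectedComponentIn hWo
        (mem_connectedComponentIn hne) hxW hcomp (hnone w hdw hwv)
      have hz := connectedComponentIn_subset _ _ hzC
      have hzU := hRsub hz.1
      have := hfr hzf
      rw [mem_compl_iff, Set.mem_sdiff, not_and, not_not] at this
      obtain ⟨q, hq, rfl⟩ := this hzU.1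
      rcases le_or_gt q d with h | h
      · exact hz.2 ⟨q, ⟨hq.1, h⟩, rfl⟩
      rcases le_or_gt q v₁ with h' | h'
      · exact hnone q h h' (frontier_subset_closure hzf)
      · exact hzU.2 ⟨q, ⟨h'.le, hq.2⟩, rfl⟩
  exact key ⟨huv, le_rfl⟩

lemma image_reverse (γ : ℝ → ℂ) (a b : ℝ) :
    (fun u => γ (1 - u)) '' Icc a b = γ '' Icc (1 - b) (1 - a) := by
  apply Subset.antisymm
  · rintro _ ⟨u, hu, rfl⟩
    exact ⟨1 - u, ⟨by linarith [hu.2], by linarith [hu.1]⟩, rfl⟩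
  · rintro _ ⟨u, hu, rfl⟩
    exact ⟨1 - u, ⟨by linarith [hu.2], by linarith [hu.1]⟩, by simp⟩

lemma push_backward {γ : ℝ → ℂ} (hc : ContinuousOn γ (Icc 0 1)) (hi : InjOn γ (Icc 0 1))
    {U : Set ℂ} (hU : IsOpen U) {x₀ : ℂ} {u v : ℝ} (hu : 0 ≤ u) (huv : u ≤ v) (hv : v ≤ 1)
    (hsub : γ '' Icc u v ⊆ U)
    (hcl : γ v ∈ closure (connectedComponentIn (U \ γ '' Icc 0 1) x₀)) :
    γ u ∈ closure (connectedComponentIn (U \ γ '' Icc 0 1) x₀) := by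
  have hm : MapsTo (fun u : ℝ => 1 - u) (Icc 0 1) (Icc 0 1) := fun u hu =>
    ⟨by linarith [hu.2], by linarith [hu.1]⟩
  have := push_forward (γ := fun u => γ (1 - u)) (hc.comp (by fun_prop) hm)
    (fun a ha b hb hab => by
      have := hi (hm ha) (hm hb) hab
      linarith) hU (x₀ := x₀) (u := 1 - v) (v := 1 - u) (by linarith) (by linarith) (by linarith)
    (by rw [image_reverse]; simpa using hsub)
  rw [image_reverse] at this
  simp only [sub_sub_cancel, sub_self, sub_zero] at this
  exact this hcl

/-- Local accessibility: points near `γ c` lie in local components having `γ c` in the closure. -/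
lemma local_access {γ : ℝ → ℂ} (hc : ContinuousOn γ (Icc 0 1)) (hi : InjOn γ (Icc 0 1))
    {U : Set ℂ} (hU : IsOpen U) {c : ℝ} (hc01 : c ∈ Icc (0:ℝ) 1) (hcU : γ c ∈ U) :
    ∃ δ > 0, ∀ x, dist x (γ c) < δ → x ∉ γ '' Icc 0 1 →
      γ c ∈ closure (connectedComponentIn (U \ γ '' Icc 0 1) x) := by
  have hlam : IsCompact (γ '' Icc 0 1) := image_compact hc le_rfl le_rfl
  obtain ⟨r, hr, hrU⟩ := Metric.isOpen_iff.1 hU _ hcU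
  obtain ⟨η, hη, hηr⟩ := Metric.continuousOn_iff.1 hc c hc01 r hr
  obtain ⟨τ, hτ, hτγ⟩ := exists_inverse hc hi
  obtain ⟨δ, hδ, hδη⟩ := Metric.continuousOn_iff.1 hτ (γ c) ⟨c, hc01, rfl⟩ η hη
  refine ⟨min (δ / 2) (r / 2), by positivity, ?_⟩
  intro x hx hxl
  have hx1 : dist x (γ c) < δ / 2 := hx.trans_le (min_le_left _ _)
  have hx2 : dist x (γ c) < r / 2 := hx.trans_le (min_le_right _ _)
  -- nearest point
  obtain ⟨_, ⟨u, hu, rfl⟩, humin⟩ := hlam.exists_isMinOn ⟨γ c, c, hc01, rfl⟩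
    (f := fun z => dist x z) (by fun_prop)
  have hmin : ∀ v ∈ Icc (0:ℝ) 1, dist x (γ u) ≤ dist x (γ v) := fun v hv => humin ⟨v, hv, rfl⟩
  have hxu := hmin c hc01
  have huc : dist (γ u) (γ c) < δ := by
    have := dist_triangle_left (γ u) (γ c) x
    linarith
  have huη : dist u c < η := by
    have := hδη (γ u) ⟨u, hu, rfl⟩ huc
    rwa [hτγ u hu, hτγ c hc01] at this
  have hxpos : 0 < dist x (γ u) := dist_pos.2 (fun h => hxl (h ▸ ⟨u, hu, rfl⟩))
  -- the ball around x
  have hball : Metric.ball x (dist x (γ u)) ⊆ U \ γ '' Icc 0 1 := by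
    intro z hz
    rw [Metric.mem_ball] at hz
    refine ⟨hrU ?_, ?_⟩
    · rw [Metric.mem_ball]
      have := dist_triangle z x (γ c)
      linarith
    · rintro ⟨v, hv, rfl⟩
      have := hmin v hv
      rw [dist_comm] at hz
      linarith
  have hsubc : Metric.ball x (dist x (γ u)) ⊆ connectedComponentIn (U \ γ '' Icc 0 1) x :=
    (convex_ball _ _).isPreconnected.subset_connectedComponentIn (Metric.mem_ball_self hxpos) hball
  have hucl : γ u ∈ closure (connectedComponentIn (U \ γ '' Icc 0 1) x) := by
    apply closure_mono hsubc
    rw [closure_ball _ hxpos.ne', Metric.mem_closedBall, dist_comm]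
  have himg : ∀ a b : ℝ, a ∈ Icc (0:ℝ) 1 → b ∈ Icc (0:ℝ) 1 → dist a c < η → dist b c < η →
      γ '' Icc a b ⊆ U := by
    rintro a b ha hb hac hbc _ ⟨w, hw, rfl⟩
    apply hrU
    rw [Metric.mem_ball]
    apply hηr w ⟨ha.1.trans hw.1, hw.2.trans hb.2⟩
    rw [Real.dist_eq, abs_lt] at *
    constructor <;> linarith [hw.1, hw.2, hac.1, hbc.2]
  rcases le_total u c with h | h
  · exact push_forward hc hi hU hu.1 h hc01.2 (himg u c hu hc01 huη (by simpa using hη)) hucl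
  · exact push_backward hc hi hU hc01.1 h hu.2 (himg c u hc01 hu (by simpa using hη) huη) hucl

/-- A sequence of points converging to `γ c`, consecutive ones joined close to `γ c`. -/
lemma exists_seq {γ : ℝ → ℂ} (hc : ContinuousOn γ (Icc 0 1)) (hi : InjOn γ (Icc 0 1))
    {U : Set ℂ} (hU : IsOpen U) {c : ℝ} (hc01 : c ∈ Icc (0:ℝ) 1) (hcU : γ c ∈ U)
    {w : ℂ} (hw : γ c ∈ closure (connectedComponentIn (U \ γ '' Icc 0 1) w)) :
    ∃ (x : ℕ → ℂ) (V : ℕ → Set ℂ), x 0 = w ∧ (∀ n, V n ⊆ U \ γ '' Icc 0 1) ∧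
      (∀ n, IsOpen (V n)) ∧
      (∀ n, V (n + 1) ⊆ Metric.ball (γ c) (1 / (n + 1))) ∧ (∀ n, JoinedIn (V n) (x n) (x (n + 1))) := by
  have hlam : IsCompact (γ '' Icc 0 1) := image_compact hc le_rfl le_rfl
  let V : ℕ → Set ℂ := fun n => match n with
    | 0 => U
    | n + 1 => U ∩ Metric.ball (γ c) (1 / (n + 1))
  have hVo : ∀ n, IsOpen (V n) := by
    rintro (_ | n)
    · exact hU
    · exact hU.inter Metric.isOpen_ball
  have hVc : ∀ n, γ c ∈ V n := by
    rintro (_ | n)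
    · exact hcU
    · exact ⟨hcU, Metric.mem_ball_self (by positivity)⟩
  have hVU : ∀ n, V n ⊆ U := by
    rintro (_ | n)
    · exact Subset.rfl
    · exact inter_subset_left
  let P : ℕ → ℂ → Prop := fun n x => γ c ∈ closure (connectedComponentIn (V n \ γ '' Icc 0 1) x)
  have step : ∀ n x, P n x → ∃ y, P (n + 1) y ∧ JoinedIn (V n \ γ '' Icc 0 1) x y := by
    intro n x hx
    obtain ⟨δ, hδ, hδc⟩ := local_access hc hi (hVo (n + 1)) hc01 (hVc (n + 1))
    obtain ⟨y, hy, hyd⟩ := Metric.mem_closure_iff.1 hx δ hδ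
    have hyV := connectedComponentIn_subset _ _ hy
    refine ⟨y, hδc y (by rw [dist_comm]; exact hyd) hyV.2, ?_⟩
    have hO : IsOpen (V n \ γ '' Icc 0 1) := (hVo n).sdiff hlam.isClosed
    have hxV := connectedComponentIn_nonempty_iff.1 ⟨_, hy⟩
    have hpc : IsPathConnected (connectedComponentIn (V n \ γ '' Icc 0 1) x) :=
      (hO.connectedComponentIn.isConnected_iff_isPathConnected).1
        (isConnected_connectedComponentIn_iff.2 hxV)
    exact (hpc.joinedIn x (mem_connectedComponentIn hxV) y hy).mono (connectedComponentIn_subset _ _)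
  choose! F hF1 hF2 using step
  let x : ℕ → ℂ := fun n => Nat.rec w (fun n x => F n x) n
  have hx : ∀ n, P n (x n) := by
    intro n
    induction n with
    | zero => exact hw
    | succ n ih => exact hF1 n _ ih
  refine ⟨x, fun n => V n \ γ '' Icc 0 1, rfl, fun n => sdiff_subset_sdiff_left (hVU n),
    fun n => (hVo n).sdiff hlam.isClosed,
    fun n => sdiff_subset.trans inter_subset_right, fun n => hF2 n _ (hx n)⟩

end ArcAux

namespace ArcAux
open Filter


/-- A finite chain of balls along a path. -/
lemma ball_chain {V : Set ℂ} (hV : IsOpen V) {x y : ℂ} (h : JoinedIn V x y) :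
    ∃ (M : ℕ) (B : ℕ → Set ℂ), (∀ k, IsOpen (B k)) ∧ (∀ k, Convex ℝ (B k)) ∧
      (∀ k, closure (B k) ⊆ V) ∧ x ∈ B 0 ∧ y ∈ B M ∧ ∀ k < M, (B k ∩ B (k + 1)).Nonempty := by
  obtain ⟨c, hcV⟩ := h
  have hcomp : IsCompact (range c) := isCompact_range c.continuous
  obtain ⟨ε, hε, hεV⟩ := hcomp.exists_cthickening_subset_open hV (by
    rintro _ ⟨t, rfl⟩; exact hcV t)
  have huc := CompactSpace.uniformContinuous_of_continuous c.continuous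
  obtain ⟨δ, hδ, hδε⟩ := Metric.uniformContinuous_iff.1 huc ε hε
  obtain ⟨N, hN⟩ := exists_nat_one_div_lt hδ
  let t : ℕ → unitInterval := fun k => projIcc 0 1 zero_le_one ((k : ℝ) / (N + 1))
  have hNpos : (0:ℝ) < N + 1 := by positivity
  refine ⟨N + 1, fun k => Metric.ball (c (t k)) ε, fun k => Metric.isOpen_ball,
    fun k => convex_ball _ _, fun k => ?_, ?_, ?_, ?_⟩
  · exact Metric.closure_ball_subset_closedBall.trans
      ((Metric.closedBall_subset_cthickening (mem_range_self _) _).trans hεV)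
  · have : t 0 = 0 := by
      apply Subtype.ext
      simp [t, projIcc]
    simp only [this, c.source]
    exact Metric.mem_ball_self hε
  · have : t (N + 1) = 1 := by
      apply Subtype.ext
      have : ((N : ℝ) + 1) / (N + 1) = 1 := div_self hNpos.ne'
      simp [t, projIcc, this]
    simp only [this, c.target]
    exact Metric.mem_ball_self hε
  · intro k hk
    refine ⟨c (t (k + 1)), ?_, Metric.mem_ball_self hε⟩
    rw [Metric.mem_ball]
    apply hδε
    rw [Subtype.dist_eq, Real.dist_eq]
    have h1 : ∀ j : ℕ, j ≤ N + 1 → (t j : ℝ) = j / (N + 1) := by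
      intro j hj
      have : ((j : ℝ) / (N + 1)) ∈ Icc (0:ℝ) 1 :=
        ⟨by positivity, (div_le_one hNpos).2 (by exact_mod_cast hj)⟩
      simp only [t]
      rw [projIcc_of_mem _ this]
    rw [h1 _ (by omega), h1 _ (by omega)]
    have : ((k + 1 : ℕ) : ℝ) / (N + 1) - (k : ℝ) / (N + 1) = 1 / (N + 1) := by
      push_cast; field_simp; ring
    rw [this, abs_of_pos (by positivity)]
    exact hN

/-- Ordered family of convex open sets in `O` running to `p`. -/
structure Family (I : Type) [LinearOrder I] (O : Set ℂ) (p : ℂ) (B : I → Set ℂ) : Prop where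
  isOpen : ∀ i, IsOpen (B i)
  convex : ∀ i, Convex ℝ (B i)
  sub : ∀ i, closure (B i) ⊆ O
  fin : ∀ r > 0, {i | ¬ B i ⊆ Metric.ball p r}.Finite
  next : ∀ i, ∃ j, i < j ∧ (B i ∩ B j).Nonempty

lemma exists_family {O : Set ℂ} {p w : ℂ} (x : ℕ → ℂ) (V : ℕ → Set ℂ) (h0 : x 0 = w)
    (hVO : ∀ n, V n ⊆ O) (hVo : ∀ n, IsOpen (V n))
    (hVb : ∀ n, V (n + 1) ⊆ Metric.ball p (1 / (n + 1)))
    (hj : ∀ n, JoinedIn (V n) (x n) (x (n + 1))) :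
    ∃ (I : Type) (_ : LinearOrder I) (B : I → Set ℂ) (i₀ : I), Family I O p B ∧ w ∈ B i₀ := by
  have := fun n => ball_chain (hVo n) (hj n)
  choose M B hBo hBc hBV hB0 hBM hBn using this
  let I := Σₗ n, Fin (M n + 1)
  let B' : I → Set ℂ := fun i => B (ofLex i).1 (ofLex i).2
  refine ⟨I, inferInstance, B', toLex ⟨0, 0⟩, ⟨?_, ?_, ?_, ?_, ?_⟩, ?_⟩
  · exact fun i => hBo _ _
  · exact fun i => hBc _ _
  · exact fun i => (hBV _ _).trans (hVO _)
  · intro r hr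
    obtain ⟨N, hN⟩ := exists_nat_one_div_lt hr
    have hfin := ((Finset.range (N + 1)).sigma
      (fun n => (Finset.univ : Finset (Fin (M n + 1))))).finite_toSet
    refine (hfin.preimage (f := (ofLex : I → _)) ofLex.injective.injOn).subset ?_
    intro i hi
    rw [mem_preimage, Finset.mem_coe, Finset.mem_sigma]
    refine ⟨?_, Finset.mem_univ _⟩
    by_contra hle
    rw [Finset.mem_range, not_lt] at hle
    apply hi
    obtain ⟨m, hm⟩ := Nat.exists_eq_add_of_le hle
    have hb : V (ofLex i).1 ⊆ Metric.ball p r := by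
      rw [show (ofLex i).1 = (N + m) + 1 by omega]
      refine (hVb _).trans (Metric.ball_subset_ball ?_)
      refine le_trans ?_ hN.le
      apply one_div_le_one_div_of_le (by positivity)
      push_cast
      have : (0:ℝ) ≤ m := Nat.cast_nonneg m
      linarith
    exact subset_closure.trans ((hBV _ _).trans hb)
  · intro i
    obtain ⟨⟨n, k⟩, rfl⟩ := toLex.surjective i
    rcases Nat.lt_or_ge (k : ℕ) (M n) with hk | hk
    · refine ⟨toLex ⟨n, ⟨k + 1, by omega⟩⟩, ?_, ?_⟩
      · apply Sigma.Lex.right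
        rw [Fin.lt_def]; simp
      · exact hBn n k hk
    · refine ⟨toLex ⟨n + 1, 0⟩, ?_, ?_⟩
      · apply Sigma.Lex.left
        exact Nat.lt_succ_self n
      · refine ⟨x (n + 1), ?_, ?_⟩
        · have : (k : ℕ) = M n := by omega
          simp only [B', ofLex_toLex, this]
          exact hBM n
        · simpa [B'] using hB0 (n + 1)
  · simpa [B', h0] using hB0 0

lemma Family.finite_meets {I : Type} [LinearOrder I] {O : Set ℂ} {p : ℂ} {B : I → Set ℂ}
    (h : Family I O p B) {S : Set ℂ} (hS : p ∉ closure S) : {j | (S ∩ B j).Nonempty}.Finite := by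
  obtain ⟨r, hr, hrS⟩ := Metric.isOpen_iff.1 isClosed_closure.isOpen_compl p hS
  refine (h.fin r hr).subset ?_
  rintro j ⟨z, hzS, hzB⟩ hsub
  exact hrS (hsub hzB) (subset_closure hzS)

lemma Family.greedy {I : Type} [LinearOrder I] {O : Set ℂ} {p : ℂ} {B : I → Set ℂ}
    (h : Family I O p B) (hp : p ∉ O) (i₀ : I) :
    ∃ n : ℕ → I, n 0 = i₀ ∧ StrictMono n ∧ (∀ k, (B (n k) ∩ B (n (k + 1))).Nonempty) ∧
      (∀ k j, k + 2 ≤ j → ¬ (B (n k) ∩ B (n j)).Nonempty) ∧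
      ∀ r > 0, ∀ᶠ k in atTop, B (n k) ⊆ Metric.ball p r := by
  have step : ∀ i, ∃ j, i < j ∧ (B i ∩ B j).Nonempty ∧ ∀ l, (B i ∩ B l).Nonempty → l ≤ j := by
    intro i
    have hf := h.finite_meets (S := B i) (fun hc => hp (h.sub i hc))
    obtain ⟨j, hij, hj⟩ := h.next i
    obtain ⟨m, hm, hmax⟩ := exists_max_image _ id hf ⟨j, hj⟩
    exact ⟨m, hij.trans_le (hmax j hj), hm, fun l hl => hmax l hl⟩
  choose nx h1 h2 h3 using step
  let n : ℕ → I := fun k => nx^[k] i₀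
  have hn : ∀ k, n (k + 1) = nx (n k) := fun k => Function.iterate_succ_apply' nx k i₀
  have hmono : StrictMono n := strictMono_nat_of_lt_succ (fun k => by rw [hn]; exact h1 _)
  refine ⟨n, rfl, hmono, fun k => by rw [hn]; exact h2 _, ?_, ?_⟩
  · intro k j hkj hne
    have := h3 _ _ hne
    rw [← hn] at this
    exact absurd (hmono (show k + 1 < j by omega)) (not_lt.2 this)
  · intro r hr
    have := hmono.injective.tendsto_cofinite
    rw [Nat.cofinite_eq_atTop] at this
    have hev : ∀ᶠ i in cofinite, B i ⊆ Metric.ball p r := h.fin r hr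
    exact this.eventually hev

lemma exists_chain {I I' : Type} [LinearOrder I] [LinearOrder I'] {O : Set ℂ} {p q w : ℂ}
    {B : I → Set ℂ} {B' : I' → Set ℂ} (h : Family I O p B) (h' : Family I' O q B')
    (hp : p ∉ O) (hq : q ∉ O) (hpq : p ≠ q) (i₀ : I) (i₀' : I') (hw : w ∈ B i₀) (hw' : w ∈ B' i₀') :
    ∃ C : ℤ → Set ℂ, (∀ i, IsOpen (C i)) ∧ (∀ i, Convex ℝ (C i)) ∧ (∀ i, C i ⊆ O) ∧
      (∀ i, (C i ∩ C (i + 1)).Nonempty) ∧ (∀ i j, i + 2 ≤ j → ¬ (C i ∩ C j).Nonempty) ∧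
      (∀ r > 0, ∀ᶠ i in atTop, C i ⊆ Metric.ball q r) ∧
      (∀ r > 0, ∀ᶠ i in atBot, C i ⊆ Metric.ball p r) := by
  obtain ⟨n, hn0, hnm, hn1, hn2, hn3⟩ := h'.greedy hq i₀'
  set S := ⋃ k, B' (n k) with hS
  have hpS : p ∉ closure S := by
    have hd : 0 < dist p q := dist_pos.2 hpq
    obtain ⟨N, hN⟩ := eventually_atTop.1 (hn3 (dist p q / 2) (by linarith))
    have hsub : S ⊆ (⋃ k ∈ Iio N, B' (n k)) ∪ Metric.ball q (dist p q / 2) := by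
      intro z hz
      obtain ⟨k, hk⟩ := mem_iUnion.1 hz
      rcases lt_or_ge k N with hkN | hkN
      · exact Or.inl (mem_biUnion hkN hk)
      · exact Or.inr (hN k hkN hk)
    intro hc
    have := closure_mono hsub hc
    rw [closure_union, (finite_Iio N).closure_biUnion] at this
    rcases this with h1 | h1
    · simp only [mem_iUnion] at h1
      obtain ⟨k, -, hk⟩ := h1
      exact hp (h'.sub _ hk)
    · have := Metric.closure_ball_subset_closedBall h1
      rw [Metric.mem_closedBall] at this
      linarith
  have hfin := h.finite_meets hpS
  obtain ⟨m, hm, hmax⟩ := exists_max_image _ id hfin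
    ⟨i₀, w, mem_iUnion.2 ⟨0, by rw [hn0]; exact hw'⟩, hw⟩
  obtain ⟨l, hl0, hlm, hl1, hl2, hl3⟩ := h.greedy hp m
  have hfin2 : {k : ℕ | (B m ∩ B' (n k)).Nonempty}.Finite :=
    Set.Finite.preimage (f := n) hnm.injective.injOn
      (h'.finite_meets (S := B m) (fun hc => hq (h.sub m hc)))
  obtain ⟨K, hK, hKmax⟩ := exists_max_image _ id hfin2 (by
    obtain ⟨z, hzS, hzm⟩ := hm
    obtain ⟨k, hk⟩ := mem_iUnion.1 hzS
    exact ⟨k, z, hzm, hk⟩)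
  let C : ℤ → Set ℂ := fun i => match i with
    | Int.ofNat i => B' (n (K + i))
    | Int.negSucc j => B (l j)
  have cross : ∀ (j i : ℕ), ¬ (j = 0 ∧ i = 0) → ¬ (B (l j) ∩ B' (n (K + i))).Nonempty := by
    intro j i hji hne
    rcases Nat.eq_zero_or_pos j with rfl | hj
    · rw [hl0] at hne
      have := hKmax _ hne
      simp only [id] at this
      omega
    · obtain ⟨z, hz1, hz2⟩ := hne
      have := hmax (l j) ⟨z, mem_iUnion.2 ⟨_, hz2⟩, hz1⟩
      have h4 := hlm hj
      rw [hl0] at h4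
      exact absurd h4 (not_lt.2 this)
  refine ⟨C, ?_, ?_, ?_, ?_, ?_, ?_, ?_⟩
  · rintro (i | j)
    · exact h'.isOpen _
    · exact h.isOpen _
  · rintro (i | j)
    · exact h'.convex _
    · exact h.convex _
  · rintro (i | j)
    · exact subset_closure.trans (h'.sub _)
    · exact subset_closure.trans (h.sub _)
  · rintro (i | j)
    · exact hn1 (K + i)
    · rcases j with _ | j
      · show (B (l 0) ∩ B' (n (K + 0))).Nonempty
        rw [hl0]; exact hK
      · show (B (l (j + 1)) ∩ C (Int.negSucc (j + 1) + 1)).Nonempty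
        rw [show Int.negSucc (j + 1) + 1 = Int.negSucc j by omega, inter_comm]
        exact hl1 j
  · rintro (i | i) (j | j) hij
    · apply hn2
      simp only [Int.ofNat_eq_natCast] at hij
      omega
    · simp only [Int.ofNat_eq_natCast] at hij
      omega
    · apply cross
      simp only [Int.ofNat_eq_natCast] at hij
      omega
    · show ¬ (B (l i) ∩ B (l j)).Nonempty
      rw [inter_comm]
      apply hl2
      omega
  · intro r hr
    obtain ⟨N, hN⟩ := eventually_atTop.1 (hn3 r hr)
    refine eventually_atTop.2 ⟨N, ?_⟩
    rintro (i | j) hi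
    · apply hN
      simp only [Int.ofNat_eq_natCast] at hi
      omega
    · omega
  · intro r hr
    obtain ⟨N, hN⟩ := eventually_atTop.1 (hl3 r hr)
    refine eventually_atBot.2 ⟨-(N : ℤ) - 1, ?_⟩
    rintro (i | j) hi
    · simp only [Int.ofNat_eq_natCast] at hi
      omega
    · apply hN
      omega

end ArcAux

namespace ArcAux
open Filter


def bet (τ : ℝ) : ℝ := Real.smoothTransition ((τ + 1) / 2)

def Bet (τ : ℝ) : ℝ := ∫ u in (-1:ℝ)..τ, bet u

lemma bet_contDiff : ContDiff ℝ (⊤ : ℕ∞) bet :=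
  Real.smoothTransition.contDiff.comp (by fun_prop)

lemma bet_nonneg (τ : ℝ) : 0 ≤ bet τ := Real.smoothTransition.nonneg _

lemma bet_le_one (τ : ℝ) : bet τ ≤ 1 := Real.smoothTransition.le_one _

lemma bet_symm (τ : ℝ) : bet τ + bet (-τ) = 1 := by
  have h : (-τ + 1) / 2 = 1 - (τ + 1) / 2 := by ring
  unfold bet
  rw [h]
  unfold Real.smoothTransition
  have := Real.smoothTransition.pos_denom ((τ + 1) / 2)
  rw [sub_sub_cancel, add_comm (expNegInvGlue (1 - _)), ← add_div, div_self this.ne']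

lemma Bet_hasDerivAt (τ : ℝ) : HasDerivAt Bet (bet τ) τ :=
  bet_contDiff.continuous.integral_hasStrictDerivAt _ _ |>.hasDerivAt

lemma Bet_contDiff : ContDiff ℝ (⊤ : ℕ∞) Bet := by
  rw [contDiff_infty_iff_deriv]
  refine ⟨fun τ => (Bet_hasDerivAt τ).differentiableAt, ?_⟩
  have : deriv Bet = bet := funext fun τ => (Bet_hasDerivAt τ).deriv
  rw [this]; exact bet_contDiff

lemma Bet_of_le {τ : ℝ} (h : τ ≤ -1) : Bet τ = 0 := by
  unfold Bet
  rw [intervalIntegral.integral_congr (g := fun _ => 0)]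
  · simp
  · intro u hu
    rw [uIcc_of_ge h] at hu
    exact Real.smoothTransition.zero_of_nonpos (by linarith [hu.2])

lemma Bet_one : Bet 1 = 1 := by
  have hI : ∀ f : ℝ → ℝ, Continuous f → IntervalIntegrable f MeasureTheory.volume (-1) 1 :=
    fun f hf => hf.intervalIntegrable _ _
  have h1 : ∫ u in (-1:ℝ)..1, bet (-u) = ∫ u in (-1:ℝ)..1, bet u := by
    rw [intervalIntegral.integral_comp_neg]; simp
  have hb := bet_contDiff.continuous
  have h2 : (∫ u in (-1:ℝ)..1, bet u) + ∫ u in (-1:ℝ)..1, bet (-u) = 2 := by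
    rw [← intervalIntegral.integral_add (hI _ hb) (hI _ (by fun_prop))]
    simp only [bet_symm]
    norm_num
  unfold Bet
  linarith

lemma Bet_of_ge {τ : ℝ} (h : 1 ≤ τ) : Bet τ = τ := by
  have hI : ∀ a b : ℝ, IntervalIntegrable bet MeasureTheory.volume a b :=
    fun a b => bet_contDiff.continuous.intervalIntegrable _ _
  have : Bet τ = Bet 1 + ∫ u in (1:ℝ)..τ, bet u := by
    unfold Bet
    rw [intervalIntegral.integral_add_adjacent_intervals (hI _ _) (hI _ _)]
  rw [this, Bet_one, intervalIntegral.integral_congr (g := fun _ => 1)]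
  · simp
  · intro u hu
    rw [uIcc_of_le h] at hu
    exact Real.smoothTransition.one_of_one_le (by linarith [hu.1])

lemma Bet_mono : Monotone Bet :=
  monotone_of_deriv_nonneg (fun τ => (Bet_hasDerivAt τ).differentiableAt)
    (fun τ => by rw [(Bet_hasDerivAt τ).deriv]; exact bet_nonneg τ)

lemma Bet_abs {τ : ℝ} (h : |τ| ≤ 1) : |Bet τ| ≤ 1 := by
  rw [abs_le] at h
  have h1 := Bet_mono h.1
  have h2 := Bet_mono h.2
  rw [Bet_of_le le_rfl] at h1
  rw [Bet_one] at h2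
  rw [abs_le]; constructor <;> linarith

section curve

variable {E : Type*} [NormedAddCommGroup E] [NormedSpace ℝ E]

/-- The smoothed corner. -/
def corner (c : ℝ) (ε : ℝ) (y d d' : E) (t : ℝ) : E :=
  y + (t - c) • d + (ε * Bet ((t - c) / ε)) • (d' - d)

lemma corner_left {c ε : ℝ} (hε : 0 < ε) {y d d' : E} {t : ℝ} (ht : t ≤ c - ε) :
    corner c ε y d d' t = y + (t - c) • d := by
  unfold corner
  rw [Bet_of_le]
  · simp
  · rw [div_le_iff₀ hε]; linarith

lemma corner_right {c ε : ℝ} (hε : 0 < ε) {y d d' : E} {t : ℝ} (ht : c + ε ≤ t) :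
    corner c ε y d d' t = y + (t - c) • d' := by
  unfold corner
  rw [Bet_of_ge]
  · rw [mul_div_cancel₀ _ hε.ne']
    module
  · rw [le_div_iff₀ hε]; linarith

lemma corner_hasDerivAt {c ε : ℝ} (hε : 0 < ε) (y d d' : E) (t : ℝ) :
    HasDerivAt (corner c ε y d d') (d + bet ((t - c) / ε) • (d' - d)) t := by
  have h1 : HasDerivAt (fun t : ℝ => t - c) 1 t := (hasDerivAt_id t).sub_const c
  have h2 : HasDerivAt (fun t : ℝ => (t - c) / ε) (1 / ε) t := h1.div_const ε
  have h3 : HasDerivAt (fun t : ℝ => ε * Bet ((t - c) / ε)) (bet ((t - c) / ε)) t := by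
    have := ((Bet_hasDerivAt ((t - c) / ε)).comp t h2).const_mul ε
    convert! this using 1
    field_simp
  have h4 := ((h1.smul_const d).const_add y).add (h3.smul_const (d' - d))
  rw [one_smul] at h4
  exact h4

lemma corner_contDiff (c ε : ℝ) (y d d' : E) : ContDiff ℝ (⊤ : ℕ∞) (corner c ε y d d') := by
  unfold corner
  have := Bet_contDiff
  have h2 : ContDiff ℝ (⊤ : ℕ∞) (fun t : ℝ => Bet ((t - c) / ε)) :=
    Bet_contDiff.comp (by fun_prop)
  fun_prop

lemma corner_near {c ε : ℝ} (hε : 0 < ε) {y d d' : E} {t : ℝ} (ht : |t - c| ≤ ε) :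
    ‖corner c ε y d d' t - y‖ ≤ ε * (‖d‖ + ‖d' - d‖) := by
  have e : corner c ε y d d' t - y = (t - c) • d + (ε * Bet ((t - c) / ε)) • (d' - d) := by
    unfold corner; module
  rw [e]
  refine (norm_add_le _ _).trans ?_
  rw [norm_smul, norm_smul, Real.norm_eq_abs, Real.norm_eq_abs, abs_mul, abs_of_pos hε, mul_add]
  have hB : |Bet ((t - c) / ε)| ≤ 1 := by
    apply Bet_abs
    rw [abs_div, abs_of_pos hε, div_le_one hε]; exact ht
  have hB' : ε * |Bet ((t - c) / ε)| ≤ ε := mul_le_of_le_one_right hε.le hB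
  gcongr

lemma exists_functional {d d' : E} (h : (0 : E) ∉ segment ℝ d d') :
    ∃ l : E →L[ℝ] ℝ, ∀ b ∈ Icc (0:ℝ) 1, 0 < l (d + b • (d' - d)) := by
  obtain ⟨l, u, h1, h2⟩ := geometric_hahn_banach_point_closed (convex_segment d d')
    (by rw [segment_eq_image']; exact (isCompact_Icc.image (by fun_prop)).isClosed) h
  refine ⟨l, fun b hb => ?_⟩
  have : d + b • (d' - d) ∈ segment ℝ d d' := by
    rw [segment_eq_image']
    exact ⟨b, hb, rfl⟩
  have := h2 _ this
  simp only [map_zero] at h1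
  linarith

lemma zero_notMem_segment {y₀ y₁ y₂ : E} {C₁ C₂ : Set E} (h₁ : Convex ℝ C₁) (h₂ : Convex ℝ C₂)
    (m01 : y₀ ∈ C₁) (m11 : y₁ ∈ C₁) (m12 : y₁ ∈ C₂) (m22 : y₂ ∈ C₂) (n0 : y₀ ∉ C₂) (n2 : y₂ ∉ C₁) :
    (0 : E) ∉ segment ℝ (y₁ - y₀) (y₂ - y₁) := by
  rintro ⟨a, b, ha, hb, hab, h⟩
  rcases le_total b a with hle | hle
  · have ha' : 0 < a := by linarith
    apply n0
    have : y₀ = (1 - b / a) • y₁ + (b / a) • y₂ := by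
      have h' : a • y₀ = (a - b) • y₁ + b • y₂ := by
        rw [← sub_eq_zero, ← neg_eq_zero, ← h]; module
      calc y₀ = a⁻¹ • (a • y₀) := by rw [smul_smul, inv_mul_cancel₀ ha'.ne', one_smul]
        _ = _ := by
          rw [h', smul_add, smul_smul, smul_smul]
          congr 2 <;> field_simp
    rw [this]
    exact h₂ m12 m22 (by rw [sub_nonneg, div_le_one ha']; exact hle) (by positivity) (by ring)
  · have hb' : 0 < b := by linarith
    apply n2
    have : y₂ = (1 - a / b) • y₁ + (a / b) • y₀ := by
      have h' : b • y₂ = (b - a) • y₁ + a • y₀ := by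
        rw [← sub_eq_zero, ← h]; module
      calc y₂ = b⁻¹ • (b • y₂) := by rw [smul_smul, inv_mul_cancel₀ hb'.ne', one_smul]
        _ = _ := by
          rw [h', smul_add, smul_smul, smul_smul]
          congr 2 <;> field_simp
    rw [this]
    exact h₁ m11 m01 (by rw [sub_nonneg, div_le_one hb']; exact hle) (by positivity) (by ring)

/-- A smooth curve running through a chordless chain of convex open sets. -/
lemma exists_smooth_curve (C : ℤ → Set E) (hCo : ∀ i, IsOpen (C i)) (hCc : ∀ i, Convex ℝ (C i))
    (hC1 : ∀ i, (C i ∩ C (i + 1)).Nonempty) (hC2 : ∀ i j, i + 2 ≤ j → ¬ (C i ∩ C j).Nonempty) :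
    ∃ f : ℝ → E, ContDiff ℝ (⊤ : ℕ∞) f ∧ (∀ t, deriv f t ≠ 0) ∧ Function.Injective f ∧
      ∀ t, f t ∈ C ⌈t⌉ := by
  choose y hy using hC1
  -- direction of the segment in `C i`
  let d : ℤ → E := fun i => y i - y (i - 1)
  have hyl : ∀ i, y (i - 1) ∈ C i := fun i => by
    have := (hy (i - 1)).2
    rwa [sub_add_cancel] at this
  have hε : ∀ i : ℤ, ∃ ε : ℝ, 0 < ε ∧ ε ≤ 1 / 4 ∧ ∀ t : ℝ, |t - i| ≤ ε →
      corner i ε (y i) (d i) (d (i + 1)) t ∈ C i ∩ C (i + 1) := by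
    intro i
    obtain ⟨ρ, hρ, hρs⟩ := Metric.isOpen_iff.1 ((hCo i).inter (hCo (i + 1))) (y i) (hy i)
    set D := ‖d i‖ + ‖d (i + 1) - d i‖ with hD
    have hD0 : 0 ≤ D := by positivity
    have hpos : 0 < min (1 / 4) (ρ / (D + 1) / 2) := by positivity
    refine ⟨min (1 / 4) (ρ / (D + 1) / 2), hpos, min_le_left _ _, fun t ht => hρs ?_⟩
    rw [mem_ball_iff_norm]
    refine (corner_near hpos ht).trans_lt ?_
    rw [← hD]
    have h1 : min (1 / 4) (ρ / (D + 1) / 2) ≤ ρ / (D + 1) / 2 := min_le_right _ _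
    have h2 : ρ / (D + 1) / 2 * (D + 1) = ρ / 2 := by field_simp
    nlinarith
  choose ε hε0 hε4 hεC using hε
  let g : ℤ → ℝ → E := fun i => corner i (ε i) (y i) (d i) (d (i + 1))
  let f : ℝ → E := fun t => g (round t) t
  have hgl : ∀ (i : ℤ) (t : ℝ), t ≤ i - ε i → g i t = y i + (t - i) • d i :=
    fun i t ht => corner_left (hε0 i) ht
  have hgr : ∀ (i : ℤ) (t : ℝ), i + ε i ≤ t → g i t = y i + (t - i) • d (i + 1) :=
    fun i t ht => corner_right (hε0 i) ht
  have hgg : ∀ (i : ℤ) (t : ℝ), i + ε i ≤ t → t ≤ i + 1 - ε (i + 1) → g i t = g (i + 1) t := by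
    intro i t h1 h2
    rw [hgr i t h1, hgl (i + 1) t (by push_cast; exact h2)]
    simp only [d, add_sub_cancel_right]
    push_cast
    module
  have hfg : ∀ (i : ℤ) (t : ℝ), i - 1 + ε (i - 1) ≤ t → t ≤ i + 1 - ε (i + 1) → f t = g i t := by
    intro i t h1 h2
    have hr := abs_le.1 (abs_sub_round t)
    have e1 := hε0 (i - 1)
    have e2 := hε0 (i + 1)
    have e3 := hε4 i
    have l1 : ((round t : ℤ) : ℝ) < ((i + 2 : ℤ) : ℝ) := by push_cast; linarith [hr.1]
    have l2 : ((i - 2 : ℤ) : ℝ) < ((round t : ℤ) : ℝ) := by push_cast; linarith [hr.2]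
    have l1' : round t < i + 2 := by exact_mod_cast l1
    have l2' : i - 2 < round t := by exact_mod_cast l2
    have hcases : round t = i ∨ round t = i + 1 ∨ round t = i - 1 := by omega
    rcases hcases with h | h | h
    · simp only [f, h]
    · simp only [f, h]
      rw [h] at hr
      push_cast at hr
      exact (hgg i t (by linarith [hr.1]) h2).symm
    · simp only [f, h]
      rw [h] at hr
      push_cast at hr
      have := hgg (i - 1) t (by push_cast; linarith) (by
        rw [sub_add_cancel]; push_cast; linarith [hr.2])
      rwa [sub_add_cancel] at this
  have hfg' : ∀ (i : ℤ) (t : ℝ), |t - i| ≤ 3 / 4 → f t = g i t := by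
    intro i t h
    rw [abs_le] at h
    exact hfg i t (by linarith [hε4 (i - 1), h.1]) (by linarith [hε4 (i + 1), h.2])
  have hseg : ∀ (i : ℤ) (b : ℝ), b ∈ Icc (0:ℝ) 1 → y (i - 1) + b • d i ∈ C i := by
    intro i b hb
    have : y (i - 1) + b • d i = (1 - b) • y (i - 1) + b • y i := by
      simp only [d]; module
    rw [this]
    exact hCc i (hyl i) (hy i).1 (by linarith [hb.2]) hb.1 (by ring)
  have hfC : ∀ (i : ℤ) (t : ℝ), i - 1 ≤ t → t ≤ i → f t ∈ C i := by
    intro i t h1 h2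
    rcases le_total t (i - 1 / 2) with h | h
    · rw [hfg' (i - 1) t (by rw [abs_le]; push_cast; constructor <;> linarith)]
      rcases le_total t (i - 1 + ε (i - 1)) with h' | h'
      · have := (hεC (i - 1) t (by rw [abs_le]; push_cast; constructor <;> linarith [hε0 (i - 1)])).2
        simp only [g, sub_add_cancel]
        rwa [sub_add_cancel] at this
      · rw [hgr (i - 1) t (by push_cast; exact h'), sub_add_cancel]
        apply hseg
        push_cast
        constructor <;> linarith
    · rw [hfg' i t (by rw [abs_le]; constructor <;> linarith)]
      rcases le_total t (i - ε i) with h' | h'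
      · rw [hgl i t h']
        have : y i + (t - i) • d i = y (i - 1) + (t - i + 1) • d i := by
          simp only [d]; module
        rw [this]
        apply hseg
        constructor <;> linarith
      · exact (hεC i t (by rw [abs_le]; constructor <;> linarith [hε0 i])).1
  have hfε : ∀ (i : ℤ) (t : ℝ), |t - i| ≤ ε i → f t ∈ C i ∩ C (i + 1) := by
    intro i t h
    rw [hfg' i t (h.trans (by linarith [hε4 i]))]
    exact hεC i t h
  have hfun : ∀ i, ∃ l : E →L[ℝ] ℝ, ∀ b ∈ Icc (0:ℝ) 1, 0 < l (d i + b • (d (i + 1) - d i)) := by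
    intro i
    apply exists_functional
    have := zero_notMem_segment (hCc i) (hCc (i + 1)) (hyl i) (hy i).1 (hy i).2 (hy (i + 1)).1
      (fun h => hC2 (i - 1) (i + 1) (by omega) ⟨_, (hy (i - 1)).1, h⟩)
      (fun h => hC2 i (i + 1 + 1) (by omega) ⟨_, h, (hy (i + 1)).2⟩)
    simpa [d] using this
  choose l hl using hfun
  have hgd : ∀ (i : ℤ) (t : ℝ), ∃ v, HasDerivAt (g i) v t ∧ 0 < l i v := fun i t =>
    ⟨_, corner_hasDerivAt (hε0 i) _ _ _ t, hl i _ ⟨bet_nonneg _, bet_le_one _⟩⟩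
  have hmono : ∀ i, StrictMono (fun t => l i (g i t)) := by
    intro i
    apply strictMono_of_deriv_pos
    intro t
    obtain ⟨v, hv, hlv⟩ := hgd i t
    have := (l i).hasFDerivAt.comp_hasDerivAt t hv
    have h2 : deriv (fun t => l i (g i t)) t = l i v := this.deriv
    rw [h2]; exact hlv
  have hloc : ∀ t : ℝ, f =ᶠ[𝓝 t] g (round t) := by
    intro t
    have hr := abs_le.1 (abs_sub_round t)
    filter_upwards [Ioo_mem_nhds (show t - 1 / 4 < t by linarith) (show t < t + 1 / 4 by linarith)]
      with u hu
    apply hfg'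
    rw [abs_le]
    constructor <;> linarith [hu.1, hu.2, hr.1, hr.2]
  have hinj_lt : ∀ t t' : ℝ, t < t' → f t ≠ f t' := by
    intro t t' htt heq
    have a1 := Int.le_ceil t
    have a2 := (Int.ceil_lt_add_one t).le
    have b1 := Int.le_ceil t'
    have b2 := (Int.ceil_lt_add_one t').le
    have hij : ⌈t⌉ ≤ ⌈t'⌉ := Int.ceil_mono htt.le
    have mt := hfC ⌈t⌉ t (by linarith) a1
    have mt' := hfC ⌈t'⌉ t' (by linarith) b1
    generalize ⌈t⌉ = i at *
    generalize ⌈t'⌉ = j at *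
    -- general tool: monotonicity on windows
    have win : ∀ k : ℤ, k - 1 + ε (k - 1) ≤ t → t' ≤ k + 1 - ε (k + 1) → False := by
      intro k h1 h2
      have e1 := hfg k t h1 (by linarith)
      have e2 := hfg k t' (by linarith) h2
      have := hmono k htt
      simp only at this
      rw [← e1, ← e2, heq] at this
      exact lt_irrefl _ this
    have nearl : t < i - 1 + ε (i - 1) → f t ∈ C (i - 1) := fun h =>
      (hfε (i - 1) t (by rw [abs_le]; push_cast; constructor <;> linarith [hε0 (i - 1)])).1
    have nearr : j - ε j < t' → f t' ∈ C (j + 1) := fun h =>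
      (hfε j t' (by rw [abs_le]; constructor <;> linarith [hε0 j])).2
    rcases le_or_gt (i + 2) j with h | h
    · exact hC2 i j h ⟨_, mt, heq ▸ mt'⟩
    have : j = i ∨ j = i + 1 := by omega
    rcases this with rfl | rfl
    · rcases lt_or_ge t (j - 1 + ε (j - 1)) with h1 | h1
      · rcases lt_or_ge (j - ε j) t' with h2 | h2
        · exact hC2 (j - 1) (j + 1) (by omega) ⟨_, nearl h1, heq ▸ nearr h2⟩
        · refine win (j - 1) ?_ ?_
          · push_cast
            linarith [hε4 (j - 1 - 1)]
          · rw [sub_add_cancel]; push_cast; linarith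
      · refine win j h1 ?_
        linarith [hε4 (j + 1)]
    · rcases lt_or_ge t (i - 1 + ε (i - 1)) with h1 | h1
      · exact hC2 (i - 1) (i + 1) (by omega) ⟨_, nearl h1, heq ▸ mt'⟩
      · rcases lt_or_ge (((i + 1 : ℤ) : ℝ) - ε (i + 1)) t' with h2 | h2
        · exact hC2 i (i + 1 + 1) (by omega) ⟨_, mt, heq ▸ nearr h2⟩
        · refine win i h1 ?_
          push_cast at h2
          exact h2
  refine ⟨f, ?_, ?_, ?_, ?_⟩
  · rw [contDiff_iff_contDiffAt]
    intro t
    exact (corner_contDiff _ _ _ _ _).contDiffAt.congr_of_eventuallyEq (hloc t)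
  · intro t h0
    rw [(hloc t).deriv_eq] at h0
    obtain ⟨v, hv, hlv⟩ := hgd (round t) t
    rw [hv.deriv] at h0
    rw [h0] at hlv
    simp at hlv
  · intro t t' h
    by_contra hne
    rcases lt_or_gt_of_ne hne with h1 | h1
    · exact hinj_lt t t' h1 h
    · exact hinj_lt t' t h1 h.symm
  · intro t
    exact hfC ⌈t⌉ t (by linarith [(Int.ceil_lt_add_one t).le]) (Int.le_ceil t)

end curve

/-- The curve in `ℂ`. -/
lemma exists_curve_complex {γ : ℝ → ℂ} (hc : ContinuousOn γ (Icc 0 1)) (hi : InjOn γ (Icc 0 1))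
    {s t : ℝ} (hs : s ∈ Icc (0:ℝ) 1) (ht : t ∈ Icc (0:ℝ) 1) (hst : s < t) {Ω : Set ℂ}
    (hΩ : IsOpen Ω) (hsub : γ '' Icc s t ⊆ Ω) :
    ∃ f : ℝ → ℂ, ContDiff ℝ (⊤ : ℕ∞) f ∧ (∀ t, deriv f t ≠ 0) ∧ Function.Injective f ∧
      (∀ u, f u ∈ Ω \ γ '' Icc 0 1) ∧ Tendsto f atBot (𝓝 (γ s)) ∧ Tendsto f atTop (𝓝 (γ t)) := by
  have hsΩ : γ s ∈ Ω := hsub ⟨s, ⟨le_rfl, hst.le⟩, rfl⟩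
  have htΩ : γ t ∈ Ω := hsub ⟨t, ⟨hst.le, le_rfl⟩, rfl⟩
  obtain ⟨δ, hδ, hδc⟩ := local_access hc hi hΩ hs hsΩ
  obtain ⟨w, hwδ, hwl⟩ := arc_no_ball hc hi (γ s) δ hδ
  have hws := hδc w (by rw [dist_eq_norm]; exact hwδ) hwl
  have hwt := push_forward hc hi hΩ hs.1 hst.le ht.2 hsub hws
  obtain ⟨x, V, hx0, hV1, hV2, hV3, hV4⟩ := exists_seq hc hi hΩ hs hsΩ hws
  obtain ⟨x', V', hx0', hV1', hV2', hV3', hV4'⟩ := exists_seq hc hi hΩ ht htΩ hwt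
  obtain ⟨I, _, B, i₀, hF, hi₀⟩ := exists_family x V hx0 hV1 hV2 hV3 hV4
  obtain ⟨I', _, B', i₀', hF', hi₀'⟩ := exists_family x' V' hx0' hV1' hV2' hV3' hV4'
  have hne : γ s ≠ γ t := fun h => hst.ne (hi hs ht h)
  obtain ⟨C, hCo, hCc, hCO, hC1, hC2, hCt, hCb⟩ := exists_chain hF hF'
    (fun h => h.2 ⟨s, hs, rfl⟩) (fun h => h.2 ⟨t, ht, rfl⟩) hne i₀ i₀' hi₀ hi₀'
  obtain ⟨f, hf1, hf2, hf3, hf4⟩ := exists_smooth_curve C hCo hCc hC1 hC2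
  refine ⟨f, hf1, hf2, hf3, fun u => hCO _ (hf4 u), ?_, ?_⟩
  · rw [Metric.tendsto_nhds]
    intro r hr
    filter_upwards [tendsto_ceil_atBot.eventually (hCb r hr)] with u hu
    exact hu (hf4 u)
  · rw [Metric.tendsto_nhds]
    intro r hr
    filter_upwards [tendsto_ceil_atTop.eventually (hCt r hr)] with u hu
    exact hu (hf4 u)

end ArcAux

namespace ArcAux
open Filter

/-- The reparametrization `(0,1) → ℝ`. -/
def phi (t : ℝ) : ℝ := Real.tan (Real.pi * (t - 1 / 2))

lemma phi_arg {t : ℝ} (ht : t ∈ Ioo (0:ℝ) 1) :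
    Real.pi * (t - 1 / 2) ∈ Ioo (-(Real.pi / 2)) (Real.pi / 2) := by
  have := Real.pi_pos
  constructor <;> nlinarith [ht.1, ht.2]

lemma phi_cos {t : ℝ} (ht : t ∈ Ioo (0:ℝ) 1) : 0 < Real.cos (Real.pi * (t - 1 / 2)) :=
  Real.cos_pos_of_mem_Ioo (phi_arg ht)

lemma phi_contDiffAt {t : ℝ} (ht : t ∈ Ioo (0:ℝ) 1) : ContDiffAt ℝ (⊤ : ℕ∞) phi t := by
  have h1 : ContDiffAt ℝ (⊤ : ℕ∞) (fun t : ℝ => Real.pi * (t - 1 / 2)) t := by fun_prop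
  have h2 : ContDiffAt ℝ (⊤ : ℕ∞) Real.tan (Real.pi * (t - 1 / 2)) :=
    Real.contDiffAt_tan.2 (phi_cos ht).ne'
  exact ContDiffAt.comp (g := Real.tan) t h2 h1

lemma phi_hasDerivAt {t : ℝ} (ht : t ∈ Ioo (0:ℝ) 1) :
    ∃ d : ℝ, d ≠ 0 ∧ HasDerivAt phi d t := by
  refine ⟨_, ?_, (Real.hasDerivAt_tan (phi_cos ht).ne').comp t
    (((hasDerivAt_id t).sub_const (1 / 2)).const_mul Real.pi)⟩
  have := phi_cos ht
  have := Real.pi_pos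
  positivity

lemma phi_inj : InjOn phi (Ioo 0 1) := by
  intro x hx y hy h
  have := Real.injOn_tan (phi_arg hx) (phi_arg hy) h
  have := mul_left_cancel₀ Real.pi_pos.ne' this
  linarith

lemma phi_surj (u : ℝ) : ∃ t ∈ Ioo (0:ℝ) 1, phi t = u := by
  have hp := Real.pi_pos
  obtain ⟨x, hx, rfl⟩ := Real.surjOn_tan (mem_univ u)
  refine ⟨x / Real.pi + 1 / 2, ⟨?_, ?_⟩, ?_⟩
  · have : -(1 / 2) < x / Real.pi := by rw [lt_div_iff₀ hp]; linarith [hx.1]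
    linarith
  · have : x / Real.pi < 1 / 2 := by rw [div_lt_iff₀ hp]; linarith [hx.2]
    linarith
  · unfold phi
    congr 1
    field_simp
    ring

lemma phi_bot : Tendsto phi (𝓝[>] 0) atBot := by
  refine Real.tendsto_tan_neg_pi_div_two.comp ?_
  refine tendsto_nhdsWithin_iff.2 ⟨?_, ?_⟩
  · have : Continuous fun t : ℝ => Real.pi * (t - 1 / 2) := by fun_prop
    have := (this.tendsto 0).mono_left (nhdsWithin_le_nhds (s := Ioi 0))
    convert this using 2
    ring
  · filter_upwards [self_mem_nhdsWithin] with t ht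
    have : 0 < t := ht
    have := Real.pi_pos
    show -(Real.pi / 2) < _
    nlinarith

lemma phi_top : Tendsto phi (𝓝[<] 1) atTop := by
  refine Real.tendsto_tan_pi_div_two.comp ?_
  refine tendsto_nhdsWithin_iff.2 ⟨?_, ?_⟩
  · have : Continuous fun t : ℝ => Real.pi * (t - 1 / 2) := by fun_prop
    have := (this.tendsto 1).mono_left (nhdsWithin_le_nhds (s := Iio 1))
    convert this using 2
    ring
  · filter_upwards [self_mem_nhdsWithin] with t ht
    have : t < 1 := ht
    have := Real.pi_pos
    show _ < Real.pi / 2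
    nlinarith

/-- The closed-up curve. -/
def closeUp {E : Type*} (F : ℝ → E) (a a' : E) (t : ℝ) : E :=
  if t ≤ 0 then a else if 1 ≤ t then a' else F (phi t)

section
variable {E : Type*} {F : ℝ → E} {a a' : E}

lemma closeUp_zero : closeUp F a a' 0 = a := by simp [closeUp]
lemma closeUp_one : closeUp F a a' 1 = a' := by simp [closeUp]
lemma closeUp_mid {t : ℝ} (ht : t ∈ Ioo (0:ℝ) 1) : closeUp F a a' t = F (phi t) := by
  simp only [closeUp, not_le.2 ht.1, not_le.2 ht.2, if_false]

lemma Icc_cases {t : ℝ} (ht : t ∈ Icc (0:ℝ) 1) : t = 0 ∨ t = 1 ∨ t ∈ Ioo (0:ℝ) 1 := by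
  rcases ht.1.eq_or_lt with h | h
  · exact Or.inl h.symm
  rcases ht.2.eq_or_lt with h' | h'
  · exact Or.inr (Or.inl h')
  · exact Or.inr (Or.inr ⟨h, h'⟩)

lemma closeUp_image_Ioo : (closeUp F a a') '' Ioo 0 1 = range F := by
  ext x
  constructor
  · rintro ⟨t, ht, rfl⟩
    rw [closeUp_mid ht]; exact mem_range_self _
  · rintro ⟨u, rfl⟩
    obtain ⟨t, ht, rfl⟩ := phi_surj u
    exact ⟨t, ht, closeUp_mid ht⟩

lemma closeUp_image_Icc : (closeUp F a a') '' Icc 0 1 = range F ∪ {a, a'} := by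
  ext x
  constructor
  · rintro ⟨t, ht, rfl⟩
    rcases Icc_cases ht with rfl | rfl | h
    · rw [closeUp_zero]; simp
    · rw [closeUp_one]; simp
    · rw [closeUp_mid h]; exact Or.inl (mem_range_self _)
  · rintro (h | h | h)
    · rw [← closeUp_image_Ioo (a := a) (a' := a')] at h
      exact image_mono Ioo_subset_Icc_self h
    · exact ⟨0, by simp, by rw [closeUp_zero, h]⟩
    · exact ⟨1, by simp, by rw [closeUp_one, h]⟩

lemma closeUp_injOn (hF : Function.Injective F) (h0 : ∀ u, F u ≠ a) (h1 : ∀ u, F u ≠ a')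
    (h : a ≠ a') : InjOn (closeUp F a a') (Icc 0 1) := by
  intro x hx y hy hxy
  rcases Icc_cases hx with rfl | rfl | hx <;> rcases Icc_cases hy with rfl | rfl | hy
  · rfl
  · rw [closeUp_zero, closeUp_one] at hxy; exact absurd hxy h
  · rw [closeUp_zero, closeUp_mid hy] at hxy; exact absurd hxy.symm (h0 _)
  · rw [closeUp_zero, closeUp_one] at hxy; exact absurd hxy.symm h
  · rfl
  · rw [closeUp_one, closeUp_mid hy] at hxy; exact absurd hxy.symm (h1 _)
  · rw [closeUp_zero, closeUp_mid hx] at hxy; exact absurd hxy (h0 _)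
  · rw [closeUp_one, closeUp_mid hx] at hxy; exact absurd hxy (h1 _)
  · rw [closeUp_mid hx, closeUp_mid hy] at hxy
    exact phi_inj hx hy (hF hxy)

lemma closeUp_eventuallyEq {t : ℝ} (ht : t ∈ Ioo (0:ℝ) 1) :
    closeUp F a a' =ᶠ[𝓝 t] F ∘ phi := by
  filter_upwards [isOpen_Ioo.mem_nhds ht] with u hu
  exact closeUp_mid hu

lemma closeUp_continuousOn [TopologicalSpace E] (hF : Continuous F)
    (hb : Tendsto F atBot (𝓝 a)) (ht : Tendsto F atTop (𝓝 a')) :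
    ContinuousOn (closeUp F a a') (Icc 0 1) := by
  intro x hx
  rcases Icc_cases hx with rfl | rfl | hx
  · have : ContinuousWithinAt (closeUp F a a') (Ioi 0) 0 := by
      unfold ContinuousWithinAt
      rw [closeUp_zero]
      refine (hb.comp phi_bot).congr' ?_
      filter_upwards [Ioo_mem_nhdsGT (zero_lt_one' ℝ)] with u hu
      exact (closeUp_mid hu).symm
    have := continuousWithinAt_Ioi_iff_Ici.1 this
    exact this.mono fun z hz => hz.1
  · have : ContinuousWithinAt (closeUp F a a') (Iio 1) 1 := by
      unfold ContinuousWithinAt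
      rw [closeUp_one]
      refine (ht.comp phi_top).congr' ?_
      filter_upwards [Ioo_mem_nhdsLT (zero_lt_one' ℝ)] with u hu
      exact (closeUp_mid hu).symm
    have := continuousWithinAt_Iio_iff_Iic.1 this
    exact this.mono fun z hz => hz.2
  · have : ContinuousAt (F ∘ phi) x :=
      hF.continuousAt.comp (phi_contDiffAt hx).continuousAt
    exact (this.congr (closeUp_eventuallyEq hx).symm).continuousWithinAt
end

lemma restrict_embedding {E : Type*} [TopologicalSpace E] [T2Space E] {g : ℝ → E}
    (hc : ContinuousOn g (Icc 0 1)) (hi : InjOn g (Icc 0 1)) :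
    IsEmbedding ((Ioo (0:ℝ) 1).restrict g) := by
  have h1 : IsClosedEmbedding ((Icc (0:ℝ) 1).restrict g) :=
    Continuous.isClosedEmbedding (continuousOn_iff_continuous_domRestrict.1 hc)
      (injOn_iff_injective.1 hi)
  have h2 : IsEmbedding (Set.inclusion (Ioo_subset_Icc_self : Ioo (0:ℝ) 1 ⊆ Icc 0 1)) :=
    IsEmbedding.inclusion _
  exact h1.isEmbedding.comp h2

lemma smooth_arc {E : Type*} [NormedAddCommGroup E] [NormedSpace ℝ E] {F : ℝ → E} {a a' : E}
    (hF : ContDiff ℝ (⊤ : ℕ∞) F) (hd : ∀ t, deriv F t ≠ 0) (hi : Function.Injective F)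
    (h0 : ∀ u, F u ≠ a) (h1 : ∀ u, F u ≠ a') (h : a ≠ a')
    (hb : Tendsto F atBot (𝓝 a)) (ht : Tendsto F atTop (𝓝 a')) :
    IsArcFrom (range F ∪ {a, a'}) a a' ∧ IsSmoothOpenArc ((range F ∪ {a, a'}) \ {a, a'}) := by
  have hc := closeUp_continuousOn hF.continuous hb ht
  have hij := closeUp_injOn hi h0 h1 h
  refine ⟨⟨closeUp F a a', hc, hij, closeUp_image_Icc, closeUp_zero, closeUp_one⟩,
    0, 1, closeUp F a a', one_pos, ?_, ?_, hij.mono Ioo_subset_Icc_self,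
    restrict_embedding hc hij, ?_⟩
  · intro x hx
    have : ContDiffAt ℝ (⊤ : ℕ∞) (F ∘ phi) x := hF.contDiffAt.comp x (phi_contDiffAt hx)
    exact (this.congr_of_eventuallyEq (closeUp_eventuallyEq hx)).contDiffWithinAt
  · intro x hx
    rw [derivWithin_of_isOpen isOpen_Ioo hx, (closeUp_eventuallyEq hx).deriv_eq]
    obtain ⟨d, hd0, hd1⟩ := phi_hasDerivAt hx
    have h2 : HasDerivAt F (deriv F (phi x)) (phi x) :=
      ((hF.differentiable (by simp)) _).hasDerivAt
    rw [(h2.scomp x hd1).deriv]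
    exact smul_ne_zero hd0 (hd _)
  · rw [closeUp_image_Ioo, union_sdiff_right, eq_comm, sdiff_eq_left]
    rw [disjoint_left]
    rintro _ ⟨u, rfl⟩ (h | h)
    · exact h0 u h
    · exact h1 u h

/-- Identification of `ℂ` with the plane. -/
def planeEquiv : ℂ ≃L[ℝ] (Fin 2 → ℝ) :=
  Complex.equivRealProdCLM.trans (ContinuousLinearEquiv.finTwoArrow ℝ ℝ).symm

lemma exists_curve_plane {γ : ℝ → (Fin 2 → ℝ)} (hc : ContinuousOn γ (Icc 0 1))
    (hi : InjOn γ (Icc 0 1)) {s t : ℝ} (hs : s ∈ Icc (0:ℝ) 1) (ht : t ∈ Icc (0:ℝ) 1)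
    (hst : s < t) {Ω : Set (Fin 2 → ℝ)} (hΩ : IsOpen Ω) (hsub : γ '' Icc s t ⊆ Ω) :
    ∃ f : ℝ → (Fin 2 → ℝ), ContDiff ℝ (⊤ : ℕ∞) f ∧ (∀ t, deriv f t ≠ 0) ∧
      Function.Injective f ∧ (∀ u, f u ∈ Ω \ γ '' Icc 0 1) ∧
      Tendsto f atBot (𝓝 (γ s)) ∧ Tendsto f atTop (𝓝 (γ t)) := by
  obtain ⟨f, f1, f2, f3, f4, f5, f6⟩ := exists_curve_complex (γ := planeEquiv.symm ∘ γ)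
    (planeEquiv.symm.continuous.comp_continuousOn hc) (planeEquiv.symm.injective.comp_injOn hi)
    hs ht hst (hΩ.preimage planeEquiv.continuous) (by
      rintro _ ⟨u, hu, rfl⟩
      simpa using hsub ⟨u, hu, rfl⟩)
  refine ⟨planeEquiv ∘ f, planeEquiv.contDiff.comp f1, fun u => ?_,
    planeEquiv.injective.comp f3, fun u => ⟨(f4 u).1, ?_⟩, ?_, ?_⟩
  · have h2 : HasDerivAt f (deriv f u) u := ((f1.differentiable (by simp)) _).hasDerivAt
    have h3 := planeEquiv.toContinuousLinearMap.hasFDerivAt.comp_hasDerivAt u h2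
    have h4 : deriv (planeEquiv ∘ f) u = planeEquiv (deriv f u) := h3.deriv
    rw [h4]
    exact fun h => f2 u (by simpa using h)
  · rintro ⟨v, hv, h⟩
    exact (f4 u).2 ⟨v, hv, by simp [h]⟩
  · have := (planeEquiv.continuous.tendsto _).comp f5
    simpa using this
  · have := (planeEquiv.continuous.tendsto _).comp f6
    simpa using this

end ArcAux

/-- In `ℝ²`: given an arc `λ`, two points `a = γ s`, `a' = γ t` on it and a neighborhood
`Ω` of the subarc between them, there is an arc in `Ω` from `a` to `a'` meeting `λ` only
at its endpoints, smooth off its endpoints. -/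
theorem stmt_8 (γ : ℝ → (Fin 2 → ℝ)) (hγcont : ContinuousOn γ (Icc 0 1))
    (hγinj : InjOn γ (Icc 0 1)) (lam : Set (Fin 2 → ℝ)) (hlam : γ '' Icc 0 1 = lam)
    (s t : ℝ) (hs : s ∈ Icc (0:ℝ) 1) (ht : t ∈ Icc (0:ℝ) 1) (hst : s < t)
    (a a' : Fin 2 → ℝ) (ha : γ s = a) (ha' : γ t = a')
    (Ω : Set (Fin 2 → ℝ)) (hΩopen : IsOpen Ω) (hsub : γ '' Icc s t ⊆ Ω) :
    ∃ J : Set (Fin 2 → ℝ), IsArcFrom J a a' ∧ J ⊆ Ω ∧ J ∩ lam = {a, a'} ∧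
      IsSmoothOpenArc (J \ {a, a'}) := by
  subst ha ha' hlam
  obtain ⟨F, f1, f2, f3, f4, f5, f6⟩ :=
    ArcAux.exists_curve_plane hγcont hγinj hs ht hst hΩopen hsub
  have h0 : ∀ r ∈ Icc (0:ℝ) 1, ∀ u, F u ≠ γ r := fun r hr u h => (f4 u).2 ⟨r, hr, h.symm⟩
  have hne : γ s ≠ γ t := fun h => hst.ne (hγinj hs ht h)
  obtain ⟨hA, hB⟩ := ArcAux.smooth_arc f1 f2 f3 (h0 s hs) (h0 t ht) hne f5 f6
  refine ⟨range F ∪ {γ s, γ t}, hA, ?_, ?_, hB⟩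
  · rintro x (⟨u, rfl⟩ | rfl | rfl)
    · exact (f4 u).1
    · exact hsub ⟨s, ⟨le_rfl, hst.le⟩, rfl⟩
    · exact hsub ⟨t, ⟨hst.le, le_rfl⟩, rfl⟩
  · ext x
    constructor
    · rintro ⟨⟨u, rfl⟩ | h, hx⟩
      · exact absurd hx (f4 u).2
      · exact h
    · intro h
      refine ⟨Or.inr h, ?_⟩
      rcases h with rfl | rfl
      · exact mem_image_of_mem _ hs
      · exact mem_image_of_mem _ ht

end
end

section
/- Let Ω be a connected open set in ℝ², and let J₁, …, Jₙ be finitely many pairwise disjoint arcs contained in Ω. Then Ω \ (J₁ ∪ ⋯ ∪ Jₙ) is connected. -/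
open Set MvPolynomial Topology MeasureTheory

noncomputable section

/-- Continuous logarithms of nonvanishing functions on a normed space. -/
lemma aux_log {E : Type*} [NormedAddCommGroup E] [NormedSpace ℝ E] (f : E → ℂ)
    (hf : Continuous f) (h0 : ∀ x, f x ≠ 0) :
    ∃ G : E → ℂ, Continuous G ∧ ∀ x, Complex.exp (G x) = f x := by
  obtain ⟨F, ⟨-, hF⟩, -⟩ := Complex.isCoveringMapOn_exp.existsUnique_continuousMap_lifts
    (⟨f, hf⟩ : C(E, ℂ)) (a₀ := 0) (e₀ := Complex.log (f 0))
    (by simpa using Complex.exp_log (h0 0)) (by simpa using h0)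
  exact ⟨F, F.continuous, fun x => congrFun hF x⟩

/-- A continuous function with `exp h = 1` is constant on preconnected sets. -/
lemma aux_const {E : Type*} [TopologicalSpace E] {S : Set E} (hS : IsPreconnected S)
    {h : E → ℂ} (hc : ContinuousOn h S) (h1 : ∀ x ∈ S, Complex.exp (h x) = 1)
    {x y : E} (hx : x ∈ S) (hy : y ∈ S) : h x = h y := by
  have : DiscreteTopology (Complex.exp ⁻¹' {1}) :=
    (Complex.isCoveringMapOn_exp 1 (by simp)).1
  exact hS.constant_of_mapsTo (T := Complex.exp ⁻¹' {1}) ⟨this⟩ hc (fun z hz => by simpa using h1 z hz)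
    hx hy

lemma aux_sep {E : Type*} [TopologicalSpace E] {s : Set E} (hs : IsOpen s)
    (h : ¬ IsPreconnected s) :
    ∃ U V : Set E, IsOpen U ∧ IsOpen V ∧ U.Nonempty ∧ V.Nonempty ∧ Disjoint U V ∧ U ∪ V = s := by
  unfold IsPreconnected at h
  push Not at h
  obtain ⟨u, v, hu, hv, hsub, hnu, hnv, he⟩ := h
  refine ⟨s ∩ u, s ∩ v, hs.inter hu, hs.inter hv, hnu, hnv, ?_, ?_⟩
  · rw [Set.disjoint_left]
    intro x hx hx'
    have : x ∈ s ∩ (u ∩ v) := ⟨hx.1, hx.2, hx'.2⟩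
    rw [he] at this
    exact this
  · rw [← inter_union_distrib_left]
    exact inter_eq_left.2 hsub

lemma aux_frontier {E : Type*} [TopologicalSpace E] {U V : Set E} (hU : IsOpen U) (hV : IsOpen V)
    (hd : Disjoint U V) {x : E} (hx : x ∈ frontier V) : x ∉ U ∪ V := by
  rw [hV.frontier_eq] at hx
  rintro (h | h)
  · exact (Set.disjoint_left.1 (hd.symm.closure_left hU) hx.1) h
  · exact hx.2 h

lemma aux_outside {R : ℝ} (hR : 0 < R) : IsPreconnected {z : ℂ | R < ‖z‖} := by
  have : {z : ℂ | R < ‖z‖} = Complex.exp '' {w : ℂ | Real.log R < w.re} := by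
    ext z
    simp only [mem_setOf_eq, mem_image]
    constructor
    · intro hz
      have hz0 : z ≠ 0 := by
        rintro rfl
        simp at hz
        linarith
      refine ⟨Complex.log z, ?_, Complex.exp_log hz0⟩
      rw [Complex.log_re]
      exact Real.log_lt_log hR hz
    · rintro ⟨w, hw, rfl⟩
      rw [Complex.norm_exp]
      exact (Real.log_lt_iff_lt_exp hR).1 hw
  rw [this]
  exact ((convex_halfSpace_re_gt _).isPreconnected).image _ Complex.continuous_exp.continuousOn

/-- An arc does not bound a bounded open set. -/
lemma aux_bounded {J U V : Set ℂ} (hJ : IsArc J) (hU : IsOpen U) (hV : IsOpen V)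
    (hVn : V.Nonempty) (hd : Disjoint U V) (hUV : U ∪ V = Jᶜ) {R : ℝ} (hR : 0 < R)
    (hout : {z : ℂ | R < ‖z‖} ⊆ U) : False := by
  classical
  obtain ⟨a, b, γ, hγc, hγi, rfl, -, -⟩ := hJ
  obtain ⟨p, hp⟩ := hVn
  have hpJ : p ∉ γ '' Icc 0 1 := by
    have : p ∈ U ∪ V := Or.inr hp
    rwa [hUV] at this
  set e : Icc (0 : ℝ) 1 → ℂ := (Icc (0 : ℝ) 1).restrict γ with he
  have hec : Continuous e := continuousOn_iff_continuous_restrict.1 hγc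
  have hee : IsClosedEmbedding e := hec.isClosedEmbedding (injOn_iff_injective.1 hγi)
  obtain ⟨T, hT⟩ := ContinuousMap.exists_extension' hee
    (⟨Subtype.val, continuous_subtype_val⟩ : C(Icc (0 : ℝ) 1, ℝ))
  obtain ⟨G, hGc, hG⟩ := aux_log (fun t : ℝ => e (projIcc 0 1 zero_le_one t) - p)
    ((hec.comp continuous_projIcc).sub continuous_const) (fun t h => hpJ
      ⟨_, (projIcc 0 1 zero_le_one t).2, sub_eq_zero.1 h⟩)
  have hGJ : ∀ z ∈ γ '' Icc 0 1, Complex.exp (G (T z)) = z - p := by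
    rintro _ ⟨t, ht, rfl⟩
    have : T (γ t) = t := congrFun hT ⟨t, ht⟩
    rw [this, hG, projIcc_of_mem _ ht]
    rfl
  obtain ⟨H, hHc, hH⟩ := aux_log
    (fun z : ℂ => if z ∈ V then Complex.exp (G (T z)) else z - p)
    (Continuous.if (fun z hz => hGJ z (by
        have := aux_frontier hU hV hd hz
        rw [hUV] at this
        exact not_not.1 this))
      (Complex.continuous_exp.comp (hGc.comp T.continuous)) (continuous_id.sub continuous_const))
    (fun z => by
      split_ifs with h
      · exact Complex.exp_ne_zero _
      · intro h'
        rw [sub_eq_zero.1 h'] at h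
        exact h hp)
  set r : ℝ := R + ‖p‖ + 1 with hr
  have hr0 : 0 < r := by positivity
  have key : ∀ t : ℝ, Complex.exp (H (p + r * Complex.exp (t * Complex.I)))
      = r * Complex.exp (t * Complex.I) := by
    intro t
    rw [hH, if_neg]
    · ring
    · refine Set.disjoint_left.1 hd (hout ?_)
      have h1 : ‖(r : ℂ) * Complex.exp (t * Complex.I)‖ = r := by
        rw [norm_mul, Complex.norm_exp_ofReal_mul_I, Complex.norm_real, Real.norm_of_nonneg hr0.le,
          mul_one]
      have h2 := norm_sub_le (p + r * Complex.exp (t * Complex.I)) p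
      rw [add_sub_cancel_left, h1] at h2
      show R < _
      linarith
  have hconst := aux_const (S := (univ : Set ℝ)) isPreconnected_univ
    (h := fun t : ℝ => H (p + r * Complex.exp (t * Complex.I)) - t * Complex.I - H (p + r))
    (by
      apply Continuous.continuousOn
      fun_prop)
    (fun t _ => by
      have k0 := key 0
      simp only [Complex.ofReal_zero, zero_mul, Complex.exp_zero, mul_one] at k0
      have : (r : ℂ) ≠ 0 := by exact_mod_cast hr0.ne'
      rw [Complex.exp_sub, Complex.exp_sub, key, k0]
      have := Complex.exp_ne_zero (t * Complex.I)
      field_simp) (mem_univ 0) (mem_univ (2 * Real.pi))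
  simp [Complex.exp_two_pi_mul_I] at hconst

lemma aux_arc_compact {J : Set ℂ} (hJ : IsArc J) : IsCompact J := by
  obtain ⟨a, b, γ, hγc, -, rfl, -, -⟩ := hJ
  exact isCompact_Icc.image_of_continuousOn hγc

lemma aux_compl {J : Set ℂ} (hJ : IsArc J) : IsPreconnected Jᶜ := by
  by_contra h
  obtain ⟨U, V, hU, hV, hUn, hVn, hd, hUV⟩ :=
    aux_sep (aux_arc_compact hJ).isClosed.isOpen_compl h
  obtain ⟨R, hR, hJR⟩ := (aux_arc_compact hJ).isBounded.exists_pos_norm_le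
  have hsub : {z : ℂ | R < ‖z‖} ⊆ U ∪ V := by
    rw [hUV]
    intro z hz hzJ
    exact absurd (hJR z hzJ) (not_le.2 hz)
  rcases (aux_outside hR).subset_or_subset hU hV hd hsub with h | h
  · exact aux_bounded hJ hU hV hVn hd hUV hR h
  · exact aux_bounded hJ hV hU hUn hd.symm (by rwa [union_comm]) hR h

lemma aux_single {J Ω : Set ℂ} (hJ : IsArc J) (hΩ : IsOpen Ω) (hc : IsConnected Ω)
    (hsub : J ⊆ Ω) : IsConnected (Ω \ J) := by
  classical
  have hJc := aux_arc_compact hJ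
  refine ⟨?_, ?_⟩
  · by_contra hne
    rw [not_nonempty_iff_eq_empty, diff_eq_empty] at hne
    have hEq : J = Ω := hsub.antisymm hne
    have hcl : IsClopen Ω := ⟨hEq ▸ hJc.isClosed, hΩ⟩
    have hu := hcl.eq_univ hc.nonempty
    rw [hEq, hu] at hJc
    exact noncompact_univ ℂ hJc
  · by_contra h
    obtain ⟨U, V, hU, hV, ⟨u, hu⟩, ⟨v, hv⟩, hd, hUV⟩ :=
      aux_sep (hΩ.sdiff hJc.isClosed) h
    obtain ⟨χ, hχ0, hχ1, -⟩ := exists_continuous_zero_one_of_isClosed hΩ.isClosed_compl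
      hJc.isClosed (disjoint_compl_left_iff_subset.2 hsub)
    have hfr : ∀ z ∈ frontier V, z ∈ J ∨ z ∉ Ω := by
      intro z hz
      have := aux_frontier hU hV hd hz
      rw [hUV] at this
      by_contra hcon
      push Not at hcon
      exact this ⟨hcon.2, hcon.1⟩
    have e1 : Complex.exp (2 * Real.pi * Complex.I) = 1 := Complex.exp_two_pi_mul_I
    set φ : ℂ → ℂ := fun z => if z ∈ V then 2 * Real.pi * Complex.I * (1 - (χ z : ℂ)) else 0
      with hφ
    set ψ : ℂ → ℂ := fun z => if z ∈ V then 2 * Real.pi * Complex.I * (-(χ z : ℂ)) else 0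
      with hψ
    have hexp : ∀ z, Complex.exp (φ z) = Complex.exp (ψ z) := by
      intro z
      simp only [hφ, hψ]
      split_ifs
      · rw [show 2 * Real.pi * Complex.I * (1 - (χ z : ℂ))
          = 2 * Real.pi * Complex.I + 2 * Real.pi * Complex.I * (-(χ z : ℂ)) by ring,
          Complex.exp_add, e1, one_mul]
      · rfl
    have hφc : ContinuousOn φ Ω := by
      refine ContinuousOn.if (fun z hz => ?_) (by fun_prop) (by fun_prop)
      rcases hfr z hz.2 with h | h
      · simp [hχ1 h]
      · exact absurd hz.1 h
    have hψc : ContinuousOn ψ Jᶜ := by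
      refine ContinuousOn.if (fun z hz => ?_) (by fun_prop) (by fun_prop)
      rcases hfr z hz.2 with h | h
      · exact absurd h hz.1
      · simp [hχ0 h]
    have hFc : Continuous (fun z => Complex.exp (φ z)) := by
      rw [continuous_iff_continuousAt]
      intro z
      by_cases hz : z ∈ Ω
      · exact (hφc.continuousAt (hΩ.mem_nhds hz)).cexp
      · simp_rw [hexp]
        exact (hψc.continuousAt (hJc.isClosed.isOpen_compl.mem_nhds
          (fun h => hz (hsub h)))).cexp
    obtain ⟨G, hGc, hG⟩ := aux_log _ hFc (fun z => Complex.exp_ne_zero _)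
    have hu' : u ∈ Ω \ J := hUV ▸ Or.inl hu
    have hv' : v ∈ Ω \ J := hUV ▸ Or.inr hv
    have c1 := aux_const hc.isPreconnected (h := fun z => φ z - G z)
      (hφc.sub hGc.continuousOn)
      (fun z _ => by rw [Complex.exp_sub, hG, div_self (Complex.exp_ne_zero _)]) hu'.1 hv'.1
    have c2 := aux_const (aux_compl hJ) (h := fun z => ψ z - G z)
      (hψc.sub hGc.continuousOn)
      (fun z _ => by rw [Complex.exp_sub, hG, hexp, div_self (Complex.exp_ne_zero _)]) hu'.2 hv'.2
    have huV : u ∉ V := Set.disjoint_left.1 hd hu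
    simp only [hφ, hψ, if_neg huV, if_pos hv] at c1 c2
    have : (2 * Real.pi * Complex.I : ℂ) = 0 := by linear_combination c2 - c1
    exact Complex.two_pi_I_ne_zero this

lemma aux_arc_image {α β : Type*} [TopologicalSpace α] [TopologicalSpace β] (e : α ≃ₜ β)
    {J : Set α} (hJ : IsArc J) : IsArc (e '' J) := by
  obtain ⟨a, b, γ, hc, hi, rfl, -, -⟩ := hJ
  exact ⟨_, _, e ∘ γ, e.continuous.comp_continuousOn hc, e.injective.comp_injOn hi,
    image_comp _ _ _, rfl, rfl⟩

lemma aux_single' {J Ω : Set (Fin 2 → ℝ)} (hJ : IsArc J) (hΩ : IsOpen Ω) (hc : IsConnected Ω)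
    (hsub : J ⊆ Ω) : IsConnected (Ω \ J) := by
  let e : (Fin 2 → ℝ) ≃ₜ ℂ := (Homeomorph.finTwoArrow (X := ℝ)).trans
    Complex.equivRealProdCLM.symm.toHomeomorph
  have h := aux_single (aux_arc_image e hJ) (e.isOpenMap _ hΩ)
    (hc.image _ e.continuous.continuousOn) (image_mono hsub)
  rw [← image_sdiff e.injective] at h
  exact e.isConnected_image.1 h

/-- Removing finitely many disjoint arcs from a connected open subset of `ℝ²` leaves a
connected set. -/
theorem stmt_9 (Ω : Set (Fin 2 → ℝ)) (hΩopen : IsOpen Ω) (hΩconn : IsConnected Ω)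
    (n : ℕ) (J : Fin n → Set (Fin 2 → ℝ)) (harc : ∀ i, IsArc (J i))
    (hdisj : Pairwise (Function.onFun Disjoint J)) (hsub : ∀ i, J i ⊆ Ω) :
    IsConnected (Ω \ ⋃ i, J i) := by
  induction n with
  | zero => simpa using hΩconn
  | succ n ih =>
    have h := ih (fun i => J i.castSucc) (fun i => harc _)
      (fun i j hij => hdisj (fun h => hij (Fin.castSucc_injective n h))) (fun i => hsub _)
    have hcl : IsClosed (⋃ i : Fin n, J i.castSucc) := by
      refine isClosed_iUnion_of_finite fun i => ?_
      obtain ⟨a, b, γ, hγc, -, hγ, -, -⟩ := harc i.castSucc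
      rw [← hγ]
      exact (isCompact_Icc.image_of_continuousOn hγc).isClosed
    have h2 := aux_single' (harc (Fin.last n)) (hΩopen.sdiff hcl) h (by
      intro x hx
      refine ⟨hsub _ hx, ?_⟩
      simp only [mem_iUnion, not_exists]
      intro i hi
      exact Set.disjoint_left.1 (hdisj (Fin.castSucc_lt_last i).ne) hi hx)
    have hset : Ω \ ⋃ i, J i = (Ω \ ⋃ i : Fin n, J i.castSucc) \ J (Fin.last n) := by
      ext x
      simp only [mem_diff, mem_iUnion, not_exists, Fin.forall_fin_succ']
      tauto
    rw [hset]
    exact h2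

end
end

section
/- Let Ω be a connected open set in ℝ² and let J be an arc contained in Ω. Then Ω contains a connected open neighborhood V of J such that the complement ℝ² \ V is connected. -/
open Set MvPolynomial Topology MeasureTheory

noncomputable section

theorem aux_log_lift {X : Type*} [TopologicalSpace X] [SimplyConnectedSpace X]
    [LocallyPathConnectedSpace X] (F : X → ℂ) (hF : Continuous F) (h0 : ∀ x, F x ≠ 0) :
    ∃ h : X → ℂ, Continuous h ∧ ∀ x, Complex.exp (h x) = F x := by
  obtain ⟨x₀⟩ : Nonempty X := inferInstance
  obtain ⟨f, ⟨-, hf⟩, -⟩ := Complex.isCoveringMapOn_exp.existsUnique_continuousMap_lifts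
    ⟨F, hF⟩ (a₀ := x₀) (e₀ := Complex.log (F x₀)) (Complex.exp_log (h0 x₀)) (fun x => h0 x)
  exact ⟨f, f.continuous, fun x => congrFun hf x⟩

theorem aux_frontier_component {X : Type*} [TopologicalSpace X] [LocallyConnectedSpace X]
    {F : Set X} (hF : IsOpen F) (x : X) : frontier (connectedComponentIn F x) ⊆ Fᶜ := by
  intro y hy hyF
  have ho := hF.connectedComponentIn (x := x)
  have hoy := hF.connectedComponentIn (x := y)
  have hyy := mem_connectedComponentIn hyF
  obtain ⟨z, hz1, hz2⟩ := mem_closure_iff.1 hy.1 _ hoy hyy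
  have e1 := connectedComponentIn_eq hz1
  have e2 := connectedComponentIn_eq hz2
  apply hy.2
  rw [ho.interior_eq, e2, ← e1]
  exact hyy

theorem aux_unbounded (γ : ℝ → ℂ) (hc : ContinuousOn γ (Icc 0 1)) (hi : InjOn γ (Icc 0 1))
    (p : ℂ) (hp : p ∉ γ '' Icc 0 1) (R : ℝ) :
    ∃ y ∈ connectedComponentIn (γ '' Icc 0 1)ᶜ p, R ≤ ‖y‖ := by
  classical
  by_contra! hcon
  have hJ : IsClosed (γ '' Icc 0 1) := (isCompact_Icc.image_of_continuousOn hc).isClosed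
  set U := connectedComponentIn (γ '' Icc 0 1)ᶜ p with hU
  have hpU : p ∈ U := mem_connectedComponentIn hp
  have hfr : frontier U ⊆ γ '' Icc 0 1 := by
    simpa using aux_frontier_component hJ.isOpen_compl p
  -- the logarithm along the arc
  let e : Icc (0 : ℝ) 1 → ℂ := fun t => γ t
  have hec : Continuous e := continuousOn_iff_continuous_domRestrict.1 hc
  have hei : Function.Injective e := fun a b h => Subtype.ext (hi a.2 b.2 h)
  have hemb : IsClosedEmbedding e := hec.isClosedEmbedding hei
  obtain ⟨l', hlc', hl'⟩ := aux_log_lift (fun t : ℝ => e (projIcc 0 1 zero_le_one t) - p)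
    ((hec.comp continuous_projIcc).sub continuous_const)
    (fun t h => hp ⟨_, (projIcc 0 1 zero_le_one t).2, sub_eq_zero.1 h⟩)
  let l : Icc (0 : ℝ) 1 → ℂ := fun t => l' t
  have hlc : Continuous l := hlc'.comp continuous_subtype_val
  have hl : ∀ t, Complex.exp (l t) = e t - p := fun t => by
    simpa using hl' t
  obtain ⟨g, hg⟩ := ContinuousMap.exists_extension' hemb ⟨l, hlc⟩
  let F : ℂ → ℂ := fun z => if z ∈ U then Complex.exp (g z) else z - p
  have hFc : Continuous F := by
    apply Continuous.if
    · intro a ha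
      obtain ⟨t, ht, rfl⟩ := hfr ha
      have h1 := congrFun hg ⟨t, ht⟩
      have h2 := hl ⟨t, ht⟩
      simp only [Function.comp, e, ContinuousMap.coe_mk] at h1 h2
      rw [h1, h2]
    · exact Complex.continuous_exp.comp g.continuous
    · exact continuous_id.sub continuous_const
  have hF0 : ∀ z, F z ≠ 0 := by
    intro z
    by_cases h : z ∈ U
    · simp [F, h, Complex.exp_ne_zero]
    · simp only [F, h, if_false]
      intro h'
      rw [sub_eq_zero] at h'
      exact h (h' ▸ hpU)
  obtain ⟨h, hhc, hh⟩ := aux_log_lift F hFc hF0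
  -- a large circle about p
  let S : ℝ := |R| + ‖p‖ + 1
  have hS : 0 < S := by positivity
  have hout : ∀ θ : ℝ, F (p + S * Complex.exp (θ * Complex.I)) = S * Complex.exp (θ * Complex.I) := by
    intro θ
    have : p + S * Complex.exp (θ * Complex.I) ∉ U := by
      intro hm
      have h1 := hcon _ hm
      have h2 : ‖(S : ℂ) * Complex.exp (θ * Complex.I)‖ = S := by
        rw [norm_mul, Complex.norm_exp_ofReal_mul_I, mul_one, Complex.norm_real,
          Real.norm_of_nonneg hS.le]
      have h3 := norm_sub_le (p + S * Complex.exp (θ * Complex.I)) p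
      rw [add_sub_cancel_left, h2] at h3
      have := le_abs_self R
      simp only [S] at h3 
      linarith
    simp [F, this]
  have key := Complex.isCoveringMap_exp.eq_of_comp_eq (A := ℝ)
    (g₁ := fun θ : ℝ => h (p + S * Complex.exp (θ * Complex.I)))
    (g₂ := fun θ : ℝ => h (p + S) + θ * Complex.I)
    (by fun_prop) (by fun_prop)
    (by
      ext θ
      have h0 := hout 0
      simp only [Function.comp]
      rw [hh, hout, Complex.exp_add, hh]
      simp at h0
      rw [h0]) 0 (by simp)
  have := congrFun key (2 * Real.pi)
  simp only [Complex.ofReal_mul, Complex.ofReal_ofNat, Complex.exp_two_pi_mul_I, mul_one] at this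
  have h4 : (2 * (Real.pi : ℂ) * Complex.I) = 0 := by
    linear_combination -this
  exact Complex.two_pi_I_ne_zero h4

theorem aux_compl_ball (R : ℝ) (hR : 0 < R) : IsConnected {z : ℂ | R ≤ ‖z‖} := by
  have h : {z : ℂ | R ≤ ‖z‖} = Complex.exp '' {w | Real.log R ≤ w.re} := by
    ext z
    constructor
    · intro hz
      have hz' : R ≤ ‖z‖ := hz
      have hz0 : z ≠ 0 := by
        rintro rfl
        simp at hz'
        linarith
      refine ⟨Complex.log z, ?_, Complex.exp_log hz0⟩
      simp only [mem_ofPred_eq, Complex.log_re]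
      exact Real.log_le_log hR hz'
    · rintro ⟨w, hw, rfl⟩
      simp only [mem_ofPred_eq, Complex.norm_exp] at *
      rwa [← Real.log_le_iff_le_exp hR]
  rw [h]
  refine IsConnected.image ⟨⟨(Real.log R : ℂ), by simp⟩, ?_⟩ _ Complex.continuous_exp.continuousOn
  exact (convex_halfSpace_re_ge _).isPreconnected

theorem aux_main (Ω : Set ℂ) (hΩ : IsOpen Ω) (γ : ℝ → ℂ) (hc : ContinuousOn γ (Icc 0 1))
    (hi : InjOn γ (Icc 0 1)) (hsub : γ '' Icc 0 1 ⊆ Ω) :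
    ∃ V : Set ℂ, IsOpen V ∧ IsConnected V ∧ γ '' Icc 0 1 ⊆ V ∧ V ⊆ Ω ∧ IsConnected Vᶜ := by
  have hJc : IsCompact (γ '' Icc 0 1) := isCompact_Icc.image_of_continuousOn hc
  have hub := aux_unbounded γ hc hi
  have hJconn : IsConnected (γ '' Icc 0 1) :=
    (isConnected_Icc zero_le_one).image _ hc
  generalize γ '' Icc 0 1 = J at *
  obtain ⟨R, hRpos, hR⟩ : ∃ R : ℝ, 0 < R ∧ ∀ z ∈ J, ‖z‖ < R := by
    obtain ⟨C, hC⟩ := hJc.isBounded.exists_norm_le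
    exact ⟨|C| + 1, by positivity, fun z hz => by
      have := hC z hz
      have := le_abs_self C
      linarith⟩
  let B : Set ℂ := {z : ℂ | R ≤ ‖z‖}
  have hBconn : IsConnected B := aux_compl_ball R hRpos
  have hBclosed : IsClosed B := isClosed_le continuous_const continuous_norm
  have hBJ : Disjoint B J := Set.disjoint_left.2 fun z hz hzJ => absurd (hR z hzJ) (not_lt.2 hz)
  obtain ⟨b, hb⟩ := hBconn.nonempty
  have hK : IsCompact (Metric.closedBall (0:ℂ) R ∩ Ωᶜ) :=
    (isCompact_closedBall _ _).inter_right hΩ.isClosed_compl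
  obtain ⟨L, hKL, hBL, hLclosed, hLconn, hLJ⟩ : ∃ L : Set ℂ, Metric.closedBall (0:ℂ) R ∩ Ωᶜ ⊆ L ∧
      B ⊆ L ∧ IsClosed L ∧ IsPreconnected L ∧ Disjoint L J := by
    refine hK.induction_on (p := fun s => ∃ L : Set ℂ, s ⊆ L ∧
      B ⊆ L ∧ IsClosed L ∧ IsPreconnected L ∧ Disjoint L J) ?_ ?_ ?_ ?_
    · exact ⟨B, empty_subset _, subset_rfl, hBclosed, hBconn.isPreconnected, hBJ⟩
    · intro s t hst ht
      obtain ⟨L, h1, h2⟩ := ht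
      exact ⟨L, hst.trans h1, h2⟩
    · intro s t hs ht
      obtain ⟨L, h1, h2, h3, h4, h5⟩ := hs
      obtain ⟨L', h1', h2', h3', h4', h5'⟩ := ht
      exact ⟨L ∪ L', union_subset_union h1 h1', h2.trans subset_union_left, h3.union h3',
        h4.union b (h2 hb) (h2' hb) h4', h5.union_left h5'⟩
    · intro x hx
      have hxJ : x ∉ J := fun h => hx.2 (hsub h)
      obtain ⟨ε, hε, hεb⟩ := Metric.nhds_basis_closedBall.mem_iff.1
        (hJc.isClosed.isOpen_compl.mem_nhds hxJ)
      obtain ⟨y, hy, hyR⟩ := hub x hxJ R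
      have hopen := hJc.isClosed.isOpen_compl.connectedComponentIn (x := x)
      have hpc : IsPathConnected (connectedComponentIn Jᶜ x) :=
        hopen.isConnected_iff_isPathConnected.1 (isConnected_connectedComponentIn_iff.2 hxJ)
      obtain ⟨q, hq⟩ := hpc.joinedIn x (mem_connectedComponentIn hxJ) y hy
      refine ⟨Metric.closedBall x ε, mem_nhdsWithin_of_mem_nhds (Metric.closedBall_mem_nhds x hε),
        Metric.closedBall x ε ∪ (range q ∪ B), subset_union_left,
        subset_union_right.trans subset_union_right, ?_, ?_, ?_⟩
      · exact Metric.isClosed_closedBall.union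
          ((isCompact_range q.continuous).isClosed.union hBclosed)
      · refine IsPreconnected.union x (Metric.mem_closedBall_self hε.le) (.inl ⟨0, q.source⟩)
          (convex_closedBall _ _).isPreconnected ?_
        exact IsPreconnected.union y ⟨1, q.target⟩ hyR (isPreconnected_range q.continuous)
          hBconn.isPreconnected
      · refine Disjoint.union_left (Set.disjoint_left.2 fun z hz => hεb hz)
          (Disjoint.union_left ?_ hBJ)
        rw [Set.disjoint_left]
        rintro _ ⟨t, rfl⟩
        exact connectedComponentIn_subset _ _ (hq t)
  have hΩL : Ωᶜ ⊆ L := by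
    intro z hz
    by_cases h : ‖z‖ ≤ R
    · exact hKL ⟨by simpa using h, hz⟩
    · exact hBL (not_le.1 h).le
  obtain ⟨j, hj⟩ := hJconn.nonempty
  have hJL : J ⊆ Lᶜ := fun z hz hzL => Set.disjoint_left.1 hLJ hzL hz
  have hLo : IsOpen Lᶜ := hLclosed.isOpen_compl
  have hbL : b ∈ L := hBL hb
  have hVL : connectedComponentIn Lᶜ j ⊆ Lᶜ := connectedComponentIn_subset _ _
  refine ⟨connectedComponentIn Lᶜ j, hLo.connectedComponentIn,
    isConnected_connectedComponentIn_iff.2 (hJL hj),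
    hJconn.isPreconnected.subset_connectedComponentIn hj hJL,
    hVL.trans (compl_subset_comm.1 hΩL), ⟨b, fun h => hVL h hbL⟩, ?_⟩
  apply isPreconnected_of_forall b
  intro y hy
  have hLV : L ⊆ (connectedComponentIn Lᶜ j)ᶜ := fun z hz h => hVL h hz
  by_cases hyL : y ∈ L
  · exact ⟨L, hLV, hbL, hyL, hLconn⟩
  · set O := connectedComponentIn Lᶜ y with hO
    have hyO : y ∈ O := mem_connectedComponentIn hyL
    have hOL : O ⊆ Lᶜ := connectedComponentIn_subset _ _
    have hfr : frontier O ⊆ L := by simpa using aux_frontier_component hLo y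
    have hne : (frontier O).Nonempty :=
      nonempty_frontier_iff.2 ⟨⟨y, hyO⟩, fun h => hOL (h ▸ mem_univ b) hbL⟩
    obtain ⟨w, hw⟩ := hne
    refine ⟨closure O ∪ L, ?_, .inr hbL, .inl (subset_closure hyO), ?_⟩
    · refine union_subset ?_ hLV
      rw [closure_eq_self_union_frontier]
      refine union_subset ?_ (hfr.trans hLV)
      intro z hz hz'
      have e1 := connectedComponentIn_eq hz
      have e2 := connectedComponentIn_eq hz'
      apply hy
      rw [e2, ← e1]
      exact hyO
    · exact IsPreconnected.union w hw.1 (hfr hw)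
        isPreconnected_connectedComponentIn.closure hLconn

/-- A connected open `Ω ⊆ ℝ²` containing an arc `J` contains a connected open
neighborhood `V` of `J` whose complement in `ℝ²` is connected. -/
theorem stmt_10 (Ω : Set (Fin 2 → ℝ)) (hΩopen : IsOpen Ω) (hΩconn : IsConnected Ω)
    (J : Set (Fin 2 → ℝ)) (harc : IsArc J) (hsub : J ⊆ Ω) :
    ∃ V : Set (Fin 2 → ℝ), IsOpen V ∧ IsConnected V ∧ J ⊆ V ∧ V ⊆ Ω ∧
      IsConnected Vᶜ := by
  obtain ⟨a, b, γ, hc, hi, rfl, -, -⟩ := harc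
  let e : ℂ ≃ₜ (Fin 2 → ℝ) := Complex.basisOneI.equivFunL.toHomeomorph
  have him : (fun t => e.symm (γ t)) '' Icc 0 1 = e ⁻¹' (γ '' Icc 0 1) := by
    rw [← e.image_symm, image_image]
  obtain ⟨V, h1, h2, h3, h4, h5⟩ := aux_main (e ⁻¹' Ω) (hΩopen.preimage e.continuous)
    (fun t => e.symm (γ t)) (e.symm.continuous.comp_continuousOn hc)
    (fun x hx y hy h => hi hx hy (e.symm.injective h))
    (him ▸ preimage_mono hsub)
  rw [him] at h3
  refine ⟨e '' V, e.isOpenMap _ h1, h2.image _ e.continuous.continuousOn, ?_, ?_, ?_⟩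
  · intro z hz
    exact ⟨e.symm z, h3 (by simpa using hz), by simp⟩
  · exact image_subset_iff.2 h4
  · rw [← image_compl_eq e.bijective]
    exact h5.image _ e.continuous.continuousOn

end
end
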